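/- Let S be a connected topological 2-manifold without boundary (a Hausdorff, second-countable topological space locally homeomorphic to ℝ²). Let c : S¹ → S be a continuous injective map which is null-homotopic, i.e., homotopic as a continuous map to a constant map. Then c bounds an embedded disc: there exists a topological embedding h : D² → S whose restriction to the boundary circle S¹ ⊆ D² has image equal to range(c). (Lemma A.1: any homotopically trivial simple closed curve in a surface bounds an embedded disc.) -/

import Mathlib

/-!
The curve is null-homotopic, so it lifts to a closed curve in the universal cover `p : E → S`
(`exists_universal_cover`), a simply connected surface. There the lifted curve `J` is a Jordan curve
on which `p` is injective. The proof finds a disc in `E` bounded by `J` on which `p` is still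
injective, and projects it to `S`. Neither the Jordan curve theorem nor the Schoenflies theorem is
in Mathlib, so both are proved for simply connected surfaces; a *surface* is a Hausdorff space
covered by charts `ℂ → X`.

*Sides.* Let `a` be an arc in the plane and `g` a branch of `log ((y - a 1) / (y - a 0))` off `a`.
Every integer-valued function which is locally constant off `a` near the open arc is, up to a
factor `2πi` and a function continuous across the open arc, an integer multiple of `g`
(`index_form`). Hence an arc has a local side, a set which is locally constant off the arc and
jumps at each point of it, and two local sides agree or are complementary near each point. The
choices of local sides along `J` therefore form a double cover of the surface, which is trivial by
simple connectivity, so that `J` has a global side (`LocArc.exists_global_side`) and its complement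
has exactly two components (`CurveLike.exists_side`).

*Compactness.* A contraction of `J` sweeps out a compact set `K` that contains one of the two sides
(`IsSide.compact_or`). Otherwise points of the two sides off `K` can be moved, by homeomorphisms
preserving the curve, to points `y`, `y'` close to each other across the curve; the function
`(ζ - y) / (ζ - y')`, cut off to `1` away from a chart, then has a logarithm along the loop, which
contradicts the jump of `g` across an arc. So one side is a *cell*: it has compact closure.

*Schoenflies.* A crosscut divides a cell into two cells (`theta`). Cutting along the parts of small
circles inside the cell, where all but finitely many crossings are short and can be undone, yields
cells subordinate to any given family of neighbourhoods (`IsCell.good`). Given a homeomorphism of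
the boundary curves of two cells, each crosscut of one is matched with a crosscut of the other, the
boundary homeomorphism being extended over it. Refining both cells alternately to mesh zero, one
gets a homeomorphism of the closed cells in the limit (`schoenflies`); comparison with the unit disc
shows that closed cells are discs (`IsCell.exists_disc`).

*Deck transformations.* For a nontrivial deck transformation `G`, the curves `J` and `G '' J` are
disjoint. Hence the closed cell and its translate are disjoint, or one lies in the interior of the
other, or together they cover `E` (`IsSide.translate_cases`). Nesting is impossible, since the
iterates of a point under `G` would accumulate in a compact set (`IsCell.not_nested`). In the
covering case the complementary side is also a cell, and the covering case cannot occur for both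
sides. So `J` bounds a cell on whose closure `p` is injective (`exists_cell_injOn`).
-/

open Set Topology Filter

noncomputable section

namespace SurfDisc

/-! ### Continuous logarithms -/

lemma const_of_exp {Y : Type*} [TopologicalSpace Y] {s : Set Y} (hs : IsPreconnected s) {h : Y → ℂ}
    (hc : ContinuousOn h s) (he : ∀ y ∈ s, Complex.exp (h y) = 1) {x y : Y} (hx : x ∈ s)
    (hy : y ∈ s) : h x = h y := by
  have hd : IsDiscrete {w : ℂ | Complex.exp w = 1} := by
    have := (Complex.isCoveringMap_exp ⟨1, one_ne_zero⟩).1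
    refine ⟨?_⟩
    convert this using 2 <;> (ext w; simp [Subtype.ext_iff])
  exact hs.constant_of_mapsTo hd hc (fun z hz => he z hz) hx hy

lemma const_of_exp_eq {Y : Type*} [TopologicalSpace Y] {s : Set Y} (hs : IsPreconnected s)
    {h k : Y → ℂ} (hc : ContinuousOn h s) (kc : ContinuousOn k s)
    (he : ∀ y ∈ s, Complex.exp (h y) = Complex.exp (k y)) {x y : Y} (hx : x ∈ s)
    (hy : y ∈ s) : h x - k x = h y - k y :=
  const_of_exp hs (hc.sub kc) (fun z hz => by
    simp [Complex.exp_sub, he z hz, Complex.exp_ne_zero]) hx hy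

/-- Homotopy lifting through `exp`, for homotopies of nonvanishing functions starting at `1`. -/
lemma exists_log_homotopy {Y : Type*} [TopologicalSpace Y] (s : Set Y) (F : ℝ → Y → ℂ)
    (hF : ContinuousOn (fun q : ℝ × Y => F q.1 q.2) (Icc 0 1 ×ˢ s))
    (h0 : ∀ t ∈ Icc (0:ℝ) 1, ∀ y ∈ s, F t y ≠ 0) (h1 : ∀ y ∈ s, F 0 y = 1) :
    ∃ G : ℝ → Y → ℂ, ContinuousOn (fun q : ℝ × Y => G q.1 q.2) (Icc 0 1 ×ˢ s) ∧
      (∀ t ∈ Icc (0:ℝ) 1, ∀ y ∈ s, Complex.exp (G t y) = F t y) ∧ ∀ y ∈ s, G 0 y = 0 := by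
  classical
  let H : C(unitInterval × s, {z : ℂ // z ≠ 0}) :=
    ⟨fun q => ⟨F q.1 q.2, h0 _ q.1.2 _ q.2.2⟩, by
      refine Continuous.subtype_mk ?_ _
      refine hF.comp_continuous (f := fun q : unitInterval × s => ((q.1 : ℝ), (q.2 : Y)))
        (by fun_prop) ?_
      intro q
      exact ⟨q.1.2, q.2.2⟩⟩
  let f : C(s, ℂ) := ⟨fun _ => 0, continuous_const⟩
  have H0 : ∀ a : s, H (0, a) = (fun z : ℂ => (⟨_, z.exp_ne_zero⟩ : {z : ℂ // z ≠ 0})) (f a) := by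
    intro a
    ext
    simp [H, f, h1 a a.2]
  let L := Complex.isCoveringMap_exp.liftHomotopy H f H0
  have hL := Complex.isCoveringMap_exp.liftHomotopy_lifts H f H0
  have hL0 := Complex.isCoveringMap_exp.liftHomotopy_zero H f H0
  let G : ℝ → Y → ℂ := fun t y =>
    if h : t ∈ Icc (0:ℝ) 1 ∧ y ∈ s then L (⟨t, h.1⟩, ⟨y, h.2⟩) else 0
  have key : ∀ t (ht : t ∈ Icc (0:ℝ) 1) y (hy : y ∈ s), G t y = L (⟨t, ht⟩, ⟨y, hy⟩) := by
    intro t ht y hy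
    simp only [G]
    rw [dif_pos ⟨ht, hy⟩]
  refine ⟨G, ?_, ?_, ?_⟩
  · rw [continuousOn_iff_continuous_domRestrict]
    have : Continuous (fun q : (Icc (0:ℝ) 1 ×ˢ s : Set (ℝ × Y)) =>
        L (⟨q.1.1, q.2.1⟩, ⟨q.1.2, q.2.2⟩)) := by fun_prop
    convert this using 1
    ext q
    exact key _ q.2.1 _ q.2.2
  · intro t ht y hy
    rw [key t ht y hy]
    have := congrFun hL (⟨t, ht⟩, ⟨y, hy⟩)
    exact congrArg Subtype.val this
  · intro y hy
    rw [key 0 (by simp) y hy]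
    exact hL0 ⟨y, hy⟩

lemma exists_log_plane (f : ℂ → ℂ) (hf : Continuous f) (h0 : ∀ z, f z ≠ 0) :
    ∃ g : ℂ → ℂ, Continuous g ∧ ∀ z, Complex.exp (g z) = f z := by
  obtain ⟨G, hG, hexp, -⟩ := exists_log_homotopy (Y := ℂ) univ (fun t z => f (t * z) / f 0)
    (by have := h0 0; fun_prop (disch := assumption)) (fun t _ y _ => div_ne_zero (h0 _) (h0 _))
    (fun y _ => by simp [h0 0])
  refine ⟨fun z => G 1 z + Complex.log (f 0), ?_, fun z => ?_⟩
  · refine Continuous.add ?_ continuous_const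
    exact hG.comp_continuous (f := fun z : ℂ => ((1:ℝ), z)) (by fun_prop) (fun z => by simp)
  · rw [Complex.exp_add, hexp 1 (by simp) z trivial, Complex.exp_log (h0 0)]
    have := h0 0
    field_simp
    simp

/-- Along a path `a`, the function `(y - a t) / (y - a 0)` has a continuous logarithm `G t y`
off the path. -/
lemma exists_log_path (a : ℝ → ℂ) (ha : ContinuousOn a (Icc 0 1)) :
    ∃ G : ℝ → ℂ → ℂ, ContinuousOn (fun q : ℝ × ℂ => G q.1 q.2) (Icc 0 1 ×ˢ (a '' Icc 0 1)ᶜ) ∧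
      (∀ t ∈ Icc (0:ℝ) 1, ∀ y ∈ (a '' Icc 0 1)ᶜ,
        Complex.exp (G t y) = (y - a t) / (y - a 0)) ∧ ∀ y ∈ (a '' Icc 0 1)ᶜ, G 0 y = 0 := by
  have hne : ∀ t ∈ Icc (0:ℝ) 1, ∀ y ∈ (a '' Icc 0 1)ᶜ, y - a t ≠ 0 := by
    intro t ht y hy h
    exact hy ⟨t, ht, (sub_eq_zero.1 h).symm⟩
  have h0 : (0:ℝ) ∈ Icc (0:ℝ) 1 := by simp
  refine exists_log_homotopy _ (fun t y => (y - a t) / (y - a 0)) ?_ ?_ ?_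
  · refine ContinuousOn.div ?_ ?_ ?_
    · refine continuousOn_snd.sub ?_
      exact ha.comp continuousOn_fst (fun q hq => hq.1)
    · fun_prop
    · intro q hq
      exact hne 0 h0 _ hq.2
  · intro t ht y hy
    exact div_ne_zero (hne t ht y hy) (hne 0 h0 y hy)
  · intro y hy
    exact div_self (hne 0 h0 y hy)

/-- A logarithm along an interval. -/
lemma exists_log_interval (f : ℝ → ℂ) (hf : ContinuousOn f (Icc 0 1))
    (h0 : ∀ t ∈ Icc (0:ℝ) 1, f t ≠ 0) :
    ∃ g : ℝ → ℂ, ContinuousOn g (Icc 0 1) ∧ ∀ t ∈ Icc (0:ℝ) 1, Complex.exp (g t) = f t := by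
  have m0 : (0:ℝ) ∈ Icc (0:ℝ) 1 := by simp
  obtain ⟨G, hG, hexp, -⟩ := exists_log_homotopy (Y := Unit) univ (fun t _ => f t / f 0)
    (by
      refine ContinuousOn.div_const ?_ _
      exact hf.comp continuousOn_fst (fun q hq => hq.1))
    (fun t ht y _ => div_ne_zero (h0 _ ht) (h0 _ m0))
    (fun y _ => div_self (h0 _ m0))
  refine ⟨fun t => G t () + Complex.log (f 0), ?_, fun t ht => ?_⟩
  · refine ContinuousOn.add ?_ continuousOn_const
    exact hG.comp (f := fun t : ℝ => (t, ())) (by fun_prop) (fun z hz => by simpa using hz)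
  · rw [Complex.exp_add, hexp t ht () trivial, Complex.exp_log (h0 0 m0)]
    have := h0 0 m0
    field_simp

/-- Near a nonzero value, a continuous branch of the logarithm. -/
lemma exists_local_log {Y : Type*} [TopologicalSpace Y] {z : Y} {m : Y → ℂ} {s : Set Y}
    (hs : s ∈ 𝓝 z) (hm : ContinuousOn m s) (h0 : m z ≠ 0) :
    ∃ (B : Set Y) (μ : Y → ℂ), IsOpen B ∧ z ∈ B ∧ B ⊆ s ∧ ContinuousOn μ B ∧
      ∀ y ∈ B, Complex.exp (μ y) = m y := by
  have hma := hm.continuousAt hs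
  have h1 : ∀ᶠ y in 𝓝 z, m y / m z ∈ Complex.slitPlane := by
    have : Tendsto (fun y => m y / m z) (𝓝 z) (𝓝 (m z / m z)) := hma.div_const _
    rw [div_self h0] at this
    exact this (Complex.isOpen_slitPlane.mem_nhds (by simp))
  obtain ⟨B, hB, hBo, hzB⟩ := mem_nhds_iff.1 (inter_mem hs h1)
  refine ⟨B, fun y => Complex.log (m y / m z) + Complex.log (m z), hBo, hzB,
    fun y hy => (hB hy).1, ?_, fun y hy => ?_⟩
  · refine ContinuousOn.add ?_ continuousOn_const
    refine ContinuousOn.clog ((hm.mono fun y hy => (hB hy).1).div_const _) fun y hy => (hB hy).2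
  · rw [Complex.exp_add, Complex.exp_log h0, Complex.exp_log (Complex.slitPlane_ne_zero (hB hy).2)]
    field_simp

/-- A nonvanishing continuous function on the punctured plane is a power of the coordinate times
an exponential. -/
lemma punctured_plane_form (W : ℂ → ℂ) (hW : ContinuousOn W {0}ᶜ) (h0 : ∀ z, z ≠ 0 → W z ≠ 0) :
    ∃ (n : ℤ) (Λ : ℂ → ℂ), ContinuousOn Λ {0}ᶜ ∧ ∀ z, z ≠ 0 → W z = z ^ n * Complex.exp (Λ z) := by
  obtain ⟨l, hl, hexp⟩ := exists_log_plane (fun z => W (Complex.exp z))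
    (hW.comp_continuous Complex.continuous_exp (fun z => by simp))
    (fun z => h0 _ (Complex.exp_ne_zero _))
  have hper : ∀ z, l (z + 2 * Real.pi * Complex.I) - l z = l (0 + 2 * Real.pi * Complex.I) - l 0 := by
    intro z
    refine const_of_exp_eq (Y := ℂ) (s := univ) (h := fun z => l (z + 2 * Real.pi * Complex.I))
      (k := l) isPreconnected_univ (by fun_prop) (by fun_prop) ?_ trivial trivial
    intro y _
    rw [hexp, hexp]
    simp [Complex.exp_add]
  obtain ⟨n, hn⟩ : ∃ n : ℤ, l (0 + 2 * Real.pi * Complex.I) = l 0 + n * (2 * Real.pi * Complex.I) := by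
    rw [← Complex.exp_eq_exp_iff_exists_int, hexp, hexp]
    simp
  let k : ℂ → ℂ := fun z => l z - n * z
  have kper : ∀ z, k (z + 2 * Real.pi * Complex.I) = k z := by
    intro z
    have := hper z
    rw [hn] at this
    simp only [k]
    linear_combination this
  have kper' : ∀ (j : ℤ) z, k (z + j * (2 * Real.pi * Complex.I)) = k z := by
    intro j
    induction j using Int.induction_on with
    | zero => simp
    | succ i ih =>
      intro z
      rw [← ih z, ← kper (z + ((i : ℤ) : ℂ) * (2 * Real.pi * Complex.I))]
      congr 1
      push_cast
      ring
    | pred i ih =>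
      intro z
      rw [← ih z, ← kper]
      congr 1
      push_cast
      ring
  have kexp : ∀ z w, Complex.exp z = Complex.exp w → k z = k w := by
    intro z w h
    obtain ⟨j, rfl⟩ := Complex.exp_eq_exp_iff_exists_int.1 h
    exact kper' j w
  refine ⟨n, fun z => k (Complex.log z), ?_, ?_⟩
  · intro z hz
    have hz : z ≠ 0 := hz
    refine ContinuousAt.continuousWithinAt ?_
    obtain ⟨B, μ, hB, hzB, -, hμ, hexpμ⟩ := exists_local_log (Y := ℂ) (z := z) (m := id)
      univ_mem continuousOn_id hz
    have h1 : (fun z => k (Complex.log z)) =ᶠ[𝓝 z] fun z => k (μ z) := by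
      filter_upwards [hB.mem_nhds hzB, isOpen_ne.mem_nhds hz] with y hy hy0
      refine kexp _ _ ?_
      rw [hexpμ y hy, Complex.exp_log hy0]
      rfl
    refine ContinuousAt.congr ?_ h1.symm
    have hk : Continuous k := by fun_prop
    exact hk.continuousAt.comp (hμ.continuousAt (hB.mem_nhds hzB))
  · intro z hz
    simp only [k]
    rw [Complex.exp_sub, hexp, Complex.exp_log hz, Complex.exp_int_mul, Complex.exp_log hz]
    have := zpow_ne_zero n hz
    field_simp

/-- The argument of a point on a circle has no continuous choice; here in the form needed for
square roots of `n`-th powers. -/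
lemma no_root (n : ℕ) (hn : n ≠ 0) (T : ℂ → ℂ) (hT : ContinuousOn T {0, 1}ᶜ)
    (h : ∀ z, z ≠ 0 → z ≠ 1 → T z ^ (2 * n) = z ^ n) : False := by
  let c : ℝ → ℂ := fun θ => 2 * Complex.exp (θ * Complex.I)
  have hc : Continuous c := by fun_prop
  have habs : ∀ θ, ‖c θ‖ = 2 := by
    intro θ
    simp [c, Complex.norm_exp_ofReal_mul_I]
  have hc0 : ∀ θ, c θ ≠ 0 := fun θ h => by have := habs θ; rw [h] at this; simp at this
  have hc1 : ∀ θ, c θ ≠ 1 := fun θ h => by have := habs θ; rw [h] at this; simp at this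
  let T' : ℝ → ℂ := fun θ => T (c θ) * Complex.exp (-(θ * Complex.I / 2))
  have hT' : Continuous T' := by
    have : Continuous fun θ => T (c θ) := hT.comp_continuous hc (fun θ => by simp [hc0, hc1])
    exact this.mul (by fun_prop)
  have hfin : {w : ℂ | w ^ (2 * n) = 2 ^ n}.Finite := by
    have h2 : 0 < 2 * n := by omega
    refine (Polynomial.nthRoots (2 * n) ((2:ℂ) ^ n)).toFinset.finite_toSet.subset ?_
    intro w hw
    simpa [Polynomial.mem_nthRoots h2] using hw
  have hmem : ∀ θ, T' θ ^ (2 * n) = 2 ^ n := by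
    intro θ
    simp only [T', mul_pow]
    rw [h _ (hc0 θ) (hc1 θ)]
    simp only [c, mul_pow]
    rw [mul_assoc, ← Complex.exp_nat_mul, ← Complex.exp_nat_mul, ← Complex.exp_add]
    have : (n : ℂ) * (θ * Complex.I) + ((2 * n : ℕ) : ℂ) * (-(θ * Complex.I / 2)) = 0 := by
      push_cast; ring
    rw [this]; simp
  have heq : T' 0 = T' (2 * Real.pi) :=
    isPreconnected_univ.constant_of_mapsTo (Set.Finite.isDiscrete hfin) hT'.continuousOn
      (fun θ _ => hmem θ) trivial trivial
  have e1 : c (2 * Real.pi) = c 0 := by simp [c]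
  have e2 : T' (2 * Real.pi) = - T' 0 := by
    simp only [T', e1]
    have : Complex.exp (-(((2 * Real.pi : ℝ) : ℂ) * Complex.I / 2)) = -1 := by
      have : -(((2 * Real.pi : ℝ) : ℂ) * Complex.I / 2) = - (Real.pi * Complex.I) := by
        push_cast; ring
      rw [this, Complex.exp_neg, Complex.exp_pi_mul_I]; norm_num
    rw [this]; simp
  have h3 : T' 0 = 0 := by
    rw [e2] at heq
    linear_combination heq / 2
  have := hmem 0
  rw [h3, zero_pow (by omega)] at this
  exact pow_ne_zero n two_ne_zero this.symm

end SurfDisc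

namespace SurfDisc

/-! ### Arcs in the plane -/

/-- A parametrised arc: a map which is continuous and injective on the unit interval. -/
structure IsArcMap {X : Type*} [TopologicalSpace X] (a : ℝ → X) : Prop where
  cont : ContinuousOn a (Icc 0 1)
  inj : InjOn a (Icc 0 1)

lemma IsArcMap.isCompact {X : Type*} [TopologicalSpace X] {a : ℝ → X} (ha : IsArcMap a) :
    IsCompact (a '' Icc 0 1) := isCompact_Icc.image_of_continuousOn ha.cont

lemma IsArcMap.isCompact_sub {X : Type*} [TopologicalSpace X] {a : ℝ → X} (ha : IsArcMap a)
    {s t : ℝ} (hs : 0 ≤ s) (ht : t ≤ 1) :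
    IsCompact (a '' Icc s t) :=
  isCompact_Icc.image_of_continuousOn (ha.cont.mono (Icc_subset_Icc hs ht))

lemma IsArcMap.ends_ne {X : Type*} [TopologicalSpace X] {a : ℝ → X} (ha : IsArcMap a) :
    a 0 ≠ a 1 := fun h => zero_ne_one (ha.inj (by simp) (by simp) h)

lemma IsArcMap.mem_iff {X : Type*} [TopologicalSpace X] {a : ℝ → X} (ha : IsArcMap a)
    {t : ℝ} (ht : t ∈ Icc (0:ℝ) 1) {S : Set ℝ} (hS : S ⊆ Icc 0 1) : a t ∈ a '' S ↔ t ∈ S := by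
  constructor
  · rintro ⟨u, hu, h⟩
    rwa [← ha.inj (hS hu) ht h]
  · exact fun h => ⟨t, h, rfl⟩

lemma IsArcMap.mem_Ioo {X : Type*} [TopologicalSpace X] {a : ℝ → X} {y : X}
    (hy : y ∈ a '' Icc 0 1) (h0 : y ≠ a 0) (h1 : y ≠ a 1) : y ∈ a '' Ioo 0 1 := by
  obtain ⟨t, ht, rfl⟩ := hy
  refine ⟨t, ⟨lt_of_le_of_ne ht.1 ?_, lt_of_le_of_ne ht.2 ?_⟩, rfl⟩
  · rintro rfl; exact h0 rfl
  · rintro rfl; exact h1 rfl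

lemma isPreconnected_compl_closedBall (R : ℝ) : IsPreconnected (Metric.closedBall (0:ℂ) R)ᶜ := by
  rcases lt_or_ge R 0 with hR | hR
  · rw [Metric.closedBall_eq_empty.2 hR, compl_empty]; exact isPreconnected_univ
  rcases hR.eq_or_lt with rfl | hR
  · rw [Metric.closedBall_zero]
    exact (isConnected_compl_singleton_of_one_lt_rank (by simp) 0).isPreconnected
  · have hconv : Convex ℝ {z : ℂ | Real.log R < z.re} :=
      convex_halfSpace_re_gt _
    have : (Metric.closedBall (0:ℂ) R)ᶜ = Complex.exp '' {z : ℂ | Real.log R < z.re} := by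
      ext z
      simp only [mem_compl_iff, Metric.mem_closedBall, dist_zero_right, not_le, mem_image,
        mem_ofPred_eq]
      constructor
      · intro h
        have hz : z ≠ 0 := by rintro rfl; simp at h; linarith
        exact ⟨Complex.log z, by rw [Complex.log_re]; exact Real.log_lt_log hR h,
          Complex.exp_log hz⟩
      · rintro ⟨w, hw, rfl⟩
        rw [Complex.norm_exp]
        exact (Real.log_lt_iff_lt_exp hR).1 hw
    rw [this]
    exact hconv.isPreconnected.image _ Complex.continuous_exp.continuousOn

/-- Borsuk's argument: a bounded component of the complement of an arc would give a logarithm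
of the identity on a large circle. -/
lemma arc_no_bounded {a : ℝ → ℂ} (ha : IsArcMap a) {V V' : Set ℂ} (hV : IsOpen V)
    (hV' : IsOpen V') (hd : Disjoint V V') (hu : V ∪ V' = (a '' Icc 0 1)ᶜ) {R : ℝ}
    (hR : (Metric.closedBall (0:ℂ) R)ᶜ ⊆ V') : V = ∅ := by
  classical
  by_contra hne
  obtain ⟨z0, hz0⟩ := nonempty_iff_ne_empty.2 hne
  have hz0K : z0 ∉ a '' Icc 0 1 := by
    have : z0 ∈ V ∪ V' := Or.inl hz0
    rwa [hu] at this
  obtain ⟨l, hl, hlexp⟩ := exists_log_interval (fun t => a t - z0) (ha.cont.sub continuousOn_const)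
    (fun t ht h => hz0K ⟨t, ht, sub_eq_zero.1 h⟩)
  have hemb : IsClosedEmbedding (fun t : Icc (0:ℝ) 1 => a t) := by
    refine Continuous.isClosedEmbedding ?_ ?_
    · exact continuousOn_iff_continuous_domRestrict.1 ha.cont
    · intro s t h
      exact Subtype.ext (ha.inj s.2 t.2 h)
  obtain ⟨g, hg⟩ := ContinuousMap.exists_extension' hemb
    (⟨fun t => l t, continuousOn_iff_continuous_domRestrict.1 hl⟩ : C(Icc (0:ℝ) 1, ℂ))
  let F : ℂ → ℂ := fun z => if z ∈ V then Complex.exp (g z) else z - z0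
  have hFc : Continuous F := by
    refine Continuous.if ?_ (by fun_prop) (by fun_prop)
    intro z hz
    have hz : z ∈ frontier V := hz
    have hzV : z ∉ V := fun h => by
      rw [hV.frontier_eq] at hz; exact hz.2 h
    have hzV' : z ∉ V' := fun h => by
      have := hz.1
      rw [mem_closure_iff] at this
      obtain ⟨w, hw1, hw2⟩ := this V' hV' h
      exact disjoint_left.1 hd hw2 hw1
    have hzK : z ∈ a '' Icc 0 1 := by
      by_contra h
      have : z ∈ V ∪ V' := by rw [hu]; exact h
      rcases this with h | h
      · exact hzV h
      · exact hzV' h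
    obtain ⟨t, ht, rfl⟩ := hzK
    have this : g (a t) = l t := congrFun hg ⟨t, ht⟩
    rw [this, hlexp t ht]
  have hF0 : ∀ z, F z ≠ 0 := by
    intro z
    simp only [F]
    split_ifs with h
    · exact Complex.exp_ne_zero _
    · intro h'
      rw [sub_eq_zero.1 h'] at h
      exact h hz0
  obtain ⟨k, hk, hkexp⟩ := exists_log_plane F hFc hF0
  let r : ℝ := |R| + ‖z0‖ + 1
  have hr : 0 < r := by positivity
  let c : ℝ → ℂ := fun θ => z0 + r * Complex.exp (θ * Complex.I)
  have hcV : ∀ θ, c θ ∉ V := by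
    intro θ h
    refine disjoint_left.1 hd h (hR ?_)
    simp only [mem_compl_iff, Metric.mem_closedBall, dist_zero_right, not_le, c]
    have h1 : ‖(r:ℂ) * Complex.exp (θ * Complex.I)‖ = r := by
      rw [norm_mul, Complex.norm_exp_ofReal_mul_I]; simp [abs_of_pos hr]
    have h2 := norm_sub_le (z0 + r * Complex.exp (θ * Complex.I)) z0
    rw [add_sub_cancel_left, h1] at h2
    have h3 := le_abs_self R
    simp only [r] at *
    linarith
  have := const_of_exp_eq (Y := ℝ) (s := univ) isPreconnected_univ (h := fun θ => k (c θ))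
    (k := fun θ => Real.log r + θ * Complex.I) (by fun_prop) (by fun_prop) (fun θ _ => by
      rw [hkexp]
      simp only [F, if_neg (hcV θ)]
      rw [Complex.exp_add, ← Complex.ofReal_exp, Real.exp_log hr]
      simp [c]) (x := 0) (y := 2 * Real.pi) trivial trivial
  have e1 : c (2 * Real.pi) = c 0 := by simp [c]
  simp only [e1] at this
  have h4 : ((2 * Real.pi : ℝ) : ℂ) * Complex.I = 0 := by
    push_cast at this ⊢
    linear_combination this
  have h5 := Real.pi_pos.ne'
  simp at h4

/-- An arc does not separate the plane. -/
lemma arc_compl_preconnected {a : ℝ → ℂ} (ha : IsArcMap a) : IsPreconnected (a '' Icc 0 1)ᶜ := by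
  rw [isPreconnected_iff_subset_of_disjoint]
  intro u v hu hv huv hdis
  have hK := ha.isCompact.isClosed.isOpen_compl
  obtain ⟨R, hR⟩ := ha.isCompact.isBounded.subset_closedBall 0
  have hE := compl_subset_compl.2 hR
  have hd : Disjoint (u ∩ (a '' Icc 0 1)ᶜ) (v ∩ (a '' Icc 0 1)ᶜ) := by
    rw [disjoint_left]
    rintro x ⟨h1, h2⟩ ⟨h3, -⟩
    have : x ∈ (a '' Icc 0 1)ᶜ ∩ (u ∩ v) := ⟨h2, h1, h3⟩
    rw [hdis] at this
    exact this
  have hun : (u ∩ (a '' Icc 0 1)ᶜ) ∪ (v ∩ (a '' Icc 0 1)ᶜ) = (a '' Icc 0 1)ᶜ := by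
    rw [← union_inter_distrib_right]
    exact inter_eq_right.2 huv
  have hsub : ∀ {u v : Set ℂ}, (u ∩ (a '' Icc 0 1)ᶜ) = ∅ → (a '' Icc 0 1)ᶜ ⊆ u ∪ v →
      (a '' Icc 0 1)ᶜ ⊆ v := by
    intro u v h h2 x hx
    rcases h2 hx with h3 | h3
    · exact absurd (show x ∈ u ∩ (a '' Icc 0 1)ᶜ from ⟨h3, hx⟩) (by rw [h]; exact id)
    · exact h3
  have := (isPreconnected_iff_subset_of_disjoint.1 (isPreconnected_compl_closedBall R)) u v hu hv
    (hE.trans huv) (by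
      rw [eq_empty_iff_forall_notMem]
      rintro x ⟨h1, h2⟩
      have : x ∈ (a '' Icc 0 1)ᶜ ∩ (u ∩ v) := ⟨hE h1, h2⟩
      rw [hdis] at this
      exact this)
  rcases this with h | h
  · left
    exact hsub (arc_no_bounded ha (hv.inter hK) (hu.inter hK) hd.symm (by rw [union_comm, hun])
      (subset_inter h hE)) (by rwa [union_comm])
  · right
    exact hsub (arc_no_bounded ha (hu.inter hK) (hv.inter hK) hd hun (subset_inter h hE)) huv

lemma affine_image {X : Type*} (a : ℝ → X) {s t : ℝ} (hst : s ≤ t) :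
    (fun u => a (s + u * (t - s))) '' Icc 0 1 = a '' Icc s t := by
  ext y
  constructor
  · rintro ⟨u, hu, rfl⟩
    refine ⟨_, ⟨?_, ?_⟩, rfl⟩
    · nlinarith [hu.1, hu.2]
    · nlinarith [hu.1, hu.2]
  · rintro ⟨u, hu, rfl⟩
    rcases hst.eq_or_lt with rfl | hst
    · have : u = s := le_antisymm hu.2 hu.1
      exact ⟨0, by simp, by simp [this]⟩
    · have h : 0 < t - s := by linarith
      refine ⟨(u - s) / (t - s), ⟨div_nonneg (by linarith [hu.1]) h.le,
        (div_le_one h).2 (by linarith [hu.2])⟩, ?_⟩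
      simp only
      congr 1
      field_simp
      ring

lemma affine_image_Ioo {X : Type*} (a : ℝ → X) {s t : ℝ} (hst : s < t) :
    (fun u => a (s + u * (t - s))) '' Ioo 0 1 = a '' Ioo s t := by
  have h : 0 < t - s := by linarith
  ext y
  constructor
  · rintro ⟨u, hu, rfl⟩
    refine ⟨_, ⟨?_, ?_⟩, rfl⟩
    · nlinarith [hu.1, hu.2]
    · nlinarith [hu.1, hu.2]
  · rintro ⟨u, hu, rfl⟩
    refine ⟨(u - s) / (t - s), ⟨div_pos (by linarith [hu.1]) h,
      (div_lt_one h).2 (by linarith [hu.2])⟩, ?_⟩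
    simp only
    congr 1
    field_simp
    ring

lemma affine_mapsTo {s t : ℝ} (hs : 0 ≤ s) (hst : s ≤ t) (ht : t ≤ 1) :
    MapsTo (fun u => s + u * (t - s)) (Icc 0 1) (Icc 0 1) := by
  intro u hu
  constructor <;> simp only <;> nlinarith [hu.1, hu.2]

/-- Restriction of an arc to a subinterval. -/
lemma IsArcMap.sub {X : Type*} [TopologicalSpace X] {a : ℝ → X} (ha : IsArcMap a) {s t : ℝ}
    (hs : 0 ≤ s) (hst : s < t) (ht : t ≤ 1) : IsArcMap (fun u => a (s + u * (t - s))) := by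
  refine ⟨ha.cont.comp (by fun_prop) (affine_mapsTo hs hst.le ht), ?_⟩
  intro u hu v hv h
  have := ha.inj (affine_mapsTo hs hst.le ht hu) (affine_mapsTo hs hst.le ht hv) h
  have h : t - s ≠ 0 := by linarith
  simpa [h] using this

lemma exists_log_sub {a : ℝ → ℂ} (ha : ContinuousOn a (Icc 0 1)) {s t : ℝ} (hs : 0 ≤ s)
    (hst : s ≤ t) (ht : t ≤ 1) :
    ∃ g : ℂ → ℂ, ContinuousOn g (a '' Icc s t)ᶜ ∧
      ∀ y ∉ a '' Icc s t, Complex.exp (g y) = (y - a t) / (y - a s) := by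
  obtain ⟨G, hG, hexp, -⟩ := exists_log_path (fun u => a (s + u * (t - s)))
    (ha.comp (by fun_prop) (affine_mapsTo hs hst ht))
  rw [affine_image a hst] at hG hexp
  refine ⟨G 1, ?_, fun y hy => ?_⟩
  · exact hG.comp (f := fun y => ((1:ℝ), y)) (by fun_prop) (fun y hy => ⟨by simp, hy⟩)
  · rw [hexp 1 (by simp) y hy]
    simp

end SurfDisc

/-! ### Möbius transport of an arc -/

namespace SurfDisc

lemma moebius_num {p p' ζ : ℂ} (hζ : ζ ≠ 1) :
    (p' - ζ * p) / (1 - ζ) - p' = ζ * (p' - p) / (1 - ζ) := by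
  have : 1 - ζ ≠ 0 := sub_ne_zero.2 hζ.symm
  field_simp
  ring

lemma moebius_den {p p' ζ : ℂ} (hζ : ζ ≠ 1) :
    (p' - ζ * p) / (1 - ζ) - p = (p' - p) / (1 - ζ) := by
  have : 1 - ζ ≠ 0 := sub_ne_zero.2 hζ.symm
  field_simp
  ring

lemma moebius_ne {p p' ζ : ℂ} (hp : p ≠ p') (hζ0 : ζ ≠ 0) (hζ : ζ ≠ 1) :
    (p' - ζ * p) / (1 - ζ) ∈ ({p, p'} : Set ℂ)ᶜ := by
  have h1 : 1 - ζ ≠ 0 := sub_ne_zero.2 hζ.symm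
  have h2 : p' - p ≠ 0 := sub_ne_zero.2 hp.symm
  simp only [mem_compl_iff, mem_insert_iff, mem_singleton_iff, not_or]
  constructor
  · intro h
    have := moebius_den (p := p) (p' := p') hζ
    rw [h, sub_self] at this
    exact div_ne_zero h2 h1 this.symm
  · intro h
    have := moebius_num (p := p) (p' := p') hζ
    rw [h, sub_self] at this
    exact div_ne_zero (mul_ne_zero hζ0 h2) h1 this.symm

lemma moebius_inv {p p' ζ : ℂ} (hp : p ≠ p') (hζ : ζ ≠ 1) :
    ((p' - ζ * p) / (1 - ζ) - p') / ((p' - ζ * p) / (1 - ζ) - p) = ζ := by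
  have h1 : 1 - ζ ≠ 0 := sub_ne_zero.2 hζ.symm
  have h2 : p' - p ≠ 0 := sub_ne_zero.2 hp.symm
  rw [moebius_num hζ, moebius_den hζ]
  field_simp

lemma moebius_ne_one {p p' y : ℂ} (hp : p ≠ p') (hy : y ≠ p) : (y - p') / (y - p) ≠ 1 := by
  intro h
  have h1 : y - p ≠ 0 := sub_ne_zero.2 hy
  rw [div_eq_one_iff_eq h1] at h
  apply hp
  linear_combination h

lemma moebius_inv' {p p' y : ℂ} (hp : p ≠ p') (hy : y ≠ p) :
    (p' - ((y - p') / (y - p)) * p) / (1 - (y - p') / (y - p)) = y := by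
  have h1 : y - p ≠ 0 := sub_ne_zero.2 hy
  have h2 : p' - p ≠ 0 := sub_ne_zero.2 hp.symm
  have h3 : 1 - (y - p') / (y - p) = (p' - p) / (y - p) := by
    field_simp; ring
  rw [h3]
  field_simp
  ring

/-- The half-logarithm of `(y - a 1) / (y - a 0)` off an arc `a` does not extend continuously
across any interior point of the arc. -/
lemma no_ext {a : ℝ → ℂ} (ha : IsArcMap a) {g : ℂ → ℂ} (hg : ContinuousOn g (a '' Icc 0 1)ᶜ)
    (hexp : ∀ y ∉ a '' Icc 0 1, Complex.exp (g y) = (y - a 1) / (y - a 0))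
    {s : ℝ} (hs : s ∈ Ioo (0:ℝ) 1) {B : Set ℂ} (hB : IsOpen B) (hzB : a s ∈ B) {n : ℕ}
    (hn : n ≠ 0) {S : ℂ → ℂ} (hS : ContinuousOn S B)
    (hSn : ∀ y ∈ B, y ≠ a 0 → y ≠ a 1 → S y ^ (2 * n) = ((y - a 1) / (y - a 0)) ^ n)
    (hSg : ∀ y ∈ B, y ∉ a '' Icc 0 1 → S y = Complex.exp (g y / 2)) : False := by
  classical
  obtain ⟨t, hst, ht1, htB⟩ : ∃ t, s < t ∧ t < 1 ∧ a '' Icc s t ⊆ B := by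
    have h1 : ContinuousAt a s := ha.cont.continuousAt (Icc_mem_nhds hs.1 hs.2)
    have h2 : a ⁻¹' B ∈ 𝓝 s := h1 (hB.mem_nhds hzB)
    obtain ⟨ε, hε, hb⟩ := Metric.mem_nhds_iff.1 h2
    refine ⟨min (s + ε / 2) ((s + 1) / 2), ?_, ?_, ?_⟩
    · exact lt_min (by linarith) (by linarith [hs.2])
    · exact (min_le_right _ _).trans_lt (by linarith [hs.2])
    · rintro _ ⟨u, hu, rfl⟩
      refine hb ?_
      rw [Metric.mem_ball, Real.dist_eq, abs_of_nonneg (by linarith [hu.1])]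
      linarith [hu.2, min_le_left (s + ε / 2) ((s + 1) / 2)]
  have sIcc : s ∈ Icc (0:ℝ) 1 := ⟨hs.1.le, hs.2.le⟩
  have tIcc : t ∈ Icc (0:ℝ) 1 := ⟨by linarith [hs.1], ht1.le⟩
  obtain ⟨g1, hg1, he1⟩ := exists_log_sub ha.cont le_rfl hs.1.le hs.2.le
  obtain ⟨g2, hg2, he2⟩ := exists_log_sub ha.cont hs.1.le hst.le ht1.le
  obtain ⟨g3, hg3, he3⟩ := exists_log_sub ha.cont tIcc.1 tIcc.2 le_rfl
  have sub1 : a '' Icc 0 s ⊆ a '' Icc 0 1 := image_mono (Icc_subset_Icc le_rfl hs.2.le)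
  have sub2 : a '' Icc s t ⊆ a '' Icc 0 1 := image_mono (Icc_subset_Icc hs.1.le ht1.le)
  have sub3 : a '' Icc t 1 ⊆ a '' Icc 0 1 := image_mono (Icc_subset_Icc tIcc.1 le_rfl)
  have hst_ne : a s ≠ a t := fun h => hst.ne (ha.inj sIcc tIcc h)
  -- the logarithms add up, up to a period
  obtain ⟨c, hc, hcexp⟩ : ∃ c, (∀ y ∉ a '' Icc 0 1, g y = g1 y + g2 y + g3 y + c) ∧
      Complex.exp c = 1 := by
    obtain ⟨y0, hy0⟩ : ∃ y0, y0 ∉ a '' Icc 0 1 := by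
      by_contra! h
      exact ha.isCompact.ne_univ (eq_univ_of_forall h)
    have hE : ∀ y ∈ (a '' Icc 0 1)ᶜ,
        Complex.exp (g y) = Complex.exp (g1 y + g2 y + g3 y) := by
      intro y hy
      have n0 : y - a 0 ≠ 0 := fun h => hy ⟨0, by simp, (sub_eq_zero.1 h).symm⟩
      have ns : y - a s ≠ 0 := fun h => hy ⟨s, sIcc, (sub_eq_zero.1 h).symm⟩
      have nt : y - a t ≠ 0 := fun h => hy ⟨t, tIcc, (sub_eq_zero.1 h).symm⟩
      rw [hexp y hy, Complex.exp_add, Complex.exp_add, he1 y (fun h => hy (sub1 h)),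
        he2 y (fun h => hy (sub2 h)), he3 y (fun h => hy (sub3 h))]
      field_simp
    have hcont : ContinuousOn (fun y => g1 y + g2 y + g3 y) (a '' Icc 0 1)ᶜ :=
      ((hg1.mono (compl_subset_compl.2 sub1)).add (hg2.mono (compl_subset_compl.2 sub2))).add
        (hg3.mono (compl_subset_compl.2 sub3))
    refine ⟨g y0 - (g1 y0 + g2 y0 + g3 y0), fun y hy => ?_, ?_⟩
    · have := const_of_exp_eq (arc_compl_preconnected ha) hg hcont hE hy hy0
      linear_combination this
    · rw [Complex.exp_sub, hE y0 hy0, div_self (Complex.exp_ne_zero _)]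
  let T : ℂ → ℂ := fun y => if y ∈ a '' Icc s t then S y * Complex.exp (-(g1 y + g3 y + c) / 2)
    else Complex.exp (g2 y / 2)
  have hsplit : ∀ y ∈ a '' Icc s t, y ≠ a s → y ≠ a t → y ∉ a '' Icc 0 s ∧ y ∉ a '' Icc t 1 := by
    rintro _ ⟨u, hu, rfl⟩ h1 h2
    have hu' : u ∈ Icc (0:ℝ) 1 := ⟨sIcc.1.trans hu.1, hu.2.trans tIcc.2⟩
    have hus : s < u := lt_of_le_of_ne hu.1 (by rintro rfl; exact h1 rfl)
    have hut : u < t := lt_of_le_of_ne hu.2 (by rintro rfl; exact h2 rfl)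
    constructor
    · rw [ha.mem_iff hu' (Icc_subset_Icc le_rfl hs.2.le)]
      exact fun h => absurd h.2 (not_le.2 hus)
    · rw [ha.mem_iff hu' (Icc_subset_Icc tIcc.1 le_rfl)]
      exact fun h => absurd h.1 (not_le.2 hut)
  have cl1 := (ha.isCompact_sub le_rfl hs.2.le).isClosed
  have cl2 := (ha.isCompact_sub hs.1.le ht1.le).isClosed
  have cl3 := (ha.isCompact_sub tIcc.1 le_rfl).isClosed
  have hTc : ContinuousOn T {a s, a t}ᶜ := by
    intro y hy
    refine ContinuousAt.continuousWithinAt ?_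
    simp only [mem_compl_iff, mem_insert_iff, mem_singleton_iff, not_or] at hy
    by_cases hyK : y ∈ a '' Icc s t
    · obtain ⟨h1, h3⟩ := hsplit y hyK hy.1 hy.2
      have e : T =ᶠ[𝓝 y] fun y => S y * Complex.exp (-(g1 y + g3 y + c) / 2) := by
        filter_upwards [cl1.isOpen_compl.mem_nhds h1, cl3.isOpen_compl.mem_nhds h3,
          hB.mem_nhds (htB hyK)] with w hw1 hw3 hwB
        simp only [T]
        split_ifs with hw
        · rfl
        · have hwK : w ∉ a '' Icc 0 1 := by
            rintro ⟨u, hu, rfl⟩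
            rcases le_total u s with h | h
            · exact hw1 ⟨u, ⟨hu.1, h⟩, rfl⟩
            · rcases le_total u t with h' | h'
              · exact hw ⟨u, ⟨h, h'⟩, rfl⟩
              · exact hw3 ⟨u, ⟨h', hu.2⟩, rfl⟩
          rw [hSg w hwB hwK, hc w hwK, ← Complex.exp_add]
          congr 1
          ring
      refine ContinuousAt.congr ?_ e.symm
      have c1 := hg1.continuousAt (cl1.isOpen_compl.mem_nhds h1)
      have c3 := hg3.continuousAt (cl3.isOpen_compl.mem_nhds h3)
      have cS := hS.continuousAt (hB.mem_nhds (htB hyK))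
      fun_prop
    · have e : T =ᶠ[𝓝 y] fun y => Complex.exp (g2 y / 2) := by
        filter_upwards [cl2.isOpen_compl.mem_nhds hyK] with w hw
        simp only [T, if_neg hw]
      refine ContinuousAt.congr ?_ e.symm
      have c2 := hg2.continuousAt (cl2.isOpen_compl.mem_nhds hyK)
      fun_prop
  have hTn : ∀ y, y ≠ a s → y ≠ a t → T y ^ (2 * n) = ((y - a t) / (y - a s)) ^ n := by
    intro y hys hyt
    by_cases hyK : y ∈ a '' Icc s t
    · obtain ⟨h1, h3⟩ := hsplit y hyK hys hyt
      have n0 : y ≠ a 0 := by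
        rintro rfl
        exact h1 ⟨0, by simp [hs.1.le], rfl⟩
      have n1 : y ≠ a 1 := by
        rintro rfl
        exact h3 ⟨1, by simp [ht1.le], rfl⟩
      simp only [T, if_pos hyK, mul_pow]
      rw [hSn y (htB hyK) n0 n1, ← Complex.exp_nat_mul]
      have : ((2 * n : ℕ) : ℂ) * (-(g1 y + g3 y + c) / 2) = -((n:ℂ) * (g1 y + g3 y + c)) := by
        push_cast; ring
      rw [this, Complex.exp_neg, Complex.exp_nat_mul, Complex.exp_add, Complex.exp_add, hcexp,
        he1 y h1, he3 y h3, ← inv_pow, ← mul_pow]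
      congr 1
      have d0 := sub_ne_zero.2 n0
      have d1 := sub_ne_zero.2 n1
      have ds := sub_ne_zero.2 hys
      have dt := sub_ne_zero.2 hyt
      field_simp
    · simp only [T, if_neg hyK]
      rw [← Complex.exp_nat_mul, ← he2 y hyK, ← Complex.exp_nat_mul]
      congr 1
      push_cast; ring
  refine no_root n hn (fun ζ => T ((a t - ζ * a s) / (1 - ζ))) ?_ ?_
  · refine hTc.comp (ContinuousOn.div (by fun_prop) (by fun_prop) ?_) ?_
    · intro ζ hζ h
      simp only [mem_compl_iff, mem_insert_iff, mem_singleton_iff, not_or] at hζ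
      exact hζ.2 (sub_eq_zero.1 h).symm
    · intro ζ hζ
      simp only [mem_compl_iff, mem_insert_iff, mem_singleton_iff, not_or] at hζ
      exact moebius_ne hst_ne hζ.1 hζ.2
  · intro ζ h0 h1
    have := moebius_ne hst_ne h0 h1
    simp only [mem_compl_iff, mem_insert_iff, mem_singleton_iff, not_or] at this
    rw [hTn _ this.1 this.2, moebius_inv hst_ne h1]

end SurfDisc

/-! ### Locally constant functions near an arc -/

namespace SurfDisc

/-- An integer-valued function, locally constant off an arc in a bounded neighbourhood of the open
arc, is an integer multiple of the logarithm of `(y - a 1) / (y - a 0)` up to a function that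
is continuous across the open arc. -/
lemma index_form_aux {a : ℝ → ℂ} (ha : IsArcMap a) {g : ℂ → ℂ}
    (hg : ContinuousOn g (a '' Icc 0 1)ᶜ)
    (hexp : ∀ y ∉ a '' Icc 0 1, Complex.exp (g y) = (y - a 1) / (y - a 0))
    {O : Set ℂ} (hO : IsOpen O) (hKO : a '' Ioo 0 1 ⊆ O) (h0 : a 0 ∉ O) (h1 : a 1 ∉ O)
    {R : ℝ} (hR : O ⊆ Metric.closedBall 0 R)
    {f : ℂ → ℤ} (hf : ∀ y ∈ O, y ∉ a '' Icc 0 1 → ∀ᶠ y' in 𝓝 y, f y' = f y) :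
    ∃ (n : ℤ) (L : ℂ → ℂ) (O' : Set ℂ), IsOpen O' ∧ O' ⊆ O ∧ a '' Ioo 0 1 ⊆ O' ∧
      ContinuousOn L {a 0, a 1}ᶜ ∧
      (∀ y ∈ O', y ∉ a '' Icc 0 1 → 2 * Real.pi * Complex.I * f y = n * g y + L y) ∧
      ∀ y ∈ O', Complex.exp (L y) * ((y - a 1) / (y - a 0)) ^ n = 1 := by
  classical
  have hK := ha.isCompact.isClosed
  have hKne : (a '' Icc 0 1).Nonempty := ⟨a 0, 0, by simp, rfl⟩
  have hOc := hO.isClosed_compl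
  have hOne : (Oᶜ).Nonempty := ⟨a 0, h0⟩
  let d1 : ℂ → ℝ := fun y => Metric.infDist y Oᶜ
  let d2 : ℂ → ℝ := fun y => Metric.infDist y (a '' Icc 0 1)
  have hd1 : Continuous d1 := Metric.continuous_infDist_pt _
  have hd2 : Continuous d2 := Metric.continuous_infDist_pt _
  have d1nn : ∀ y, 0 ≤ d1 y := fun y => Metric.infDist_nonneg
  have d2nn : ∀ y, 0 ≤ d2 y := fun y => Metric.infDist_nonneg
  have d1z : ∀ y, d1 y = 0 ↔ y ∉ O := fun y => (hOc.mem_iff_infDist_zero hOne).symm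
  have d2z : ∀ y, d2 y = 0 ↔ y ∈ a '' Icc 0 1 := fun y => (hK.mem_iff_infDist_zero hKne).symm
  have hden : ∀ y, y ≠ a 0 → y ≠ a 1 → d1 y + d2 y ≠ 0 := by
    intro y hy0 hy1 h
    have e1 : d1 y = 0 := by linarith [d1nn y, d2nn y]
    have e2 : d2 y = 0 := by linarith [d1nn y, d2nn y]
    exact (d1z y).1 e1 (hKO (IsArcMap.mem_Ioo ((d2z y).1 e2) hy0 hy1))
  let l0 : ℂ → ℝ := fun y => d1 y / (d1 y + d2 y)
  have hl0 : ∀ y, y ≠ a 0 → y ≠ a 1 → ContinuousAt l0 y := by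
    intro y hy0 hy1
    exact hd1.continuousAt.div (hd1.add hd2).continuousAt (hden y hy0 hy1)
  let l : ℂ → ℝ := fun y => max 0 (min 1 (3 * l0 y - 1))
  have hl : ∀ y, y ≠ a 0 → y ≠ a 1 → ContinuousAt l y := by
    intro y hy0 hy1
    have := hl0 y hy0 hy1
    exact continuousAt_const.max (continuousAt_const.min ((this.const_mul 3).sub continuousAt_const))
  have l_one : ∀ y, 2 / 3 < l0 y → l y = 1 := by
    intro y hy
    simp only [l]
    rw [min_eq_left (by linarith)]
    norm_num
  have l_zero : ∀ y, l0 y < 1 / 3 → l y = 0 := by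
    intro y hy
    simp only [l]
    exact max_eq_left ((min_le_right _ _).trans (by linarith))
  have l0K : ∀ y ∈ a '' Icc 0 1, y ≠ a 0 → y ≠ a 1 → l0 y = 1 := by
    intro y hy hy0 hy1
    have := hden y hy0 hy1
    simp only [l0]
    rw [(d2z y).2 hy, add_zero] at this ⊢
    exact div_self this
  have l0O : ∀ y, y ∉ O → l0 y = 0 := by
    intro y hy
    simp only [l0]
    rw [(d1z y).2 hy, zero_div]
  have offK : ∀ y, y ∉ a '' Icc 0 1 → y ≠ a 0 ∧ y ≠ a 1 := by
    intro y hy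
    constructor
    · rintro rfl; exact hy ⟨0, by simp, rfl⟩
    · rintro rfl; exact hy ⟨1, by simp, rfl⟩
  let G : ℂ → ℂ := fun y => 2 * Real.pi * Complex.I * (l y * f y)
  have hG : ∀ y, y ∉ a '' Icc 0 1 → ContinuousAt G y := by
    intro y hy
    obtain ⟨hy0, hy1⟩ := offK y hy
    by_cases hyO : y ∈ O
    · have e : G =ᶠ[𝓝 y] fun w => 2 * Real.pi * Complex.I * (l w * f y) := by
        filter_upwards [hf y hyO hy] with w hw
        simp only [G, hw]
      refine ContinuousAt.congr ?_ e.symm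
      have := hl y hy0 hy1
      fun_prop
    · have e : G =ᶠ[𝓝 y] fun w => 0 := by
        have h2 : ∀ᶠ w in 𝓝 y, l0 w < 1 / 3 :=
          (hl0 y hy0 hy1).eventually_lt continuousAt_const (by rw [l0O y hyO]; norm_num)
        filter_upwards [h2] with w hw
        simp [G, l_zero w hw]
      exact continuousAt_const.congr e.symm
  let w : ℂ → ℂ := fun y => if y ∈ a '' Icc 0 1 then 1 else Complex.exp (G y)
  have w_near : ∀ y, 2 / 3 < l0 y → w y = 1 := by
    intro y hy
    simp only [w]
    split_ifs
    · rfl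
    · simp only [G, l_one y hy]
      rw [Complex.exp_eq_one_iff]
      exact ⟨f y, by push_cast; ring⟩
  have w_off : ∀ y, y ∉ O → w y = 1 := by
    intro y hy
    simp only [w]
    split_ifs
    · rfl
    · simp [G, l_zero y (by rw [l0O y hy]; norm_num)]
  have w0 : ∀ y, w y ≠ 0 := by
    intro y
    simp only [w]
    split_ifs
    · exact one_ne_zero
    · exact Complex.exp_ne_zero _
  have near : ∀ y ∈ a '' Icc 0 1, y ≠ a 0 → y ≠ a 1 → ∀ᶠ v in 𝓝 y, 2 / 3 < l0 v := by
    intro y hy hy0 hy1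
    exact continuousAt_const.eventually_lt (hl0 y hy0 hy1) (by rw [l0K y hy hy0 hy1]; norm_num)
  have hw : ContinuousOn w {a 0, a 1}ᶜ := by
    intro y hy
    refine ContinuousAt.continuousWithinAt ?_
    simp only [mem_compl_iff, mem_insert_iff, mem_singleton_iff, not_or] at hy
    by_cases hyK : y ∈ a '' Icc 0 1
    · have e : w =ᶠ[𝓝 y] fun _ => 1 := by
        filter_upwards [near y hyK hy.1 hy.2] with v hv using w_near v hv
      exact continuousAt_const.congr e.symm
    · have e : w =ᶠ[𝓝 y] fun v => Complex.exp (G v) := by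
        filter_upwards [hK.isOpen_compl.mem_nhds hyK] with v hv
        simp only [w, if_neg hv]
      exact (ContinuousAt.cexp (hG y hyK)).congr e.symm
  -- transport to the punctured plane
  let W : ℂ → ℂ := fun ζ => if ζ = 1 then 1 else w ((a 1 - ζ * a 0) / (1 - ζ))
  have hW : ContinuousOn W {0}ᶜ := by
    intro ζ hζ
    have hζ : ζ ≠ 0 := hζ
    refine ContinuousAt.continuousWithinAt ?_
    by_cases h : ζ = 1
    · subst h
      have e : W =ᶠ[𝓝 1] fun _ => 1 := by
        have c1 : Continuous fun ζ : ℂ => ‖a 1 - ζ * a 0‖ - R * ‖1 - ζ‖ := by fun_prop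
        have p1 : 0 < ‖a 1 - 1 * a 0‖ - R * ‖(1:ℂ) - 1‖ := by
          simp [sub_eq_zero, ha.ends_ne.symm]
        filter_upwards [c1.continuousAt.eventually (lt_mem_nhds p1)] with ζ hζ
        simp only [W]
        split_ifs with h
        · rfl
        · refine w_off _ fun hmem => ?_
          have := hR hmem
          rw [Metric.mem_closedBall, dist_zero_right, norm_div, div_le_iff₀
            (norm_pos_iff.2 (sub_ne_zero.2 (Ne.symm h)))] at this
          linarith
      exact continuousAt_const.congr e.symm
    · have e : W =ᶠ[𝓝 ζ] fun ζ => w ((a 1 - ζ * a 0) / (1 - ζ)) := by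
        filter_upwards [isOpen_ne.mem_nhds h] with v hv
        simp only [W, if_neg hv]
      refine ContinuousAt.congr ?_ e.symm
      have hop : IsOpen ({a 0, a 1}ᶜ : Set ℂ) := (Set.toFinite _).isClosed.isOpen_compl
      have cw := hw.continuousAt (hop.mem_nhds (moebius_ne ha.ends_ne hζ h))
      have cm : ContinuousAt (fun ζ : ℂ => (a 1 - ζ * a 0) / (1 - ζ)) ζ :=
        ContinuousAt.div (by fun_prop) (by fun_prop) (sub_ne_zero.2 (Ne.symm h))
      exact ContinuousAt.comp (f := fun ζ : ℂ => (a 1 - ζ * a 0) / (1 - ζ)) cw cm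
  obtain ⟨n, Λ, hΛ, hform⟩ := punctured_plane_form W hW (fun ζ hζ => by
    simp only [W]; split_ifs
    · exact one_ne_zero
    · exact w0 _)
  have hmne : ∀ y, y ≠ a 0 → y ≠ a 1 → (y - a 1) / (y - a 0) ≠ 0 := fun y hy0 hy1 =>
    div_ne_zero (sub_ne_zero.2 hy1) (sub_ne_zero.2 hy0)
  have wform : ∀ y, y ≠ a 0 → y ≠ a 1 →
      w y = ((y - a 1) / (y - a 0)) ^ n * Complex.exp (Λ ((y - a 1) / (y - a 0))) := by
    intro y hy0 hy1
    rw [← hform _ (hmne y hy0 hy1)]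
    simp only [W, if_neg (moebius_ne_one ha.ends_ne hy0)]
    rw [moebius_inv' ha.ends_ne hy0]
  have hΛm : ContinuousOn (fun y => Λ ((y - a 1) / (y - a 0))) {a 0, a 1}ᶜ := by
    refine hΛ.comp (ContinuousOn.div (by fun_prop) (by fun_prop) ?_) ?_
    · intro y hy h
      simp only [mem_compl_iff, mem_insert_iff, mem_singleton_iff, not_or] at hy
      exact hy.1 (sub_eq_zero.1 h)
    · intro y hy
      simp only [mem_compl_iff, mem_insert_iff, mem_singleton_iff, not_or] at hy
      exact hmne y hy.1 hy.2
  have hsubs : (a '' Icc 0 1)ᶜ ⊆ {a 0, a 1}ᶜ := by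
    intro y hy
    simpa using offK y hy
  obtain ⟨y0, hy0⟩ : ∃ y0, y0 ∉ a '' Icc 0 1 := by
    by_contra! h
    exact ha.isCompact.ne_univ (eq_univ_of_forall h)
  have hE : ∀ y ∈ (a '' Icc 0 1)ᶜ,
      Complex.exp (G y) = Complex.exp (n * g y + Λ ((y - a 1) / (y - a 0))) := by
    intro y hy
    have e1 : w y = Complex.exp (G y) := by
      simp only [w]; exact if_neg hy
    rw [← e1, wform y (offK y hy).1 (offK y hy).2, Complex.exp_add, Complex.exp_int_mul, hexp y hy]
  have hconst : ∀ y ∈ (a '' Icc 0 1)ᶜ, _ := fun y hy =>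
    const_of_exp_eq (arc_compl_preconnected ha)
    (h := G) (k := fun y => n * g y + Λ ((y - a 1) / (y - a 0)))
    (fun y hy => (hG y hy).continuousWithinAt)
    ((continuousOn_const.mul hg).add (hΛm.mono hsubs)) hE hy hy0
  set C : ℂ := G y0 - (n * g y0 + Λ ((y0 - a 1) / (y0 - a 0))) with hC
  have hCexp : Complex.exp C = 1 := by
    rw [hC, Complex.exp_sub, hE y0 hy0, div_self (Complex.exp_ne_zero _)]
  have hOne' : ∀ y ∈ O, y ≠ a 0 ∧ y ≠ a 1 := by
    intro y hy
    constructor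
    · rintro rfl; exact h0 hy
    · rintro rfl; exact h1 hy
  refine ⟨n, fun y => Λ ((y - a 1) / (y - a 0)) + C, {y | y ∈ O ∧ 2 / 3 < l0 y}, ?_,
    fun y hy => hy.1, ?_, hΛm.add continuousOn_const, ?_, ?_⟩
  · rw [isOpen_iff_mem_nhds]
    rintro y ⟨hyO, hy⟩
    obtain ⟨hy0, hy1⟩ := hOne' y hyO
    filter_upwards [hO.mem_nhds hyO, continuousAt_const.eventually_lt (hl0 y hy0 hy1) hy] with v
      h1 h2 using ⟨h1, h2⟩
  · intro y hy
    obtain ⟨hy0, hy1⟩ := hOne' y (hKO hy)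
    refine ⟨hKO hy, ?_⟩
    rw [l0K y (image_mono Ioo_subset_Icc_self hy) hy0 hy1]
    norm_num
  · rintro y ⟨-, hy⟩ hyK
    have := hconst y hyK
    simp only [G, l_one y hy] at this
    push_cast at this
    rw [one_mul] at this
    linear_combination this
  · rintro y ⟨hyO, hy⟩
    obtain ⟨hy0, hy1⟩ := hOne' y hyO
    have := wform y hy0 hy1
    rw [w_near y hy] at this
    rw [Complex.exp_add, hCexp, mul_one, mul_comm]
    exact this.symm

/-- The conclusion of `index_form_aux` for an arbitrary open neighbourhood `O` of the open arc. -/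
lemma index_form {a : ℝ → ℂ} (ha : IsArcMap a) {g : ℂ → ℂ}
    (hg : ContinuousOn g (a '' Icc 0 1)ᶜ)
    (hexp : ∀ y ∉ a '' Icc 0 1, Complex.exp (g y) = (y - a 1) / (y - a 0))
    {O : Set ℂ} (hO : IsOpen O) (hKO : a '' Ioo 0 1 ⊆ O) (h0 : a 0 ∉ O) (h1 : a 1 ∉ O)
    {f : ℂ → ℤ} (hf : ∀ y ∈ O, y ∉ a '' Icc 0 1 → ∀ᶠ y' in 𝓝 y, f y' = f y) :
    ∃ (n : ℤ) (L : ℂ → ℂ) (O' : Set ℂ), IsOpen O' ∧ O' ⊆ O ∧ a '' Ioo 0 1 ⊆ O' ∧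
      ContinuousOn L {a 0, a 1}ᶜ ∧
      (∀ y ∈ O', y ∉ a '' Icc 0 1 → 2 * Real.pi * Complex.I * f y = n * g y + L y) ∧
      ∀ y ∈ O', Complex.exp (L y) * ((y - a 1) / (y - a 0)) ^ n = 1 := by
  obtain ⟨R, hR⟩ := ha.isCompact.isBounded.subset_ball 0
  obtain ⟨n, L, O', k1, k2, k3⟩ := index_form_aux ha hg hexp (hO.inter Metric.isOpen_ball)
    (subset_inter hKO ((image_mono Ioo_subset_Icc_self).trans hR)) (fun h => h0 h.1)
    (fun h => h1 h.1) (inter_subset_right.trans Metric.ball_subset_closedBall)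
    (fun y hy hyK => hf y hy.1 hyK)
  exact ⟨n, L, O', k1, k2.trans inter_subset_left, k3⟩

/-- `D` occupies, near `z` and off `Z`, either everything or nothing. -/
def Flat {X : Type*} [TopologicalSpace X] (Z D : Set X) (z : X) : Prop :=
  (∀ᶠ y in 𝓝 z, y ∉ Z → y ∈ D) ∨ (∀ᶠ y in 𝓝 z, y ∉ Z → y ∉ D)

/-- `D` is locally constant on `s`. -/
def LocConst {X : Type*} [TopologicalSpace X] (D s : Set X) : Prop :=
  ∀ y ∈ s, ∀ᶠ y' in 𝓝 y, (y' ∈ D ↔ y ∈ D)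

open Classical in
/-- Integer-valued indicator function. -/
def ind {X : Type*} (D : Set X) (y : X) : ℤ := if y ∈ D then 1 else 0

lemma ind_locConst {X : Type*} [TopologicalSpace X] {D s : Set X} (h : LocConst D s) :
    ∀ y ∈ s, ∀ᶠ y' in 𝓝 y, ind D y' = ind D y := by
  intro y hy
  filter_upwards [h y hy] with v hv
  by_cases hyD : y ∈ D
  · simp [ind, hv.2 hyD, hyD]
  · simp [ind, hv, hyD]

lemma flat_of_ind {X : Type*} [TopologicalSpace X] {Z D : Set X} {z : X} {c : ℤ}
    (h : ∀ᶠ y in 𝓝 z, y ∉ Z → ind D y = c) : Flat Z D z := by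
  by_cases hc : c = 1
  · left
    filter_upwards [h] with y hy hyZ
    have := hy hyZ
    by_contra hD
    simp [ind, hD] at this
    omega
  · right
    filter_upwards [h] with y hy hyZ hD
    have := hy hyZ
    simp [ind, hD] at this
    omega

lemma Flat.ind {X : Type*} [TopologicalSpace X] {Z D : Set X} {z : X} (h : Flat Z D z) :
    ∃ c : ℤ, ∀ᶠ y in 𝓝 z, y ∉ Z → ind D y = c := by
  rcases h with h | h
  · refine ⟨1, ?_⟩
    filter_upwards [h] with y hy hyZ
    simp [SurfDisc.ind, hy hyZ]
  · refine ⟨0, ?_⟩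
    filter_upwards [h] with y hy hyZ
    simp [SurfDisc.ind, hy hyZ]

/-- If the exponent of `index_form` vanishes, the function is constant near each interior point. -/
lemma const_of_index_zero {a : ℝ → ℂ} {g L : ℂ → ℂ} {O' : Set ℂ} {f : ℂ → ℤ}
    (hO' : IsOpen O') (hO'e : ∀ y ∈ O', y ≠ a 0 ∧ y ≠ a 1) (hL : ContinuousOn L {a 0, a 1}ᶜ)
    (h1 : ∀ y ∈ O', y ∉ a '' Icc 0 1 → 2 * Real.pi * Complex.I * f y = (0:ℤ) * g y + L y)
    (h2 : ∀ y ∈ O', Complex.exp (L y) * ((y - a 1) / (y - a 0)) ^ (0:ℤ) = 1)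
    {z : ℂ} (hz : z ∈ O') : ∃ c : ℤ, ∀ᶠ y in 𝓝 z, y ∉ a '' Icc 0 1 → f y = c := by
  obtain ⟨ε, hε, hb⟩ := Metric.isOpen_iff.1 hO' z hz
  have hE : ∀ y ∈ Metric.ball z ε, Complex.exp (L y) = 1 := by
    intro y hy
    simpa using h2 y (hb hy)
  have hLb : ContinuousOn L (Metric.ball z ε) := hL.mono (fun y hy => by simpa using hO'e y (hb hy))
  obtain ⟨c, hc⟩ := Complex.exp_eq_one_iff.1 (hE z (Metric.mem_ball_self hε))
  refine ⟨c, ?_⟩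
  filter_upwards [Metric.ball_mem_nhds z hε] with y hy hyK
  have e1 := const_of_exp (convex_ball z ε).isPreconnected hLb hE hy (Metric.mem_ball_self hε)
  have e2 := h1 y (hb hy) hyK
  rw [e1, hc] at e2
  have h3 : (2 * Real.pi * Complex.I : ℂ) ≠ 0 := by simp [Real.pi_ne_zero]
  have : (f y : ℂ) = c := by
    apply mul_left_cancel₀ h3
    rw [e2]; push_cast; ring
  exact_mod_cast this

/-- If the exponent of `index_form` does not vanish, the function is constant off the arc near no
interior point of the arc. -/
lemma not_const_of_index_ne {a : ℝ → ℂ} (ha : IsArcMap a) {g L : ℂ → ℂ} {O' : Set ℂ} {f : ℂ → ℤ}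
    (hg : ContinuousOn g (a '' Icc 0 1)ᶜ)
    (hexp : ∀ y ∉ a '' Icc 0 1, Complex.exp (g y) = (y - a 1) / (y - a 0)) {n : ℤ} (hn : n ≠ 0)
    (hO' : IsOpen O') (hO'e : ∀ y ∈ O', y ≠ a 0 ∧ y ≠ a 1) (hL : ContinuousOn L {a 0, a 1}ᶜ)
    (h1 : ∀ y ∈ O', y ∉ a '' Icc 0 1 → 2 * Real.pi * Complex.I * f y = n * g y + L y)
    (h2 : ∀ y ∈ O', Complex.exp (L y) * ((y - a 1) / (y - a 0)) ^ n = 1)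
    {s : ℝ} (hs : s ∈ Ioo (0:ℝ) 1) (hsO : a s ∈ O') {c : ℤ} :
    ¬ ∀ᶠ y in 𝓝 (a s), y ∉ a '' Icc 0 1 → f y = c := by
  intro hev
  obtain ⟨B, hB, hBo, hzB⟩ := mem_nhds_iff.1 (inter_mem hev (hO'.mem_nhds hsO))
  have hn' : (n : ℂ) ≠ 0 := by exact_mod_cast hn
  let gs : ℂ → ℂ := fun y => (2 * Real.pi * Complex.I * c - L y) / n
  have hgs : ContinuousOn gs B := by
    have : ContinuousOn L B := hL.mono (fun y hy => by simpa using hO'e y (hB hy).2)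
    exact (continuousOn_const.sub this).div_const _
  have hpow : ∀ y ∈ B, Complex.exp (gs y) ^ n = ((y - a 1) / (y - a 0)) ^ n := by
    intro y hy
    rw [← Complex.exp_int_mul]
    have e : (n:ℂ) * gs y = c * (2 * Real.pi * Complex.I) - L y := by
      simp only [gs]; field_simp
    have e2 := h2 y (hB hy).2
    rw [e, Complex.exp_sub, Complex.exp_int_mul_two_pi_mul_I]
    rw [div_eq_iff (Complex.exp_ne_zero _), mul_comm]
    exact e2.symm
  have hpow' : ∀ y ∈ B, Complex.exp (gs y) ^ n.natAbs = ((y - a 1) / (y - a 0)) ^ n.natAbs := by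
    intro y hy
    have := hpow y hy
    rcases Int.natAbs_eq n with h | h
    · rw [h] at this
      simpa only [zpow_natCast] using this
    · rw [h] at this
      simpa only [zpow_neg, zpow_natCast, inv_inj] using this
  refine no_ext ha hg hexp hs hBo hzB (n := n.natAbs) (by simpa using hn)
    (S := fun y => Complex.exp (gs y / 2)) ?_ ?_ ?_
  · exact (hgs.div_const _).cexp
  · intro y hy _ _
    rw [← hpow' y hy, ← Complex.exp_nat_mul, ← Complex.exp_nat_mul]
    congr 1
    push_cast; ring
  · intro y hy hyK
    have e1 := h1 y (hB hy).2 hyK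
    rw [(hB hy).1 hyK] at e1
    have : gs y = g y := by
      simp only [gs]
      rw [e1]; field_simp; ring
    simp only [this]

/-- Flatness is all or nothing along the interior of an arc. -/
lemma flat_dichotomy {a : ℝ → ℂ} (ha : IsArcMap a) {O : Set ℂ} (hO : IsOpen O)
    (hKO : a '' Ioo 0 1 ⊆ O) (h0 : a 0 ∉ O) (h1 : a 1 ∉ O) {D : Set ℂ}
    (hD : LocConst D (O \ a '' Icc 0 1)) {s t : ℝ} (hs : s ∈ Ioo (0:ℝ) 1) (ht : t ∈ Ioo (0:ℝ) 1)
    (hf : Flat (a '' Icc 0 1) D (a s)) : Flat (a '' Icc 0 1) D (a t) := by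
  obtain ⟨g, hg, hexp⟩ := exists_log_sub ha.cont le_rfl zero_le_one le_rfl
  obtain ⟨n, L, O', k1, k2, k3, k4, k5, k6⟩ := index_form ha hg hexp hO hKO h0 h1
    (f := ind D) (fun y hy hyK => ind_locConst hD y ⟨hy, hyK⟩)
  have hO'e : ∀ y ∈ O', y ≠ a 0 ∧ y ≠ a 1 := by
    intro y hy
    exact ⟨fun h => h0 (h ▸ k2 hy), fun h => h1 (h ▸ k2 hy)⟩
  by_cases hn : n = 0
  · subst hn
    obtain ⟨c, hc⟩ := const_of_index_zero k1 hO'e k4 k5 k6 (k3 ⟨t, ht, rfl⟩)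
    exact flat_of_ind hc
  · obtain ⟨c, hc⟩ := hf.ind
    exact absurd hc (not_const_of_index_ne ha hg hexp hn k1 hO'e k4 k5 k6 hs (k3 ⟨s, hs, rfl⟩))

/-- Two sets that are both non-flat along the arc differ by a flat one. -/
lemma flat_symmDiff {a : ℝ → ℂ} (ha : IsArcMap a) {O : Set ℂ} (hO : IsOpen O)
    (hKO : a '' Ioo 0 1 ⊆ O) (h0 : a 0 ∉ O) (h1 : a 1 ∉ O) {D E : Set ℂ}
    (hD : LocConst D (O \ a '' Icc 0 1)) (hE : LocConst E (O \ a '' Icc 0 1)) {s t : ℝ}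
    (hs : s ∈ Ioo (0:ℝ) 1) (ht : t ∈ Ioo (0:ℝ) 1)
    (hfD : ¬ Flat (a '' Icc 0 1) D (a s)) (hfE : ¬ Flat (a '' Icc 0 1) E (a s)) :
    Flat (a '' Icc 0 1) (symmDiff D E) (a t) := by
  obtain ⟨g, hg, hexp⟩ := exists_log_sub ha.cont le_rfl zero_le_one le_rfl
  obtain ⟨n, L, O', k1, k2, k3, k4, k5, k6⟩ := index_form ha hg hexp hO hKO h0 h1
    (f := ind D) (fun y hy hyK => ind_locConst hD y ⟨hy, hyK⟩)
  obtain ⟨n', L', O'', k1', k2', k3', k4', k5', k6'⟩ := index_form ha hg hexp hO hKO h0 h1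
    (f := ind E) (fun y hy hyK => ind_locConst hE y ⟨hy, hyK⟩)
  have hO'e : ∀ y ∈ O', y ≠ a 0 ∧ y ≠ a 1 := by
    intro y hy
    exact ⟨fun h => h0 (h ▸ k2 hy), fun h => h1 (h ▸ k2 hy)⟩
  have hO''e : ∀ y ∈ O'', y ≠ a 0 ∧ y ≠ a 1 := by
    intro y hy
    exact ⟨fun h => h0 (h ▸ k2' hy), fun h => h1 (h ▸ k2' hy)⟩
  have hn : n ≠ 0 := by
    rintro rfl
    obtain ⟨c, hc⟩ := const_of_index_zero k1 hO'e k4 k5 k6 (k3 ⟨s, hs, rfl⟩)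
    exact hfD (flat_of_ind hc)
  have hn' : n' ≠ 0 := by
    rintro rfl
    obtain ⟨c, hc⟩ := const_of_index_zero k1' hO''e k4' k5' k6' (k3' ⟨s, hs, rfl⟩)
    exact hfE (flat_of_ind hc)
  -- the combination `n' * ind D - n * ind E` has exponent zero
  obtain ⟨c, hc⟩ := const_of_index_zero (a := a) (g := g) (f := fun y => n' * ind D y - n * ind E y)
    (L := fun y => n' * L y - n * L' y)
    (k1.inter k1') (fun y hy => hO'e y hy.1) ((continuousOn_const.mul k4).sub
      (continuousOn_const.mul k4')) (fun y hy hyK => by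
        have e1 := k5 y hy.1 hyK
        have e2 := k5' y hy.2 hyK
        push_cast
        linear_combination (n':ℂ) * e1 - (n:ℂ) * e2) (fun y hy => by
        have e1 := k6 y hy.1
        have e2 := k6' y hy.2
        obtain ⟨y0, y1⟩ := hO'e y hy.1
        have hm : (y - a 1) / (y - a 0) ≠ 0 := div_ne_zero (sub_ne_zero.2 y1) (sub_ne_zero.2 y0)
        have f1 : Complex.exp (L y) = (((y - a 1) / (y - a 0)) ^ n)⁻¹ := eq_inv_of_mul_eq_one_left e1
        have f2 : Complex.exp (L' y) = (((y - a 1) / (y - a 0)) ^ n')⁻¹ :=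
          eq_inv_of_mul_eq_one_left e2
        rw [Complex.exp_sub, Complex.exp_int_mul, Complex.exp_int_mul, f1, f2, zpow_zero, mul_one,
          inv_zpow, inv_zpow, ← zpow_mul, ← zpow_mul, mul_comm n n']
        exact div_self (inv_ne_zero (zpow_ne_zero _ hm)))
    (z := a t) ⟨k3 ⟨t, ht, rfl⟩, k3' ⟨t, ht, rfl⟩⟩
  by_cases hcase : c = 0 ∨ c = n' - n
  · right
    filter_upwards [hc] with y hy hyK
    have := hy hyK
    rw [mem_symmDiff]
    by_cases hyD : y ∈ D <;> by_cases hyE : y ∈ E <;> simp [ind, hyD, hyE] at this ⊢ <;> omega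
  · left
    filter_upwards [hc] with y hy hyK
    have := hy hyK
    rw [mem_symmDiff]
    by_cases hyD : y ∈ D <;> by_cases hyE : y ∈ E <;> simp [ind, hyD, hyE] at this ⊢ <;> omega

/-- A local side: near an interior point of an arc there is a set which is locally constant off
the arc but not flat. -/
lemma exists_local_side {a : ℝ → ℂ} (ha : IsArcMap a) {s : ℝ} (hs : s ∈ Ioo (0:ℝ) 1) :
    ∃ N D : Set ℂ, IsOpen N ∧ a s ∈ N ∧ LocConst D (N \ a '' Icc 0 1) ∧
      ¬ Flat (a '' Icc 0 1) D (a s) := by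
  obtain ⟨g, hg, hexp⟩ := exists_log_sub ha.cont le_rfl zero_le_one le_rfl
  have hK := ha.isCompact.isClosed
  have sIcc : s ∈ Icc (0:ℝ) 1 := ⟨hs.1.le, hs.2.le⟩
  have n0 : a s ≠ a 0 := fun h => hs.1.ne' (ha.inj sIcc (by simp) h)
  have n1 : a s ≠ a 1 := fun h => hs.2.ne (ha.inj sIcc (by simp) h)
  obtain ⟨B, μ, hB, hzB, hBs, hμ, hμexp⟩ := exists_local_log (Y := ℂ) (z := a s)
    (m := fun y => (y - a 1) / (y - a 0)) (s := {a 0}ᶜ) (isOpen_ne.mem_nhds n0)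
    (ContinuousOn.div (by fun_prop) (by fun_prop) (fun y hy => sub_ne_zero.2 hy))
    (div_ne_zero (sub_ne_zero.2 n1) (sub_ne_zero.2 n0))
  let S : ℂ → ℂ := fun y => Complex.exp (g y / 2)
  let T : ℂ → ℂ := fun y => Complex.exp (μ y / 2)
  have hsq : ∀ y ∈ B, y ∉ a '' Icc 0 1 → S y = T y ∨ S y = - T y := by
    intro y hy hyK
    rw [← sq_eq_sq_iff_eq_or_eq_neg]
    simp only [S, T, ← Complex.exp_nat_mul]
    have e1 : ((2:ℕ):ℂ) * (g y / 2) = g y := by push_cast; ring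
    have e2 : ((2:ℕ):ℂ) * (μ y / 2) = μ y := by push_cast; ring
    rw [e1, e2, hexp y hyK, hμexp y hy]
  have hT0 : ∀ y, T y ≠ 0 := fun y => Complex.exp_ne_zero _
  have hSc : ContinuousOn S (B \ a '' Icc 0 1) :=
    ((hg.mono fun y hy => hy.2).div_const _).cexp
  have hTc : ContinuousOn T B := (hμ.div_const _).cexp
  have hop : IsOpen (B \ a '' Icc 0 1) := hB.sdiff hK
  refine ⟨B, {y | S y = T y}, hB, hzB, ?_, ?_⟩
  · intro y hy
    have c1 := hSc.continuousAt (hop.mem_nhds hy)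
    have c2 := hTc.continuousAt (hB.mem_nhds hy.1)
    by_cases h : S y = T y
    · have hne : S y ≠ - T y := by
        rw [h]; intro h'; exact hT0 y (by linear_combination h' / 2)
      have : ∀ᶠ v in 𝓝 y, S v ≠ - T v := (ContinuousAt.ne_iff_eventually_ne (hf := c1) (hg := c2.neg)).1 hne
      filter_upwards [this, hop.mem_nhds hy] with v hv hvB
      simpa [h] using (hsq v hvB.1 hvB.2).resolve_right hv
    · have : ∀ᶠ v in 𝓝 y, S v ≠ T v := (ContinuousAt.ne_iff_eventually_ne (hf := c1) (hg := c2)).1 h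
      filter_upwards [this] with v hv
      simp [h, hv]
  · have key : ∀ σ : ℂ, σ ^ 2 = 1 → ¬ ∀ᶠ y in 𝓝 (a s), y ∉ a '' Icc 0 1 → S y = σ * T y := by
      intro σ hσ hev
      obtain ⟨B', hB', hBo', hzB'⟩ := mem_nhds_iff.1 (inter_mem hev (hB.mem_nhds hzB))
      refine no_ext ha hg hexp hs hBo' hzB' (n := 1) one_ne_zero
        (S := fun y => σ * T y) (continuousOn_const.mul (hTc.mono fun y hy => (hB' hy).2)) ?_ ?_
      · intro y hy _ _
        simp only [mul_one, pow_one, mul_pow, hσ, one_mul, T]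
        rw [← hμexp y (hB' hy).2, ← Complex.exp_nat_mul]
        congr 1
        push_cast; ring
      · intro y hy hyK
        exact ((hB' hy).1 hyK).symm
    rintro (h | h)
    · refine key 1 (by norm_num) ?_
      filter_upwards [h] with y hy hyK
      rw [one_mul]; exact hy hyK
    · refine key (-1) (by norm_num) ?_
      filter_upwards [h, hB.mem_nhds hzB] with y hy hyB hyK
      rw [neg_one_mul]
      exact (hsq y hyB hyK).resolve_left (hy hyK)

end SurfDisc

namespace SurfDisc

variable {X : Type*} [TopologicalSpace X]

/-! ### Local sides of an arc in a surface -/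

lemma Flat.congr_nhds {Z Z' D D' : Set X} {z : X} (h : Flat Z D z)
    (hZ : ∀ᶠ y in 𝓝 z, (y ∈ Z ↔ y ∈ Z')) (hD : ∀ᶠ y in 𝓝 z, y ∉ Z → (y ∈ D ↔ y ∈ D')) :
    Flat Z' D' z := by
  rcases h with h | h
  · left
    filter_upwards [h, hZ, hD] with y h1 h2 h3 h4
    have := fun h => h4 (h2.1 h)
    exact (h3 this).1 (h1 this)
  · right
    filter_upwards [h, hZ, hD] with y h1 h2 h3 h4 h5
    have := fun h => h4 (h2.1 h)
    exact (h1 this) ((h3 this).2 h5)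

lemma flat_preimage {φ : ℂ → X} (hφ : IsOpenEmbedding φ) {Z D : Set X} {w : ℂ} :
    Flat (φ ⁻¹' Z) (φ ⁻¹' D) w ↔ Flat Z D (φ w) := by
  unfold Flat
  rw [← hφ.map_nhds_eq]
  simp only [eventually_map, mem_preimage]

lemma LocConst.preimage {Y : Type*} [TopologicalSpace Y] {φ : Y → X} (hφ : Continuous φ)
    {D s : Set X} (h : LocConst D s) : LocConst (φ ⁻¹' D) (φ ⁻¹' s) := by
  intro y hy
  exact hφ.continuousAt.eventually (h (φ y) hy)

lemma LocConst.mono {D s s' : Set X} (h : LocConst D s) (hs : s' ⊆ s) : LocConst D s' :=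
  fun y hy => h y (hs hy)

lemma LocConst.symmDiff {D E s : Set X} (hD : LocConst D s) (hE : LocConst E s) :
    LocConst (symmDiff D E) s := by
  intro y hy
  filter_upwards [hD y hy, hE y hy] with v h1 h2
  simp only [mem_symmDiff, h1, h2]

lemma LocConst.flat {Z D s : Set X} (hD : LocConst D s) {y : X} (hy : y ∈ s) : Flat Z D y := by
  by_cases h : y ∈ D
  · left
    filter_upwards [hD y hy] with v hv _ using hv.2 h
  · right
    filter_upwards [hD y hy] with v hv _ using fun hvD => h (hv.1 hvD)

/-- Lift of an arc through a chart. -/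
lemma exists_arc_lift {φ : ℂ → X} (hφ : IsOpenEmbedding φ) {a : ℝ → X} (ha : IsArcMap a)
    (hr : a '' Icc 0 1 ⊆ range φ) : ∃ b : ℝ → ℂ, IsArcMap b ∧ ∀ t ∈ Icc (0:ℝ) 1, φ (b t) = a t := by
  have : ∀ t, ∃ w, t ∈ Icc (0:ℝ) 1 → φ w = a t := by
    intro t
    by_cases ht : t ∈ Icc (0:ℝ) 1
    · obtain ⟨w, hw⟩ := hr ⟨t, ht, rfl⟩
      exact ⟨w, fun _ => hw⟩
    · exact ⟨0, fun h => absurd h ht⟩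
  choose b hb using this
  refine ⟨b, ⟨?_, ?_⟩, hb⟩
  · have h1 : ContinuousOn (φ ∘ b) (Icc 0 1) := ha.cont.congr (fun t ht => hb t ht)
    exact hφ.isEmbedding.isInducing.continuousOn_iff.2 h1
  · intro s hs t ht h
    exact ha.inj hs ht (by rw [← hb s hs, ← hb t ht, h])

/-- `O` is an open set which meets `J` in an open arc that lies, with its end points, in a
chart, the end points being outside `O`. -/
def ArcNbhd (J O : Set X) : Prop :=
  ∃ (φ : ℂ → X) (a : ℝ → X), IsOpenEmbedding φ ∧ IsArcMap a ∧ a '' Icc 0 1 ⊆ range φ ∧ IsOpen O ∧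
    O ∩ J = a '' Ioo 0 1 ∧ a 0 ∉ O ∧ a 1 ∉ O

lemma ArcNbhd.isOpen {J O : Set X} (h : ArcNbhd J O) : IsOpen O := by
  obtain ⟨_, _, _, _, _, h, _⟩ := h
  exact h

/-- Data of an arc neighbourhood pulled back to the plane. -/
lemma ArcNbhd.pull {J O : Set X} (h : ArcNbhd J O) :
    ∃ (φ : ℂ → X) (b : ℝ → ℂ), IsOpenEmbedding φ ∧ IsArcMap b ∧ IsOpen (φ ⁻¹' O) ∧
      b '' Ioo 0 1 ⊆ φ ⁻¹' O ∧ b 0 ∉ φ ⁻¹' O ∧ b 1 ∉ φ ⁻¹' O ∧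
      (∀ z ∈ O ∩ J, ∃ s ∈ Ioo (0:ℝ) 1, φ (b s) = z) ∧
      (∀ y ∈ φ ⁻¹' O, y ∈ b '' Icc 0 1 ↔ φ y ∈ J) := by
  obtain ⟨φ, a, hφ, ha, hr, hO, hOJ, h0, h1⟩ := h
  obtain ⟨b, hb, hba⟩ := exists_arc_lift hφ ha hr
  have hsub : Ioo (0:ℝ) 1 ⊆ Icc 0 1 := Ioo_subset_Icc_self
  refine ⟨φ, b, hφ, hb, hO.preimage hφ.continuous, ?_, ?_, ?_, ?_, ?_⟩
  · rintro _ ⟨t, ht, rfl⟩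
    have : a t ∈ O ∩ J := by rw [hOJ]; exact ⟨t, ht, rfl⟩
    rw [mem_preimage, hba t (hsub ht)]
    exact this.1
  · rw [mem_preimage, hba 0 (by simp)]; exact h0
  · rw [mem_preimage, hba 1 (by simp)]; exact h1
  · intro z hz
    rw [hOJ] at hz
    obtain ⟨s, hs, rfl⟩ := hz
    exact ⟨s, hs, hba s (hsub hs)⟩
  · intro y hy
    constructor
    · rintro ⟨t, ht, rfl⟩
      have : b t ∈ b '' Ioo 0 1 := by
        refine IsArcMap.mem_Ioo ⟨t, ht, rfl⟩ ?_ ?_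
        · intro h
          rw [h, mem_preimage, hba 0 (by simp)] at hy
          exact h0 hy
        · intro h
          rw [h, mem_preimage, hba 1 (by simp)] at hy
          exact h1 hy
      rw [hb.mem_iff ht hsub] at this
      have h2 : a t ∈ O ∩ J := by rw [hOJ]; exact ⟨t, this, rfl⟩
      rw [hba t ht]
      exact h2.2
    · intro hyJ
      have h2 : φ y ∈ O ∩ J := ⟨hy, hyJ⟩
      rw [hOJ] at h2
      obtain ⟨t, ht, h3⟩ := h2
      rw [← hba t (hsub ht)] at h3
      exact ⟨t, hsub ht, hφ.injective h3⟩

lemma pull_flat {φ : ℂ → X} (hφ : IsOpenEmbedding φ) {J O D : Set X} {K : Set ℂ}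
    (hO : IsOpen (φ ⁻¹' O)) (hK : ∀ y ∈ φ ⁻¹' O, y ∈ K ↔ φ y ∈ J) {w : ℂ} (hw : w ∈ φ ⁻¹' O) :
    Flat K (φ ⁻¹' D) w ↔ Flat J D (φ w) := by
  have h : ∀ᶠ y in 𝓝 w, (y ∈ K ↔ y ∈ φ ⁻¹' J) := by
    filter_upwards [hO.mem_nhds hw] with y hy using hK y hy
  rw [← flat_preimage hφ]
  constructor
  · intro h'
    exact h'.congr_nhds h (Eventually.of_forall fun _ _ => Iff.rfl)
  · intro h'
    exact h'.congr_nhds (h.mono fun y hy => hy.symm) (Eventually.of_forall fun _ _ => Iff.rfl)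

lemma pull_locConst {φ : ℂ → X} (hφ : Continuous φ) {J O D : Set X} {K : Set ℂ}
    (hK : ∀ y ∈ φ ⁻¹' O, y ∈ K ↔ φ y ∈ J) (hD : LocConst D (O \ J)) :
    LocConst (φ ⁻¹' D) (φ ⁻¹' O \ K) :=
  (hD.preimage hφ).mono fun y hy => ⟨hy.1, fun h => hy.2 ((hK y hy.1).2 h)⟩

lemma ArcNbhd.flat_all {J O D : Set X} (h : ArcNbhd J O) (hD : LocConst D (O \ J)) {z w : X}
    (hz : z ∈ O ∩ J) (hw : w ∈ O ∩ J) (hf : Flat J D z) : Flat J D w := by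
  obtain ⟨φ, b, hφ, hb, hO, hsub, h0, h1, hs, hK⟩ := h.pull
  obtain ⟨s, hs1, rfl⟩ := hs z hz
  obtain ⟨t, ht1, rfl⟩ := hs w hw
  rw [← pull_flat hφ hO hK hz.1] at hf
  rw [← pull_flat hφ hO hK hw.1]
  exact flat_dichotomy hb hO hsub h0 h1 (pull_locConst hφ.continuous hK hD) hs1 ht1 hf

lemma ArcNbhd.flat_symmDiff {J O D E : Set X} (h : ArcNbhd J O) (hD : LocConst D (O \ J))
    (hE : LocConst E (O \ J)) {z w : X}
    (hz : z ∈ O ∩ J) (hw : w ∈ O ∩ J) (hf : ¬ Flat J D z) (hf' : ¬ Flat J E z) :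
    Flat J (symmDiff D E) w := by
  obtain ⟨φ, b, hφ, hb, hO, hsub, h0, h1, hs, hK⟩ := h.pull
  obtain ⟨s, hs1, rfl⟩ := hs z hz
  obtain ⟨t, ht1, rfl⟩ := hs w hw
  rw [← pull_flat hφ hO hK hz.1] at hf hf'
  rw [← pull_flat hφ hO hK hw.1]
  exact SurfDisc.flat_symmDiff hb hO hsub h0 h1 (pull_locConst hφ.continuous hK hD)
    (pull_locConst hφ.continuous hK hE) hs1 ht1 hf hf'

lemma ArcNbhd.shrink [T2Space X] {J O N : Set X} (h : ArcNbhd J O) {z : X} (hz : z ∈ O ∩ J)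
    (hN : N ∈ 𝓝 z) : ∃ O' ⊆ O ∩ N, z ∈ O' ∧ ArcNbhd J O' := by
  obtain ⟨φ, a, hφ, ha, hr, hO, hOJ, h0, h1⟩ := h
  have hz' := hz
  rw [hOJ] at hz'
  obtain ⟨s, hs, rfl⟩ := hz'
  obtain ⟨N', hN', hN'o, hzN'⟩ := mem_nhds_iff.1 hN
  have hca : ContinuousAt a s := ha.cont.continuousAt (Icc_mem_nhds hs.1 hs.2)
  obtain ⟨ε, hε, hb⟩ := Metric.mem_nhds_iff.1 (inter_mem (hca (hN'o.mem_nhds hzN'))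
    (Ioo_mem_nhds hs.1 hs.2))
  have hb' : ∀ u ∈ Icc (s - ε / 2) (s + ε / 2), a u ∈ N' ∧ u ∈ Ioo (0:ℝ) 1 := by
    intro u hu
    apply hb
    rw [Metric.mem_ball, Real.dist_eq, abs_lt]
    constructor <;> linarith [hu.1, hu.2]
  have hl := (hb' (s - ε / 2) ⟨le_rfl, by linarith⟩).2
  have hu := (hb' (s + ε / 2) ⟨by linarith, le_rfl⟩).2
  set s' := s - ε / 2
  set t' := s + ε / 2
  have hst : s' < t' := by simp only [s', t']; linarith
  have hss' : s' < s := by simp only [s']; linarith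
  have hst' : s < t' := by simp only [t']; linarith
  have cl1 := (ha.isCompact_sub le_rfl hl.2.le).isClosed
  have cl2 := (ha.isCompact_sub hu.1.le le_rfl).isClosed
  have m1 : Icc 0 s' ⊆ Icc (0:ℝ) 1 := Icc_subset_Icc le_rfl hl.2.le
  have m2 : Icc t' 1 ⊆ Icc (0:ℝ) 1 := Icc_subset_Icc hu.1.le le_rfl
  have sIcc : s ∈ Icc (0:ℝ) 1 := ⟨hs.1.le, hs.2.le⟩
  refine ⟨(O ∩ N') \ (a '' Icc 0 s' ∪ a '' Icc t' 1), fun y hy => ⟨hy.1.1, hN' hy.1.2⟩,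
    ⟨⟨hz.1, hzN'⟩, ?_⟩, φ, fun u => a (s' + u * (t' - s')), hφ, ha.sub hl.1.le hst hu.2.le, ?_,
    (hO.inter hN'o).sdiff (cl1.union cl2), ?_, ?_, ?_⟩
  · rw [mem_union, ha.mem_iff sIcc m1, ha.mem_iff sIcc m2]
    rintro (h | h)
    · linarith [h.2]
    · linarith [h.1]
  · rw [affine_image a hst.le]
    exact (image_mono (Icc_subset_Icc hl.1.le hu.2.le)).trans hr
  · rw [affine_image_Ioo a hst]
    ext y
    constructor
    · rintro ⟨⟨⟨h1, h2⟩, h3⟩, h4⟩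
      have : y ∈ O ∩ J := ⟨h1, h4⟩
      rw [hOJ] at this
      obtain ⟨u, hu, rfl⟩ := this
      rw [mem_union, not_or] at h3
      refine ⟨u, ⟨?_, ?_⟩, rfl⟩
      · by_contra h
        exact h3.1 ⟨u, ⟨hu.1.le, not_lt.1 h⟩, rfl⟩
      · by_contra h
        exact h3.2 ⟨u, ⟨not_lt.1 h, hu.2.le⟩, rfl⟩
    · rintro ⟨u, hu, rfl⟩
      have hu2 := hb' u ⟨hu.1.le, hu.2.le⟩
      have uIcc : u ∈ Icc (0:ℝ) 1 := ⟨hu2.2.1.le, hu2.2.2.le⟩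
      have : a u ∈ O ∩ J := by rw [hOJ]; exact ⟨u, hu2.2, rfl⟩
      refine ⟨⟨⟨this.1, hu2.1⟩, ?_⟩, this.2⟩
      rw [mem_union, ha.mem_iff uIcc m1, ha.mem_iff uIcc m2]
      rintro (h | h)
      · linarith [h.2, hu.1]
      · linarith [h.1, hu.2]
  · intro h
    exact h.2 (Or.inl ⟨s', ⟨hl.1.le, le_rfl⟩, by simp⟩)
  · intro h
    exact h.2 (Or.inr ⟨t', ⟨le_rfl, hu.2.le⟩, by simp⟩)

/-- Local sides: near each of its points, `J` has a set which is locally constant off `J` and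
which is flat at no point of `J`. -/
lemma ArcNbhd.exists_side [T2Space X] {J O : Set X} (h : ArcNbhd J O) {z : X} (hz : z ∈ O ∩ J) :
    ∃ O' D : Set X, z ∈ O' ∧ O' ⊆ O ∧ ArcNbhd J O' ∧ LocConst D (O' \ J) ∧
      ∀ w ∈ O' ∩ J, ¬ Flat J D w := by
  obtain ⟨φ, b, hφ, hb, hO, hsub, h0, h1, hs, hK⟩ := h.pull
  obtain ⟨s, hs1, rfl⟩ := hs z hz
  obtain ⟨N, D, hN, hzN, hD, hfl⟩ := exists_local_side hb hs1
  have hpre : φ ⁻¹' (φ '' D) = D := preimage_image_eq D hφ.injective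
  obtain ⟨O', hO'1, hO'2, hO'3⟩ := h.shrink hz ((hφ.isOpenMap N hN).mem_nhds ⟨_, hzN, rfl⟩)
  have hLC : LocConst (φ '' D) (O' \ J) := by
    rintro y ⟨hy, hyJ⟩
    obtain ⟨hyO, w, hw, rfl⟩ := hO'1 hy
    have hwK : w ∉ b '' Icc 0 1 := fun h => hyJ ((hK w hyO).1 h)
    rw [← hφ.map_nhds_eq, eventually_map]
    filter_upwards [hD w ⟨hw, hwK⟩] with v hv
    rw [hφ.injective.mem_set_image, hφ.injective.mem_set_image, hv]
  refine ⟨O', φ '' D, hO'2, fun y hy => (hO'1 hy).1, hO'3, hLC, fun w hw hf => ?_⟩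
  have := hO'3.flat_all hLC hw ⟨hO'2, hz.2⟩ hf
  rw [← pull_flat hφ hO hK hz.1, hpre] at this
  exact hfl this

/-- The sets that are locally open arcs: a closed set every point of which has arbitrarily small
arc neighbourhoods. -/
def LocArc (J : Set X) : Prop := ∀ z ∈ J, ∃ O, z ∈ O ∧ ArcNbhd J O

lemma LocArc.small [T2Space X] {J : Set X} (h : LocArc J) {z : X} (hz : z ∈ J) {N : Set X}
    (hN : N ∈ 𝓝 z) : ∃ O ⊆ N, z ∈ O ∧ ArcNbhd J O := by
  obtain ⟨O, hzO, hO⟩ := h z hz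
  obtain ⟨O', h1, h2, h3⟩ := hO.shrink ⟨hzO, hz⟩ hN
  exact ⟨O', h1.trans inter_subset_right, h2, h3⟩

/-- `J` has dense complement. -/
lemma LocArc.dense [T2Space X] {J : Set X} (h : LocArc J) (z : X) : z ∈ closure Jᶜ := by
  by_contra hz
  rw [mem_closure_iff_frequently, not_frequently] at hz
  have hzJ : z ∈ J := by
    by_contra h
    exact hz.self_of_nhds h
  obtain ⟨O, hzO, hO⟩ := h z hzJ
  obtain ⟨O', D, h1, -, -, -, h2⟩ := hO.exists_side ⟨hzO, hzJ⟩
  exact h2 z ⟨h1, hzJ⟩ (Or.inl (hz.mono fun y hy h => absurd h hy))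

end SurfDisc

namespace SurfDisc

/-! ### Global sides in a simply connected surface -/

/-- A surface: a Hausdorff space every point of which is the centre of a chart `ℂ → X`. -/
class Surf (X : Type*) [TopologicalSpace X] : Prop extends T2Space X where
  exists_chart : ∀ x : X, ∃ φ : ℂ → X, IsOpenEmbedding φ ∧ φ 0 = x

variable {X : Type*} [TopologicalSpace X]

instance Surf.locPathConnected [Surf X] : LocallyPathConnectedSpace X := by
  choose φ hφ h0 using Surf.exists_chart (X := X)
  refine LocallyPathConnectedSpace.of_bases (p := fun _ r => (0:ℝ) < r)
    (s := fun x r => φ x '' Metric.ball 0 r) (fun x => ?_) (fun x r hr => ?_)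
  · have := (Metric.nhds_basis_ball (x := (0:ℂ))).map (φ x)
    rwa [(hφ x).map_nhds_eq, h0] at this
  · exact ((convex_ball (0:ℂ) r).isPathConnected ⟨0, by simpa using hr⟩).image (hφ x).continuous

/-- The points near `y` off `J` belong to `E`. -/
def Ev (J E : Set X) (y : X) : Prop := ∀ᶠ z in 𝓝 y, z ∉ J → z ∈ E

lemma Ev.eventually {J E : Set X} {y : X} (h : Ev J E y) : ∀ᶠ z in 𝓝 y, Ev J E z :=
  eventually_eventually_nhds.2 h

lemma LocArc.not_ev [T2Space X] {J E : Set X} (hJ : LocArc J) {y : X} (h : Ev J E y) :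
    ¬ Ev J Eᶜ y := by
  intro h'
  obtain ⟨z, hz, h1, h2⟩ :=
    ((mem_closure_iff_frequently.1 (hJ.dense y)).and_eventually (h.and h')).exists
  exact h2 hz (h1 hz)

lemma LocArc.ev_congr [T2Space X] {J E : Set X} (hJ : LocArc J) {y : X} (h : Flat J E y) :
    ∀ᶠ z in 𝓝 y, (z ∉ J → (z ∈ E ↔ Ev J E y)) := by
  rcases h with h | h
  · filter_upwards [h] with z hz hzJ
    exact ⟨fun _ => h, fun _ => hz hzJ⟩
  · filter_upwards [h] with z hz hzJ
    exact ⟨fun h1 => absurd h1 (hz hzJ), fun h1 => absurd h (hJ.not_ev h1)⟩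

lemma LocArc.ev_locConst [T2Space X] {J E : Set X} (hJ : LocArc J) {y : X} (h : Flat J E y) :
    ∀ᶠ z in 𝓝 y, (Ev J E z ↔ Ev J E y) := by
  rcases h with h | h
  · filter_upwards [Ev.eventually h] with z hz
    exact ⟨fun _ => h, fun _ => hz⟩
  · filter_upwards [Ev.eventually (E := Eᶜ) h] with z hz
    exact ⟨fun h1 => absurd hz (hJ.not_ev h1), fun h1 => absurd h (hJ.not_ev h1)⟩

lemma LocArc.flat_symmDiff [T2Space X] {J D E N : Set X} (hJ : LocArc J) (hN : IsOpen N)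
    (hD : LocConst D (N \ J)) (hE : LocConst E (N \ J)) (hD' : ∀ w ∈ N ∩ J, ¬ Flat J D w)
    (hE' : ∀ w ∈ N ∩ J, ¬ Flat J E w) {y : X} (hy : y ∈ N) : Flat J (symmDiff D E) y := by
  by_cases hyJ : y ∈ J
  · obtain ⟨O, hON, hyO, hO⟩ := hJ.small hyJ (hN.mem_nhds hy)
    exact hO.flat_symmDiff (hD.mono (sdiff_subset_sdiff_left hON))
      (hE.mono (sdiff_subset_sdiff_left hON)) ⟨hyO, hyJ⟩ ⟨hyO, hyJ⟩ (hD' y ⟨hy, hyJ⟩)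
      (hE' y ⟨hy, hyJ⟩)
  · exact (hD.symmDiff hE).flat ⟨hy, hyJ⟩

lemma LocConst.compl {D s : Set X} (hD : LocConst D s) : LocConst Dᶜ s := by
  intro y hy
  filter_upwards [hD y hy] with z hz
  simp only [mem_compl_iff, hz]

lemma Flat.compl {Z D : Set X} {z : X} (h : Flat Z D z) : Flat Z Dᶜ z := by
  rcases h with h | h
  · right; filter_upwards [h] with y hy h1 h2 using h2 (hy h1)
  · left; exact h

lemma flat_compl {Z D : Set X} {z : X} : Flat Z Dᶜ z ↔ Flat Z D z :=
  ⟨fun h => by simpa using h.compl, Flat.compl⟩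

open Classical in
/-- In a simply connected surface a closed locally arc-like set `J` has a global side: a set
which is locally constant off `J` and changes across `J` at every point of `J`. -/
theorem LocArc.exists_global_side [Surf X] [SimplyConnectedSpace X] {J : Set X} (hJ : LocArc J)
    (hJc : IsClosed J) : ∃ D : Set X, LocConst D Jᶜ ∧ ∀ z ∈ J, ¬ Flat J D z := by
  have hloc : ∀ x : X, ∃ N D : Set X, IsOpen N ∧ x ∈ N ∧ LocConst D (N \ J) ∧
      ∀ w ∈ N ∩ J, ¬ Flat J D w := by
    intro x
    by_cases hx : x ∈ J
    · obtain ⟨O, hxO, hO⟩ := hJ x hx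
      obtain ⟨O', D, h1, h2, h3, h4, h5⟩ := hO.exists_side ⟨hxO, hx⟩
      exact ⟨O', D, h3.isOpen, h1, h4, h5⟩
    · refine ⟨Jᶜ, ∅, hJc.isOpen_compl, hx, fun y _ => by simp, fun w hw => absurd hw.2 hw.1⟩
  choose N D hNo hxN hD hDf using hloc
  have hflat : ∀ i j y, y ∈ N i ∩ N j → Flat J (symmDiff (D i) (D j)) y := by
    intro i j y hy
    exact hJ.flat_symmDiff ((hNo i).inter (hNo j))
      ((hD i).mono (sdiff_subset_sdiff_left inter_subset_left))
      ((hD j).mono (sdiff_subset_sdiff_left inter_subset_right))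
      (fun w hw => hDf i w ⟨hw.1.1, hw.2⟩) (fun w hw => hDf j w ⟨hw.1.2, hw.2⟩) hy
  let k : X → X → X → Bool := fun i j y => decide (Ev J (symmDiff (D i) (D j)) y)
  have hk : ∀ i j y, y ∈ N i ∩ N j →
      ∀ᶠ z in 𝓝 y, (z ∉ J → k i j y = xor (decide (z ∈ D i)) (decide (z ∈ D j))) := by
    intro i j y hy
    filter_upwards [hJ.ev_congr (hflat i j y hy)] with z hz hzJ
    have := hz hzJ
    have e : k i j y = decide (z ∈ symmDiff (D i) (D j)) := decide_eq_decide.2 this.symm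
    rw [e]
    by_cases h1 : z ∈ D i <;> by_cases h2 : z ∈ D j <;> simp [mem_symmDiff, h1, h2]
  have hnear : ∀ (y : X) (P : X → Prop), (∀ᶠ z in 𝓝 y, P z) → ∃ z, z ∉ J ∧ P z := by
    intro y P hP
    obtain ⟨z, h1, h2⟩ := ((mem_closure_iff_frequently.1 (hJ.dense y)).and_eventually hP).exists
    exact ⟨z, h1, h2⟩
  let Z : FiberBundleCore X X Bool :=
    { baseSet := N
      isOpen_baseSet := hNo
      indexAt := id
      mem_baseSet_at := hxN
      coordChange := fun i j y v => xor v (k i j y)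
      coordChange_self := by
        intro i y hy v
        obtain ⟨z, hz, h⟩ := hnear y _ (hk i i y ⟨hy, hy⟩)
        simp [h hz]
      continuousOn_coordChange := by
        intro i j
        have h1 : ContinuousOn (k i j) (N i ∩ N j) := by
          intro y hy
          apply ContinuousAt.continuousWithinAt
          rw [ContinuousAt, nhds_discrete Bool, tendsto_pure]
          filter_upwards [hJ.ev_locConst (hflat i j y hy)] with z hz
          simp only [k, hz]
        have h2 : Continuous (fun p : Bool × Bool => xor p.1 p.2) := continuous_of_discreteTopology
        exact h2.comp_continuousOn (continuousOn_snd.prodMk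
          (h1.comp continuousOn_fst fun p hp => hp.1))
      coordChange_comp := by
        intro i j l y hy v
        obtain ⟨z, hz, h1, h2, h3⟩ := hnear y _ ((hk i j y hy.1).and ((hk j l y ⟨hy.1.2, hy.2⟩).and
          (hk i l y ⟨hy.1.1, hy.2⟩)))
        rw [h1 hz, h2 hz, h3 hz]
        generalize decide (z ∈ D i) = p, decide (z ∈ D j) = q, decide (z ∈ D l) = r
        revert v p q r
        decide }
  have hcov : IsCoveringMap Z.proj :=
    IsFiberBundle.isCoveringMap fun x => ⟨Z.localTriv x, hxN x⟩
  obtain ⟨x₀⟩ : Nonempty X := inferInstance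
  obtain ⟨s, ⟨-, hs⟩, -⟩ := hcov.existsUnique_continuousMap_lifts (ContinuousMap.id X) x₀
    (⟨x₀, true⟩ : Z.TotalSpace) rfl
  have hs' : ∀ y, Z.proj (s y) = y := fun y => congrFun hs y
  let v : X → X → Bool := fun i y => (Z.localTriv i (s y)).2
  have hv : ∀ i y, y ∈ N i → ContinuousAt (v i) y := by
    intro i y hy
    have hsrc : s y ∈ (Z.localTriv i).source := by
      rw [Z.mem_localTriv_source]
      exact (by rw [hs' y]; exact hy : Z.proj (s y) ∈ N i)
    exact continuous_snd.continuousAt.comp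
      (((Z.localTriv i).continuousOn.continuousAt
        ((Z.localTriv i).open_source.mem_nhds hsrc)).comp s.continuous.continuousAt)
  have hvv : ∀ i j y, y ∈ N i → y ∈ N j → v j y = xor (v i y) (k i j y) := by
    intro i j y hi hj
    have e : ∀ i, v i y = Z.coordChange (Z.indexAt (s y).1) i (s y).1 (s y).2 := fun i => rfl
    have hy1 : (s y).1 = y := hs' y
    rw [e i, e j]
    generalize (s y).2 = b
    rw [hy1]
    have hc := Z.coordChange_comp y i j y ⟨⟨hxN y, hi⟩, hj⟩ b
    exact hc.symm
  let D' : Set X := {y | xor (v y y) (decide (y ∈ D y)) = true}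
  have hD' : ∀ i y, y ∈ N i → y ∉ J → (y ∈ D' ↔ xor (v i y) (decide (y ∈ D i)) = true) := by
    intro i y hi hyJ
    have h1 := hvv i y y hi (hxN y)
    have h2 := (hk i y y ⟨hi, hxN y⟩).self_of_nhds hyJ
    have e : (y ∈ D') = (xor (v y y) (decide (y ∈ D y)) = true) := rfl
    rw [e, h1, h2]
    generalize decide (y ∈ D i) = p, decide (y ∈ D y) = q, v i y = r
    revert p q r
    decide
  have hDev : ∀ i y, y ∈ N i → ∀ᶠ z in 𝓝 y, z ∉ J →
      (z ∈ D' ↔ z ∈ (if v i y = true then (D i)ᶜ else D i)) := by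
    intro i y hi
    have h1 := hv i y hi
    rw [ContinuousAt, nhds_discrete Bool, tendsto_pure] at h1
    filter_upwards [h1, (hNo i).mem_nhds hi] with z hz hzN hzJ
    rw [hD' i z hzN hzJ, hz]
    by_cases h : v i y = true <;> simp [h]
  refine ⟨D', fun y hy => ?_, fun z hz hf => ?_⟩
  · filter_upwards [hDev y y (hxN y), hD y y ⟨hxN y, hy⟩, hJc.isOpen_compl.mem_nhds hy]
      with z h1 h2 h3
    rw [h1 h3, (hDev y y (hxN y)).self_of_nhds hy]
    split_ifs <;> simp [h2]
  · refine hDf z z ⟨hxN z, hz⟩ ?_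
    have h1 := hf.congr_nhds (Z' := J) (Eventually.of_forall fun _ => Iff.rfl) (hDev z z (hxN z))
    split_ifs at h1
    · exact flat_compl.1 h1
    · exact h1

end SurfDisc

namespace SurfDisc

variable {X : Type*} [TopologicalSpace X]

/-! ### The two sides of a Jordan curve -/

lemma const_prop {P : Set X} (hP : IsPreconnected P) {p : X → Prop}
    (h : ∀ y ∈ P, ∀ᶠ z in 𝓝[P] y, (p z ↔ p y)) {x y : X} (hx : x ∈ P) (hy : y ∈ P) :
    p x ↔ p y := by
  refine hP.induction₂' (fun x y => p x ↔ p y) (fun x hx => ?_) ?_ hx hy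
  · filter_upwards [h x hx] with z hz using ⟨hz.symm, hz⟩
  · intro x y z _ _ _ h1 h2
    exact h1.trans h2

/-- A set that is flat along a connected set does not change along it. -/
lemma LocArc.ev_const [T2Space X] {J D P : Set X} (hJ : LocArc J) (hP : IsPreconnected P)
    (h : ∀ y ∈ P, Flat J D y) {x y : X} (hx : x ∈ P) (hy : y ∈ P) : Ev J D x ↔ Ev J D y :=
  const_prop hP (fun y hy => mem_nhdsWithin_of_mem_nhds (hJ.ev_locConst (h y hy))) hx hy

lemma LocArc.mem_iff_ev [T2Space X] {J D : Set X} (hJ : LocArc J) {y : X} (hy : y ∉ J)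
    (h : Flat J D y) : y ∈ D ↔ Ev J D y := (hJ.ev_congr h).self_of_nhds hy

lemma LocArc.mem_const [T2Space X] {J D P : Set X} (hJ : LocArc J) (hP : IsPreconnected P)
    (h : ∀ y ∈ P, Flat J D y) {x y : X} (hx : x ∈ P) (hy : y ∈ P) (hxJ : x ∉ J) (hyJ : y ∉ J) :
    x ∈ D ↔ y ∈ D := by
  rw [hJ.mem_iff_ev hxJ (h x hx), hJ.mem_iff_ev hyJ (h y hy)]
  exact hJ.ev_const hP h hx hy

lemma LocConst.mem_const {D P s : Set X} (hD : LocConst D s) (hPs : P ⊆ s)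
    (hP : IsPreconnected P) {x y : X} (hx : x ∈ P) (hy : y ∈ P) :
    x ∈ D ↔ y ∈ D :=
  const_prop (p := fun x => x ∈ D) hP
    (fun y hy => mem_nhdsWithin_of_mem_nhds (hD y (hPs hy))) hx hy

/-- Sets locally constant off a connected `J` are flat at all points of `J` or at none. -/
lemma LocArc.flat_all [T2Space X] {J D : Set X} (hJ : LocArc J) (hc : IsPreconnected J)
    (hD : LocConst D Jᶜ) {z w : X} (hz : z ∈ J) (hw : w ∈ J) : Flat J D z ↔ Flat J D w := by
  refine const_prop hc (p := fun z => Flat J D z) (fun y hy => ?_) hz hw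
  obtain ⟨O, hyO, hO⟩ := hJ y hy
  have hD' : LocConst D (O \ J) := hD.mono fun x hx => hx.2
  filter_upwards [self_mem_nhdsWithin, mem_nhdsWithin_of_mem_nhds (hO.isOpen.mem_nhds hyO)]
    with v hv hvO
  exact ⟨hO.flat_all hD' ⟨hvO, hv⟩ ⟨hyO, hy⟩, hO.flat_all hD' ⟨hyO, hy⟩ ⟨hvO, hv⟩⟩

/-- `A` is a component of the complement of `J`. -/
structure IsSide (A J : Set X) : Prop where
  isOpen : IsOpen A
  nonempty : A.Nonempty
  preconn : IsPreconnected A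
  disj : ∀ x ∈ A, x ∉ J
  closure_subset : closure A ⊆ A ∪ J

/-- The properties of Jordan curves that are used to find sides. -/
structure CurveLike (J : Set X) : Prop where
  isClosed : IsClosed J
  nonempty : J.Nonempty
  preconn : IsPreconnected J
  locArc : LocArc J

lemma IsSide.locConst {A J : Set X} (h : IsSide A J) : LocConst A Jᶜ := by
  intro y hy
  by_cases hyA : y ∈ A
  · filter_upwards [h.isOpen.mem_nhds hyA] with z hz using ⟨fun _ => hyA, fun _ => hz⟩
  · have : y ∈ (closure A)ᶜ := fun h' => (h.closure_subset h').elim hyA hy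
    filter_upwards [isClosed_closure.isOpen_compl.mem_nhds this] with z hz
    exact ⟨fun h' => absurd (subset_closure h') hz, fun h' => absurd h' hyA⟩

lemma LocConst.isOpen_sdiff {D J : Set X} (hJ : IsClosed J) (h : LocConst D Jᶜ) :
    IsOpen (D \ J) := by
  rw [isOpen_iff_mem_nhds]
  rintro y ⟨hy, hyJ⟩
  filter_upwards [h y hyJ, hJ.isOpen_compl.mem_nhds hyJ] with z hz hz' using ⟨hz.2 hy, hz'⟩

lemma IsSide.subset_or_disjoint {A J P : Set X} (h : IsSide A J) (hP : IsPreconnected P)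
    (hPJ : ∀ x ∈ P, x ∉ J) : P ⊆ A ∨ Disjoint P A := by
  by_cases hne : ∃ x ∈ P, x ∈ A
  · obtain ⟨x, hx, hxA⟩ := hne
    exact Or.inl fun y hy => (h.locConst.mem_const hPJ hP hx hy).1 hxA
  · right
    rw [Set.disjoint_left]
    exact fun x hx hxA => hne ⟨x, hx, hxA⟩

lemma IsSide.eq_or_disjoint {A A' J : Set X} (h : IsSide A J) (h' : IsSide A' J) :
    A = A' ∨ Disjoint A A' := by
  rcases h'.subset_or_disjoint h.preconn h.disj with h1 | h1
  · rcases h.subset_or_disjoint h'.preconn h'.disj with h2 | h2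
    · exact Or.inl (h1.antisymm h2)
    · exact Or.inr h2.symm
  · exact Or.inr h1

lemma not_flat_iff_closure {J D : Set X} {z : X} (h : ¬ Flat J D z) :
    z ∈ closure (D \ J) ∧ z ∈ closure (Dᶜ \ J) := by
  simp only [Flat, not_or, not_eventually] at h
  constructor <;> rw [mem_closure_iff_frequently]
  · exact h.2.mono fun y hy => by simpa [and_comm] using hy
  · exact h.1.mono fun y hy => by simpa [and_comm] using hy

section SC

variable [Surf X] [SimplyConnectedSpace X]

lemma CurveLike.classify {J D D' : Set X} (hJ : CurveLike J) (hD : LocConst D Jᶜ)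
    (hDf : ∀ z ∈ J, ¬ Flat J D z) (hD' : LocConst D' Jᶜ) :
    (∀ x ∉ J, x ∈ D') ∨ (∀ x ∉ J, x ∉ D') ∨ (∀ x ∉ J, (x ∈ D' ↔ x ∈ D)) ∨
      (∀ x ∉ J, (x ∈ D' ↔ x ∉ D)) := by
  obtain ⟨z, hz⟩ := hJ.nonempty
  have huniv : IsPreconnected (univ : Set X) := isPreconnected_univ
  obtain ⟨x₀, hx₀⟩ : ∃ x, x ∉ J := by
    by_contra! h
    exact hDf z hz (Or.inl (Eventually.of_forall fun y hy => absurd (h y) hy))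
  by_cases hf : Flat J D' z
  · have h1 : ∀ y ∈ univ, Flat J D' y := by
      intro y _
      by_cases hy : y ∈ J
      · exact (hJ.locArc.flat_all hJ.preconn hD' hz hy).1 hf
      · exact hD'.flat hy
    have h2 := fun x (hx : x ∉ J) =>
      hJ.locArc.mem_const huniv h1 (mem_univ x) (mem_univ x₀) hx hx₀
    by_cases h3 : x₀ ∈ D'
    · exact Or.inl fun x hx => (h2 x hx).2 h3
    · exact Or.inr (Or.inl fun x hx h => h3 ((h2 x hx).1 h))
  · have h0 : ∀ w ∈ univ ∩ J, ¬ Flat J D' w := fun w hw h =>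
      hf ((hJ.locArc.flat_all hJ.preconn hD' hz hw.2).2 h)
    have h1 : ∀ y ∈ univ, Flat J (symmDiff D' D) y := fun y hy =>
      hJ.locArc.flat_symmDiff isOpen_univ (hD'.mono fun x hx => hx.2) (hD.mono fun x hx => hx.2) h0
        (fun w hw => hDf w hw.2) hy
    have h2 := fun x (hx : x ∉ J) =>
      hJ.locArc.mem_const huniv h1 (mem_univ x) (mem_univ x₀) hx hx₀
    simp only [mem_symmDiff] at h2
    by_cases h3 : x₀ ∈ D' ∧ x₀ ∉ D ∨ x₀ ∈ D ∧ x₀ ∉ D'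
    · right; right; right
      intro x hx
      have := (h2 x hx).2 h3
      tauto
    · right; right; left
      intro x hx
      have := fun h => h3 ((h2 x hx).1 h)
      tauto

lemma CurveLike.isSide_of {J D : Set X} (hJ : CurveLike J) (hD : LocConst D Jᶜ)
    (hDf : ∀ z ∈ J, ¬ Flat J D z) : IsSide (D \ J) J := by
  have hne : ∀ {D}, (∀ z ∈ J, ¬ Flat J D z) → (D \ J).Nonempty ∧ (Dᶜ \ J).Nonempty := by
    intro D hDf
    obtain ⟨z, hz⟩ := hJ.nonempty
    have := not_flat_iff_closure (hDf z hz)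
    exact ⟨closure_nonempty_iff.1 ⟨z, this.1⟩, closure_nonempty_iff.1 ⟨z, this.2⟩⟩
  have ho := hD.isOpen_sdiff hJ.isClosed
  refine ⟨ho, (hne hDf).1, ?_, fun x hx => hx.2, ?_⟩
  · rw [isPreconnected_iff_subset_of_disjoint]
    intro u v hu hv huv hd
    have hE : LocConst (D ∩ u) Jᶜ := by
      intro y hy
      by_cases hyD : y ∈ D
      · rcases huv ⟨hyD, hy⟩ with h | h
        · filter_upwards [hD y hy, hu.mem_nhds h] with z hz hzu
          exact ⟨fun _ => ⟨hyD, h⟩, fun _ => ⟨hz.2 hyD, hzu⟩⟩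
        · have hyu : y ∉ u := fun h' => (hd.subset ⟨⟨hyD, hy⟩, h', h⟩ : y ∈ (∅ : Set X))
          filter_upwards [hD y hy, hv.mem_nhds h, hJ.isClosed.isOpen_compl.mem_nhds hy]
            with z hz hzv hzJ
          exact ⟨fun h' => ((hd.subset ⟨⟨h'.1, hzJ⟩, h'.2, hzv⟩ : z ∈ (∅ : Set X))).elim,
            fun h' => absurd h'.2 hyu⟩
      · filter_upwards [hD y hy] with z hz
        exact ⟨fun h => absurd (hz.1 h.1) hyD, fun h => absurd h.1 hyD⟩
    rcases hJ.classify hD hDf hE with h | h | h | h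
    · left; exact fun x hx => (h x hx.2).2
    · right
      intro x hx
      exact (huv hx).resolve_left fun h' => h x hx.2 ⟨hx.1, h'⟩
    · left; exact fun x hx => ((h x hx.2).2 hx.1).2
    · exfalso
      obtain ⟨x, hx⟩ := (hne hDf).2
      exact hx.1 ((h x hx.2).2 hx.1).1
  · intro x hx
    by_cases hxJ : x ∈ J
    · exact Or.inr hxJ
    · left
      refine ⟨?_, hxJ⟩
      by_contra hxD
      obtain ⟨y, hy1, hy2⟩ := ((mem_closure_iff_frequently.1 hx).and_eventually (hD x hxJ)).exists
      exact hxD (hy2.1 hy1.1)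

/-- A Jordan curve has exactly two sides, `A` and `(A ∪ J)ᶜ`. -/
theorem CurveLike.exists_side {J : Set X} (hJ : CurveLike J) :
    ∃ A, IsSide A J ∧ IsSide (A ∪ J)ᶜ J ∧ ∀ z ∈ J, ¬ Flat J A z := by
  obtain ⟨D, hD, hDf⟩ := hJ.locArc.exists_global_side hJ.isClosed
  refine ⟨D \ J, hJ.isSide_of hD hDf, ?_, fun z hz hf => hDf z hz ?_⟩
  · have := hJ.isSide_of hD.compl (fun z hz hf => hDf z hz (flat_compl.1 hf))
    convert this using 1
    ext x
    simp only [mem_compl_iff, mem_union, Set.mem_sdiff]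
    tauto
  · exact hf.congr_nhds (Eventually.of_forall fun _ => Iff.rfl)
      (Eventually.of_forall fun y hy => by simp [hy])

lemma IsSide.not_flat {A J : Set X} (h : IsSide A J) (hJ : CurveLike J) : ∀ z ∈ J, ¬ Flat J A z := by
  obtain ⟨B, hB, hB', hBf⟩ := hJ.exists_side
  rcases h.eq_or_disjoint hB with rfl | h1
  · exact hBf
  rcases h.eq_or_disjoint hB' with rfl | h2
  · intro z hz hf
    refine hBf z hz (flat_compl.1 (hf.congr_nhds (Eventually.of_forall fun _ => Iff.rfl)
      (Eventually.of_forall fun y hy => by simp [hy])))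
  · exfalso
    obtain ⟨x, hx⟩ := h.nonempty
    rw [Set.disjoint_left] at h1 h2
    exact h2 hx (by simp [h1 hx, h.disj x hx])

lemma IsSide.compl {A J : Set X} (h : IsSide A J) (hJ : CurveLike J) : IsSide (A ∪ J)ᶜ J := by
  have := hJ.isSide_of h.locConst.compl (fun z hz hf => h.not_flat hJ z hz (flat_compl.1 hf))
  convert this using 1
  ext x
  simp only [mem_compl_iff, mem_union, Set.mem_sdiff]
  tauto

lemma IsSide.closure_eq {A J : Set X} (h : IsSide A J) (hJ : CurveLike J) : closure A = A ∪ J := by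
  refine h.closure_subset.antisymm (union_subset subset_closure fun z hz => ?_)
  exact closure_mono sdiff_subset (not_flat_iff_closure (h.not_flat hJ z hz)).1

lemma IsSide.frontier_eq {A J : Set X} (h : IsSide A J) (hJ : CurveLike J) : frontier A = J := by
  rw [frontier, h.isOpen.interior_eq, h.closure_eq hJ]
  ext x
  have := h.disj x
  simp only [Set.mem_sdiff, mem_union]
  tauto

lemma CurveLike.side_of_mem {J : Set X} (hJ : CurveLike J) {x : X} (hx : x ∉ J) :
    ∃ A, IsSide A J ∧ x ∈ A := by
  obtain ⟨A, hA, hA', -⟩ := hJ.exists_side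
  by_cases h : x ∈ A
  · exact ⟨A, hA, h⟩
  · exact ⟨_, hA', by simp [h, hx]⟩

end SC

/-- A Jordan curve, parametrized by an injective map of `ℝ / ℤ`. -/
def IsJordan (J : Set X) : Prop :=
  ∃ γ : ℝ → X, Continuous γ ∧ (∀ s t, γ s = γ t ↔ ∃ n : ℤ, t = s + n) ∧ range γ = J

lemma param_injOn {X : Type*} {γ : ℝ → X} (h : ∀ s t, γ s = γ t ↔ ∃ n : ℤ, t = s + n) {s t u v : ℝ}
    (hs : s ∈ Icc u v) (ht : t ∈ Icc u v) (huv : v < u + 1) (he : γ s = γ t) : s = t := by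
  obtain ⟨n, rfl⟩ := (h s t).1 he
  have h1 : (n:ℝ) < 1 := by linarith [hs.1, hs.2, ht.1, ht.2]
  have h2 : (-1:ℝ) < n := by linarith [hs.1, hs.2, ht.1, ht.2]
  have h3 : n = 0 := by
    have h1' : n < 1 := by exact_mod_cast h1
    have h2' : -1 < n := by exact_mod_cast h2
    omega
  simp [h3]

lemma param_range {X : Type*} {γ : ℝ → X} (h : ∀ s t, γ s = γ t ↔ ∃ n : ℤ, t = s + n) (u : ℝ) :
    range γ = γ '' Ico u (u + 1) := by
  refine Subset.antisymm ?_ (image_subset_range _ _)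
  rintro _ ⟨t, rfl⟩
  refine ⟨t - ⌊t - u⌋, ⟨?_, ?_⟩, ?_⟩
  · linarith [Int.floor_le (t - u)]
  · linarith [Int.lt_floor_add_one (t - u)]
  · exact (h _ _).2 ⟨⌊t - u⌋, by ring⟩

lemma IsJordan.isCompact {J : Set X} (h : IsJordan J) : IsCompact J := by
  obtain ⟨γ, h1, h2, rfl⟩ := h
  rw [show range γ = γ '' Icc 0 (0 + 1) from
    ((param_range h2 0).subset.trans (image_mono Ico_subset_Icc_self)).antisymm
      (image_subset_range _ _)]
  exact isCompact_Icc.image h1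

lemma IsJordan.locArc [Surf X] {J : Set X} (h : IsJordan J) : LocArc J := by
  obtain ⟨γ, hc, hγ, rfl⟩ := h
  rintro _ ⟨t, rfl⟩
  obtain ⟨φ, hφ, h0⟩ := Surf.exists_chart (γ t)
  have : range φ ∈ 𝓝 (γ t) := hφ.isOpen_range.mem_nhds ⟨0, h0⟩
  obtain ⟨ε, hε, hb⟩ := Metric.mem_nhds_iff.1 (hc.continuousAt this)
  obtain ⟨δ, hδ0, hδε, hδ4⟩ : ∃ δ : ℝ, 0 < δ ∧ δ < ε ∧ δ ≤ 1 / 4 :=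
    ⟨min (ε / 2) (1 / 4), by positivity, (min_le_left _ _).trans_lt (by linarith),
      min_le_right _ _⟩
  have hcl : IsClosed (γ '' Icc (t + δ) (t + 1 - δ)) := (isCompact_Icc.image hc).isClosed
  have hlt : t - δ < t + δ := by linarith
  refine ⟨(γ '' Icc (t + δ) (t + 1 - δ))ᶜ, ?_, φ, fun u => γ (t - δ + u * (t + δ - (t - δ))), hφ,
    ⟨by fun_prop, ?_⟩, ?_, hcl.isOpen_compl, ?_, ?_, ?_⟩
  · rintro ⟨s, hs, he⟩
    have := param_injOn hγ (s := s) (t := t) (u := t) (v := t + 1 - δ)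
      ⟨by linarith [hs.1], hs.2⟩ ⟨le_rfl, by linarith⟩ (by linarith) he
    linarith [hs.1]
  · intro u hu v hv he
    have hm : ∀ w ∈ Icc (0:ℝ) 1, t - δ + w * (t + δ - (t - δ)) ∈ Icc (t - δ) (t + δ) := by
      intro w hw
      constructor <;> nlinarith [hw.1, hw.2]
    have := param_injOn hγ (hm u hu) (hm v hv) (by linarith) he
    have h2 : (u - v) * (2 * δ) = 0 := by linarith
    rcases mul_eq_zero.1 h2 with h | h <;> linarith
  · rw [affine_image γ hlt.le]
    rintro _ ⟨s, hs, rfl⟩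
    apply hb
    rw [Metric.mem_ball, Real.dist_eq, abs_lt]
    constructor <;> linarith [hs.1, hs.2]
  · rw [affine_image_Ioo γ hlt, param_range hγ (t - δ)]
    ext y
    constructor
    · rintro ⟨h1, s, hs, rfl⟩
      refine ⟨s, ⟨?_, ?_⟩, rfl⟩
      · rcases hs.1.lt_or_eq with h | h
        · exact h
        · exact absurd ⟨s + 1, ⟨by linarith, by linarith⟩,
            ((hγ _ _).2 ⟨1, by push_cast; ring⟩ : γ s = γ (s + 1)).symm⟩ h1
      · by_contra h
        exact h1 ⟨s, ⟨not_lt.1 h, by linarith [hs.2]⟩, rfl⟩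
    · rintro ⟨s, hs, rfl⟩
      refine ⟨?_, s, ⟨hs.1.le, by linarith [hs.2]⟩, rfl⟩
      rintro ⟨r, hr, he⟩
      have := param_injOn hγ (s := r) (t := s) (u := min s (t + δ)) (v := t + 1 - δ)
        ⟨(min_le_right _ _).trans hr.1, hr.2⟩ ⟨min_le_left _ _, by linarith [hs.2]⟩ (by
          rcases min_choice s (t + δ) with h | h <;> rw [h] <;> linarith [hs.1]) he
      linarith [hr.1, hs.2]
  · intro h
    apply h
    refine ⟨t + 1 - δ, ⟨by linarith, le_rfl⟩, (hγ _ _).2 ⟨-1, ?_⟩⟩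
    push_cast; ring
  · intro h
    apply h
    exact ⟨t + δ, ⟨le_rfl, by linarith⟩, by congr 1; ring⟩

lemma IsJordan.curveLike [Surf X] {J : Set X} (h : IsJordan J) : CurveLike J := by
  refine ⟨h.isCompact.isClosed, ?_, ?_, h.locArc⟩
  · obtain ⟨γ, -, -, rfl⟩ := h
    exact range_nonempty γ
  · obtain ⟨γ, hc, -, rfl⟩ := h
    exact isPreconnected_range hc

end SurfDisc

namespace SurfDisc

variable {X : Type*} [TopologicalSpace X]

/-! ### Gluing and splitting Jordan curves -/

lemma contOn_glue {g : ℝ → X} {s t u : ℝ} (hst : s ≤ t) (htu : t ≤ u)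
    (h1 : ContinuousOn g (Icc s t)) (h2 : ContinuousOn g (Icc t u)) : ContinuousOn g (Icc s u) := by
  rw [← Icc_union_Icc_eq_Icc hst htu]
  exact h1.union_of_isClosed h2 isClosed_Icc isClosed_Icc

lemma IsJordan.of_loop {g : ℝ → X} (hg : ContinuousOn g (Icc 0 1)) (h01 : g 0 = g 1)
    (hi : InjOn g (Ico 0 1)) : IsJordan (g '' Icc 0 1) := by
  refine ⟨g ∘ Int.fract, hg.comp_fract'' h01, fun s t => ?_, ?_⟩
  · constructor
    · intro h
      have := hi ⟨Int.fract_nonneg s, Int.fract_lt_one s⟩ ⟨Int.fract_nonneg t, Int.fract_lt_one t⟩ h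
      refine ⟨⌊t⌋ - ⌊s⌋, ?_⟩
      have h1 := Int.fract_add_floor s
      have h2 := Int.fract_add_floor t
      push_cast
      linarith
    · rintro ⟨n, rfl⟩
      simp
  · apply Subset.antisymm
    · rintro _ ⟨t, rfl⟩
      exact ⟨_, ⟨Int.fract_nonneg t, (Int.fract_lt_one t).le⟩, rfl⟩
    · rintro _ ⟨t, ht, rfl⟩
      rcases ht.2.lt_or_eq with h | rfl
      · exact ⟨t, by simp [Int.fract_eq_self.2 ⟨ht.1, h⟩]⟩
      · exact ⟨0, by simp [h01]⟩

/-- Two arcs with the same end points and no other common point. -/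
structure ArcPair (a b : ℝ → X) : Prop where
  left : IsArcMap a
  right : IsArcMap b
  zero : a 0 = b 0
  one : a 1 = b 1
  ne : ∀ s ∈ Ioo (0:ℝ) 1, ∀ t ∈ Ioo (0:ℝ) 1, a s ≠ b t

lemma ArcPair.symm {a b : ℝ → X} (h : ArcPair a b) : ArcPair b a :=
  ⟨h.right, h.left, h.zero.symm, h.one.symm, fun s hs t ht => (h.ne t ht s hs).symm⟩

lemma ArcPair.ne' {a b : ℝ → X} (h : ArcPair a b) {s t : ℝ} (hs : s ∈ Ioo (0:ℝ) 1)
    (ht : t ∈ Icc (0:ℝ) 1) : a s ≠ b t := by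
  intro he
  have hs' := Ioo_subset_Icc_self hs
  rcases ht.1.eq_or_lt with rfl | h0
  · rw [← h.zero] at he
    exact hs.1.ne' (h.left.inj hs' (by simp) he)
  rcases ht.2.eq_or_lt with rfl | h1
  · rw [← h.one] at he
    exact hs.2.ne (h.left.inj hs' (by simp) he)
  exact h.ne s hs t ⟨h0, h1⟩ he

lemma ArcPair.eq_of {a b : ℝ → X} (h : ArcPair a b) {s t : ℝ} (hs : s ∈ Icc (0:ℝ) 1)
    (ht : t ∈ Icc (0:ℝ) 1) (he : a s = b t) : (s = 0 ∧ t = 0) ∨ (s = 1 ∧ t = 1) := by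
  rcases hs.1.eq_or_lt with rfl | h0
  · left
    rw [h.zero] at he
    exact ⟨rfl, (h.right.inj (by simp) ht he).symm⟩
  rcases hs.2.eq_or_lt with rfl | h1
  · right
    rw [h.one] at he
    exact ⟨rfl, (h.right.inj (by simp) ht he).symm⟩
  exact absurd he (h.ne' ⟨h0, h1⟩ ht)

lemma ArcPair.isJordan {a b : ℝ → X} (h : ArcPair a b) :
    IsJordan (a '' Icc 0 1 ∪ b '' Icc 0 1) := by
  let g : ℝ → X := fun t => if t ≤ 1 / 2 then a (2 * t) else b (2 - 2 * t)
  have g1 : ∀ t ∈ Icc (0:ℝ) (1 / 2), g t = a (2 * t) := fun t ht => by simp only [g, if_pos ht.2]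
  have g2 : ∀ t ∈ Icc (1 / 2 : ℝ) 1, g t = b (2 - 2 * t) := by
    intro t ht
    rcases ht.1.eq_or_lt with rfl | h'
    · simp only [g, le_refl, if_true]
      norm_num [h.one]
    · simp only [g, if_neg (not_le.2 h')]
  have gc : ContinuousOn g (Icc 0 1) := by
    apply contOn_glue (t := 1 / 2) (by norm_num) (by norm_num)
    · refine ContinuousOn.congr (h.left.cont.comp (f := fun t : ℝ => 2 * t) (by fun_prop) ?_) g1
      intro t ht
      constructor <;> simp only <;> linarith [ht.1, ht.2]
    · refine ContinuousOn.congr (h.right.cont.comp (f := fun t : ℝ => 2 - 2 * t) (by fun_prop) ?_) g2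
      intro t ht
      constructor <;> simp only <;> linarith [ht.1, ht.2]
  have gi : InjOn g (Ico 0 1) := by
    intro s hs t ht he
    rcases le_or_gt s (1 / 2) with h1 | h1 <;> rcases le_or_gt t (1 / 2) with h2 | h2
    · rw [g1 s ⟨hs.1, h1⟩, g1 t ⟨ht.1, h2⟩] at he
      have := h.left.inj ⟨by linarith [hs.1], by linarith⟩ ⟨by linarith [ht.1], by linarith⟩ he
      linarith
    · rw [g1 s ⟨hs.1, h1⟩, g2 t ⟨h2.le, ht.2.le⟩] at he
      rcases h.eq_of ⟨by linarith [hs.1], by linarith⟩ ⟨by linarith [ht.2], by linarith⟩ he with h | h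
      · linarith [ht.2]
      · linarith
    · rw [g2 s ⟨h1.le, hs.2.le⟩, g1 t ⟨ht.1, h2⟩] at he
      rcases h.eq_of ⟨by linarith [ht.1], by linarith⟩ ⟨by linarith [hs.2], by linarith⟩ he.symm
        with h | h
      · linarith [hs.2]
      · linarith
    · rw [g2 s ⟨h1.le, hs.2.le⟩, g2 t ⟨h2.le, ht.2.le⟩] at he
      have := h.right.inj ⟨by linarith [hs.2], by linarith⟩ ⟨by linarith [ht.2], by linarith⟩ he
      linarith
  have := IsJordan.of_loop gc
    (by rw [g1 0 (by simp), g2 1 (by norm_num)]; norm_num [h.zero]) gi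
  convert this using 1
  apply Subset.antisymm
  · rintro y (⟨t, ht, rfl⟩ | ⟨t, ht, rfl⟩)
    · refine ⟨t / 2, ⟨by linarith [ht.1], by linarith [ht.2]⟩, ?_⟩
      rw [g1 _ ⟨by linarith [ht.1], by linarith [ht.2]⟩]
      congr 1; ring
    · refine ⟨1 - t / 2, ⟨by linarith [ht.2], by linarith [ht.1]⟩, ?_⟩
      rw [g2 _ ⟨by linarith [ht.2], by linarith [ht.1]⟩]
      congr 1; ring
  · rintro y ⟨t, ht, rfl⟩
    rcases le_total t (1 / 2) with h1 | h1
    · left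
      exact ⟨2 * t, ⟨by linarith [ht.1], by linarith⟩, (g1 t ⟨ht.1, h1⟩).symm⟩
    · right
      exact ⟨2 - 2 * t, ⟨by linarith [ht.2], by linarith⟩, (g2 t ⟨h1, ht.2⟩).symm⟩

lemma IsArcMap.rev {a : ℝ → X} (ha : IsArcMap a) : IsArcMap (fun t => a (1 - t)) := by
  have hm : MapsTo (fun t : ℝ => 1 - t) (Icc 0 1) (Icc 0 1) := by
    intro t ht
    constructor <;> simp only <;> linarith [ht.1, ht.2]
  refine ⟨ha.cont.comp (by fun_prop) hm, fun s hs t ht h => ?_⟩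
  have := ha.inj (hm hs) (hm ht) h
  linarith

lemma rev_image {X : Type*} (a : ℝ → X) : (fun t => a (1 - t)) '' Icc 0 1 = a '' Icc 0 1 := by
  apply Subset.antisymm <;> rintro _ ⟨t, ht, rfl⟩
  · exact ⟨1 - t, ⟨by linarith [ht.2], by linarith [ht.1]⟩, rfl⟩
  · exact ⟨1 - t, ⟨by linarith [ht.2], by linarith [ht.1]⟩, by simp⟩

lemma param_arc {γ : ℝ → X} (hc : Continuous γ) (h : ∀ s t, γ s = γ t ↔ ∃ n : ℤ, t = s + n)
    {s t : ℝ} (hst : s < t) (ht : t < s + 1) : IsArcMap (fun u => γ (s + u * (t - s))) := by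
  refine ⟨by fun_prop, fun u hu v hv he => ?_⟩
  have hm : ∀ w ∈ Icc (0:ℝ) 1, s + w * (t - s) ∈ Icc s t := by
    intro w hw
    constructor <;> nlinarith [hw.1, hw.2]
  have := param_injOn h (hm u hu) (hm v hv) ht he
  have h2 : (u - v) * (t - s) = 0 := by linarith
  rcases mul_eq_zero.1 h2 with h | h <;> linarith

/-- The two arcs of a parametrized Jordan curve between two of its points. -/
lemma param_arcPair {γ : ℝ → X} (hc : Continuous γ) (h : ∀ s t, γ s = γ t ↔ ∃ n : ℤ, t = s + n)
    {s t : ℝ} (hst : s < t) (ht : t < s + 1) :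
    ArcPair (fun u => γ (s + u * (t - s))) (fun u => γ (t + (1 - u) * (s + 1 - t))) ∧
      (fun u => γ (s + u * (t - s))) '' Icc 0 1 = γ '' Icc s t ∧
      (fun u => γ (t + (1 - u) * (s + 1 - t))) '' Icc 0 1 = γ '' Icc t (s + 1) ∧
      γ '' Icc s t ∪ γ '' Icc t (s + 1) = range γ := by
  have hper : γ (s + 1) = γ s := ((h _ _).2 ⟨1, by push_cast; ring⟩).symm
  refine ⟨⟨param_arc hc h hst ht, (param_arc hc h ht (by linarith)).rev, ?_, ?_, ?_⟩, ?_, ?_, ?_⟩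
  · simp [hper]
  · simp
  · intro u hu v hv he
    have h1 : 0 < u * (t - s) := mul_pos hu.1 (by linarith)
    have h2 : u * (t - s) < 1 * (t - s) := mul_lt_mul_of_pos_right hu.2 (by linarith)
    have h3 : 0 < (1 - v) * (s + 1 - t) := mul_pos (by linarith [hv.2]) (by linarith)
    have h4 : (1 - v) * (s + 1 - t) < 1 * (s + 1 - t) :=
      mul_lt_mul_of_pos_right (by linarith [hv.1]) (by linarith)
    have := param_injOn h (u := s + u * (t - s)) (v := t + (1 - v) * (s + 1 - t))
      ⟨le_rfl, by linarith⟩ ⟨by linarith, le_rfl⟩ (by linarith) he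
    linarith
  · exact affine_image γ hst.le
  · rw [← affine_image γ ht.le]
    exact rev_image (fun u => γ (t + u * (s + 1 - t)))
  · rw [← image_union, Icc_union_Icc_eq_Icc hst.le ht.le]
    exact (image_subset_range _ _).antisymm ((param_range h s).subset.trans
      (image_mono Ico_subset_Icc_self))

lemma IsJordan.split {J : Set X} (hJ : IsJordan J) {p q : X} (hp : p ∈ J) (hq : q ∈ J)
    (hpq : p ≠ q) : ∃ a b : ℝ → X, ArcPair a b ∧ a 0 = p ∧ a 1 = q ∧
      a '' Icc 0 1 ∪ b '' Icc 0 1 = J := by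
  obtain ⟨γ, hc, hγ, rfl⟩ := hJ
  obtain ⟨s, rfl⟩ := hp
  rw [param_range hγ s] at hq
  obtain ⟨t, ht, rfl⟩ := hq
  have hst : s < t := lt_of_le_of_ne ht.1 (by rintro rfl; exact hpq rfl)
  obtain ⟨h1, h2, h3, h4⟩ := param_arcPair hc hγ hst ht.2
  exact ⟨_, _, h1, by simp, by simp, by rw [h2, h3, h4]⟩

/-! ### Discs in charts -/

lemma IsOpenEmbedding.isJordan_circle {φ : ℂ → X} (hφ : IsOpenEmbedding φ) (z : ℂ) {r : ℝ}
    (hr : 0 < r) : IsJordan (φ '' Metric.sphere z r) := by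
  refine ⟨fun t => φ (z + r * Complex.exp (2 * Real.pi * Complex.I * t)),
    hφ.continuous.comp (by fun_prop), fun s t => ?_, ?_⟩
  · have hr' : (r:ℂ) ≠ 0 := by exact_mod_cast hr.ne'
    rw [hφ.injective.eq_iff, add_right_inj, mul_right_inj' hr', eq_comm,
      Complex.exp_eq_exp_iff_exists_int]
    refine exists_congr fun n => ?_
    have h2 : (2 * Real.pi * Complex.I : ℂ) ≠ 0 := Complex.two_pi_I_ne_zero
    rw [show (2 * Real.pi * Complex.I * s + n * (2 * Real.pi * Complex.I) : ℂ) =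
      2 * Real.pi * Complex.I * (s + n) by ring, mul_right_inj' h2]
    exact_mod_cast Iff.rfl
  · rw [range_comp' φ]
    congr 1
    ext w
    simp only [mem_range, mem_sphere_iff_norm]
    constructor
    · rintro ⟨t, rfl⟩
      rw [add_sub_cancel_left, norm_mul, Complex.norm_exp]
      simp [abs_of_pos hr]
    · intro h
      refine ⟨Complex.arg (w - z) / (2 * Real.pi), ?_⟩
      have := Complex.norm_mul_exp_arg_mul_I (w - z)
      rw [h] at this
      rw [eq_comm, ← sub_eq_iff_eq_add']
      refine this.symm.trans ?_
      congr 2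
      push_cast
      have : (Real.pi : ℂ) ≠ 0 := by exact_mod_cast Real.pi_ne_zero
      field_simp

lemma IsOpenEmbedding.isSide_ball [T2Space X] {φ : ℂ → X} (hφ : IsOpenEmbedding φ) (z : ℂ) {r : ℝ}
    (hr : 0 < r) : IsSide (φ '' Metric.ball z r) (φ '' Metric.sphere z r) := by
  refine ⟨hφ.isOpenMap _ Metric.isOpen_ball, (Metric.nonempty_ball.2 hr).image _,
    (convex_ball z r).isPreconnected.image _ hφ.continuous.continuousOn, ?_, ?_⟩
  · rintro _ ⟨w, hw, rfl⟩ ⟨v, hv, he⟩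
    rw [hφ.injective he] at hv
    rw [Metric.mem_ball] at hw
    rw [Metric.mem_sphere] at hv
    linarith
  · rw [← image_union, Metric.ball_union_sphere]
    exact closure_minimal (image_mono Metric.ball_subset_closedBall)
      (((isCompact_closedBall z r).image hφ.continuous).isClosed)

/-- A region of a surface bounded by a Jordan curve and with compact closure. -/
structure IsCell (A J : Set X) : Prop where
  jordan : IsJordan J
  side : IsSide A J
  compact : IsCompact (closure A)

variable [Surf X] [SimplyConnectedSpace X]

/-- A Jordan curve in a chart disc has a side in that disc. -/
lemma exists_small_side {φ : ℂ → X} (hφ : IsOpenEmbedding φ) {z : ℂ} {r : ℝ}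
    (hr : 0 < r) {C : Set X} (hC : IsJordan C) (hCB : C ⊆ φ '' Metric.ball z r) :
    ∃ E, IsCell E C ∧ E ⊆ φ '' Metric.ball z r := by
  have hB := IsOpenEmbedding.isSide_ball hφ z hr
  have hT := (IsOpenEmbedding.isJordan_circle hφ z hr).curveLike
  have hR := hB.compl hT
  have hRC : ∀ x ∈ (φ '' Metric.ball z r ∪ φ '' Metric.sphere z r)ᶜ, x ∉ C :=
    fun x hx hxC => hx (Or.inl (hCB hxC))
  obtain ⟨E, hE, hER⟩ : ∃ E, IsSide E C ∧
      Disjoint (φ '' Metric.ball z r ∪ φ '' Metric.sphere z r)ᶜ E := by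
    obtain ⟨A, hA, hA', -⟩ := hC.curveLike.exists_side
    rcases hA.subset_or_disjoint hR.preconn hRC with h | h
    · refine ⟨_, hA', ?_⟩
      rw [Set.disjoint_left]
      exact fun x hx hx' => hx' (Or.inl (h hx))
    · exact ⟨A, hA, h⟩
  have hsub : E ⊆ φ '' Metric.ball z r := by
    intro x hx
    by_contra hxB
    have hx1 : x ∈ closure (φ '' Metric.ball z r ∪ φ '' Metric.sphere z r)ᶜ := by
      rw [hR.closure_eq hT]
      by_cases h : x ∈ φ '' Metric.sphere z r
      · exact Or.inr h
      · exact Or.inl (by simp only [mem_compl_iff, mem_union]; tauto)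
    obtain ⟨y, hy1, hy2⟩ := mem_closure_iff.1 hx1 E hE.isOpen hx
    exact (Set.disjoint_left.1 hER) hy2 hy1
  refine ⟨E, ⟨hC, hE, ?_⟩, hsub⟩
  refine ((isCompact_closedBall z r).image hφ.continuous).of_isClosed_subset isClosed_closure ?_
  exact closure_minimal (hsub.trans (image_mono Metric.ball_subset_closedBall))
      (((isCompact_closedBall z r).image hφ.continuous).isClosed)

/-! ### The θ-curve lemma -/

/-- One of the two pieces into which a crosscut divides a cell. -/
lemma theta_piece {A : Set X} {a b α : ℝ → X} (hab : ArcPair a b)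
    (hA : IsSide A (a '' Icc 0 1 ∪ b '' Icc 0 1)) (haα : ArcPair a α) (hα : α '' Ioo 0 1 ⊆ A) :
    ∃ E, IsSide E (a '' Icc 0 1 ∪ α '' Icc 0 1) ∧ E ⊆ A \ α '' Icc 0 1 := by
  have hJ := hab.isJordan.curveLike
  have hC := haα.isJordan.curveLike
  have hαJ : α '' Icc 0 1 ⊆ A ∪ a '' Icc 0 1 := by
    rintro _ ⟨t, ht, rfl⟩
    rcases ht.1.eq_or_lt with rfl | h0
    · exact Or.inr ⟨0, by simp, haα.zero⟩
    rcases ht.2.eq_or_lt with rfl | h1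
    · exact Or.inr ⟨1, by simp, haα.one⟩
    exact Or.inl (hα ⟨t, ⟨h0, h1⟩, rfl⟩)
  have hbC : ∀ x ∈ b '' Ioo 0 1, x ∉ a '' Icc 0 1 ∪ α '' Icc 0 1 := by
    rintro _ ⟨t, ht, rfl⟩ h
    have h1 : b t ∉ a '' Icc 0 1 := by
      rintro ⟨s, hs, he⟩
      exact hab.symm.ne' ht hs he.symm
    rcases h with h | h
    · exact h1 h
    · rcases hαJ h with h | h
      · exact hA.disj _ h (Or.inr ⟨t, Ioo_subset_Icc_self ht, rfl⟩)
      · exact h1 h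
  have hbp : IsPreconnected (b '' Ioo 0 1) :=
    isPreconnected_Ioo.image _ (hab.right.cont.mono Ioo_subset_Icc_self)
  obtain ⟨V, hV, hbV⟩ := hC.side_of_mem (hbC (b (1 / 2)) ⟨1 / 2, by norm_num, rfl⟩)
  have hbsub : b '' Ioo 0 1 ⊆ V := by
    rcases hV.subset_or_disjoint hbp hbC with h | h
    · exact h
    · exact absurd hbV (Set.disjoint_left.1 h ⟨1 / 2, by norm_num, rfl⟩)
  have hB := hA.compl hJ
  have hBC : ∀ x ∈ (A ∪ (a '' Icc 0 1 ∪ b '' Icc 0 1))ᶜ, x ∉ a '' Icc 0 1 ∪ α '' Icc 0 1 := by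
    intro x hx hxC
    apply hx
    rcases hxC with h | h
    · exact Or.inr (Or.inl h)
    · rcases hαJ h with h | h
      · exact Or.inl h
      · exact Or.inr (Or.inl h)
  have hBV : (A ∪ (a '' Icc 0 1 ∪ b '' Icc 0 1))ᶜ ⊆ V := by
    rcases hV.subset_or_disjoint hB.preconn hBC with h | h
    · exact h
    · exfalso
      have : b (1 / 2) ∈ closure (A ∪ (a '' Icc 0 1 ∪ b '' Icc 0 1))ᶜ := by
        rw [hB.closure_eq hJ]
        exact Or.inr (Or.inr ⟨1 / 2, by norm_num, rfl⟩)
      obtain ⟨y, hy1, hy2⟩ := mem_closure_iff.1 this V hV.isOpen hbV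
      exact Set.disjoint_left.1 h hy2 hy1
  refine ⟨_, hV.compl hC, ?_⟩
  intro x hx
  have h1 : x ∉ V := fun h => hx (Or.inl h)
  have h2 : x ∉ a '' Icc 0 1 ∪ α '' Icc 0 1 := fun h => hx (Or.inr h)
  refine ⟨?_, fun h => h2 (Or.inr h)⟩
  by_contra hxA
  apply h1
  by_cases h3 : x ∈ b '' Icc 0 1
  · apply hbsub
    refine IsArcMap.mem_Ioo h3 ?_ ?_
    · rintro rfl; exact h2 (Or.inl ⟨0, by simp, hab.zero⟩)
    · rintro rfl; exact h2 (Or.inl ⟨1, by simp, hab.one⟩)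
  · apply hBV
    simp only [mem_compl_iff, mem_union, not_or] at h2 ⊢
    exact ⟨hxA, h2.1, h3⟩

/-- A crosscut divides a cell into two cells. -/
theorem theta {A : Set X} {a b α : ℝ → X} (hab : ArcPair a b)
    (hA : IsCell A (a '' Icc 0 1 ∪ b '' Icc 0 1)) (hαm : IsArcMap α) (h0 : α 0 = a 0)
    (h1 : α 1 = a 1) (hα : α '' Ioo 0 1 ⊆ A) :
    ∃ E F, IsCell E (a '' Icc 0 1 ∪ α '' Icc 0 1) ∧ IsCell F (b '' Icc 0 1 ∪ α '' Icc 0 1) ∧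
      Disjoint E F ∧ E ∪ F = A \ α '' Icc 0 1 := by
  have hαJ : ∀ t ∈ Ioo (0:ℝ) 1, α t ∉ a '' Icc 0 1 ∪ b '' Icc 0 1 :=
    fun t ht => hA.side.disj _ (hα ⟨t, ht, rfl⟩)
  have haα : ArcPair a α := ⟨hab.left, hαm, h0.symm, h1.symm, fun s hs t ht he =>
    hαJ t ht (Or.inl ⟨s, Ioo_subset_Icc_self hs, he⟩)⟩
  have hbα : ArcPair b α := ⟨hab.right, hαm, hab.zero.symm.trans h0.symm, hab.one.symm.trans h1.symm,
    fun s hs t ht he => hαJ t ht (Or.inr ⟨s, Ioo_subset_Icc_self hs, he⟩)⟩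
  obtain ⟨E, hE, hEA⟩ := theta_piece hab hA.side haα hα
  obtain ⟨F, hF, hFA⟩ := theta_piece hab.symm (by rw [union_comm]; exact hA.side) hbα hα
  have hC := haα.isJordan.curveLike
  have hC' := hbα.isJordan.curveLike
  have hcell : ∀ {E C : Set X}, IsJordan C → IsSide E C → E ⊆ A \ α '' Icc 0 1 → IsCell E C := by
    intro E C hC hE hEA
    exact ⟨hC, hE, hA.compact.of_isClosed_subset isClosed_closure
      (closure_mono (hEA.trans sdiff_subset))⟩
  have hAo := hA.side.isOpen
  have key : ∀ x ∈ A, (x ∈ a '' Icc 0 1 ∪ α '' Icc 0 1 ↔ x ∈ α '' Icc 0 1) ∧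
      (x ∈ b '' Icc 0 1 ∪ α '' Icc 0 1 ↔ x ∈ α '' Icc 0 1) := by
    intro x hx
    have := hA.side.disj x hx
    simp only [mem_union] at this ⊢
    tauto
  have hflat : ∀ y ∈ A, Flat (a '' Icc 0 1 ∪ α '' Icc 0 1) (symmDiff E F) y := by
    intro y hy
    refine hC.locArc.flat_symmDiff hAo (hE.locConst.mono fun x hx => hx.2)
      (hF.locConst.mono fun x hx => ?_) (fun w hw => hE.not_flat hC w hw.2) (fun w hw hf => ?_) hy
    · intro h
      exact hx.2 ((key x hx.1).1.2 ((key x hx.1).2.1 h))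
    · refine hF.not_flat hC' w ((key w hw.1).2.2 ((key w hw.1).1.1 hw.2))
        (hf.congr_nhds ?_ (Eventually.of_forall fun _ _ => Iff.rfl))
      filter_upwards [hAo.mem_nhds hw.1] with x hx
      rw [(key x hx).1, (key x hx).2]
  have hconst : ∀ x ∈ A \ α '' Icc 0 1, ∀ y ∈ A \ α '' Icc 0 1,
      (x ∈ symmDiff E F ↔ y ∈ symmDiff E F) := by
    intro x hx y hy
    exact hC.locArc.mem_const hA.side.preconn hflat hx.1 hy.1
      (fun h => hx.2 ((key x hx.1).1.1 h)) (fun h => hy.2 ((key y hy.1).1.1 h))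
  have hall : ∀ x ∈ A \ α '' Icc 0 1, x ∈ symmDiff E F := by
    by_contra! hne
    obtain ⟨x, hx, hxn⟩ := hne
    have hEF : E = F := by
      ext y
      by_cases hy : y ∈ A \ α '' Icc 0 1
      · have := fun h => hxn ((hconst x hx y hy).2 h)
        simp only [mem_symmDiff] at this
        tauto
      · exact ⟨fun h => absurd (hEA h) hy, fun h => absurd (hFA h) hy⟩
    have hfr : a '' Icc 0 1 ∪ α '' Icc 0 1 = b '' Icc 0 1 ∪ α '' Icc 0 1 := by
      rw [← hE.frontier_eq hC, ← hF.frontier_eq hC', hEF]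
    have h2 : a (1 / 2) ∈ b '' Icc 0 1 ∪ α '' Icc 0 1 := by
      rw [← hfr]
      exact Or.inl ⟨1 / 2, by norm_num, rfl⟩
    rcases h2 with ⟨t, ht, he⟩ | ⟨t, ht, he⟩
    · exact hab.ne' (by norm_num) ht he.symm
    · exact haα.ne' (by norm_num) ht he.symm
  refine ⟨E, F, hcell haα.isJordan hE hEA, hcell hbα.isJordan hF hFA, ?_, ?_⟩
  · rw [Set.disjoint_left]
    intro x hx hx'
    have := hall x (hEA hx)
    simp only [mem_symmDiff] at this
    tauto
  · apply (union_subset hEA hFA).antisymm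
    intro x hx
    have := hall x hx
    simp only [mem_symmDiff] at this
    simp only [mem_union]
    tauto

end SurfDisc

namespace SurfDisc
variable {X : Type*} [TopologicalSpace X]

/-! ### Homogeneity -/

lemma exists_chart_small [Surf X] {x : X} {U : Set X} (hU : U ∈ 𝓝 x) :
    ∃ φ : ℂ → X, IsOpenEmbedding φ ∧ φ 0 = x ∧ range φ ⊆ U := by
  obtain ⟨φ, hφ, h0⟩ := Surf.exists_chart x
  have h1 : φ ⁻¹' U ∈ 𝓝 0 := hφ.continuous.continuousAt (by rwa [h0])
  obtain ⟨r, hr, hb⟩ := Metric.mem_nhds_iff.1 h1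
  let e := OpenPartialHomeomorph.univBall (0:ℂ) r
  have he : IsOpenEmbedding e := e.isOpenEmbedding (by simp [e])
  refine ⟨φ ∘ e, hφ.comp he, by simp [e, h0], ?_⟩
  rintro _ ⟨z, rfl⟩
  refine hb ?_
  have : e z ∈ e.target := e.map_source (by simp [e])
  rwa [OpenPartialHomeomorph.univBall_target _ hr] at this

/-- A homeomorphism of the plane supported in the unit disc, moving `0` to a given point. -/
lemma exists_plane_push {v : ℂ} (hv : ‖v‖ < 1) :
    ∃ e : ℂ ≃ₜ ℂ, e 0 = v ∧ ∀ z, 1 ≤ ‖z‖ → e z = z := by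
  let f : ℂ → ℂ := fun z => z + (max 0 (1 - ‖z‖) : ℝ) • v
  have hf : ApproximatesLinearOn f ((ContinuousLinearEquiv.refl ℝ ℂ : ℂ ≃L[ℝ] ℂ) : ℂ →L[ℝ] ℂ)
      univ ‖v‖₊ := by
    intro x _ y _
    have h1 : f x - f y - (x - y) = (max 0 (1 - ‖x‖) - max 0 (1 - ‖y‖) : ℝ) • v := by
      simp only [f, sub_smul]; ring
    have h2 : |max 0 (1 - ‖x‖) - max 0 (1 - ‖y‖)| ≤ ‖x - y‖ := by
      refine (abs_max_sub_max_le_max _ _ _ _).trans ?_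
      rw [sub_self, abs_zero, max_eq_right (abs_nonneg _), sub_sub_sub_cancel_left, abs_sub_comm]
      exact abs_norm_sub_norm_le x y
    simp only [ContinuousLinearEquiv.coe_coe, ContinuousLinearEquiv.coe_refl', id, coe_nnnorm]
    rw [h1, norm_smul, Real.norm_eq_abs, mul_comm]
    gcongr
  have hc : ‖v‖₊ < ‖((ContinuousLinearEquiv.refl ℝ ℂ).symm : ℂ →L[ℝ] ℂ)‖₊⁻¹ := by
    have : ((ContinuousLinearEquiv.refl ℝ ℂ).symm : ℂ →L[ℝ] ℂ) = ContinuousLinearMap.id ℝ ℂ := rfl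
    rw [this]
    simpa [← NNReal.coe_lt_coe] using hv
  refine ⟨hf.toHomeomorph f (Or.inr hc), ?_, fun z hz => ?_⟩
  · show f 0 = v
    simp [f]
  · show f z = z
    simp [f, max_eq_left (sub_nonpos.2 hz)]

lemma extend_continuous [T2Space X] {φ : ℂ → X} (hφ : IsOpenEmbedding φ) {e : ℂ → ℂ}
    (he : Continuous e) (h1 : ∀ z, 1 ≤ ‖z‖ → e z = z) :
    Continuous (Function.extend φ (φ ∘ e) id) := by
  have hK : IsClosed (φ '' Metric.closedBall 0 1) :=
    ((isCompact_closedBall (0:ℂ) 1).image hφ.continuous).isClosed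
  refine continuous_iff_continuousAt.2 fun x => ?_
  by_cases hx : x ∈ range φ
  · obtain ⟨z, rfl⟩ := hx
    rw [← hφ.continuousAt_iff]
    rw [Function.extend_comp hφ.injective]
    exact (hφ.continuous.comp he).continuousAt
  · have hx' : x ∈ (φ '' Metric.closedBall 0 1)ᶜ := fun h => hx (image_subset_range _ _ h)
    refine continuousAt_id.congr ?_
    filter_upwards [hK.isOpen_compl.mem_nhds hx'] with y hy
    by_cases hyr : y ∈ range φ
    · obtain ⟨z, rfl⟩ := hyr
      rw [hφ.injective.extend_apply, Function.comp, h1]; · rfl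
      by_contra hc
      exact hy ⟨z, by simpa using (not_le.1 hc).le, rfl⟩
    · rw [Function.extend_apply' _ _ _ (by simpa using hyr)]

/-- A homeomorphism of the plane fixing the complement of the unit disc acts through a chart on the
whole surface, the rest of the surface being fixed. -/
lemma extend_homeo [T2Space X] {φ : ℂ → X} (hφ : IsOpenEmbedding φ) (e : ℂ ≃ₜ ℂ)
    (h1 : ∀ z, 1 ≤ ‖z‖ → e z = z) :
    ∃ ψ : X ≃ₜ X, (∀ z, ψ (φ z) = φ (e z)) ∧ ∀ x ∉ range φ, ψ x = x := by
  have h2 : ∀ z, 1 ≤ ‖z‖ → e.symm z = z := fun z hz => by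
    rw [Homeomorph.symm_apply_eq, h1 z hz]
  have key : ∀ (e e' : ℂ → ℂ), (∀ z, e' (e z) = z) → ∀ x,
      Function.extend φ (φ ∘ e') id (Function.extend φ (φ ∘ e) id x) = x := by
    intro e e' h x
    by_cases hx : x ∈ range φ
    · obtain ⟨z, rfl⟩ := hx
      rw [hφ.injective.extend_apply, Function.comp, hφ.injective.extend_apply, Function.comp, h]
    · have := Function.extend_apply' (f := φ) (φ ∘ e) id x (by simpa using hx)
      rw [this]
      exact Function.extend_apply' (f := φ) (φ ∘ e') id x (by simpa using hx)
  refine ⟨⟨⟨Function.extend φ (φ ∘ e) id, Function.extend φ (φ ∘ e.symm) id,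
    key _ _ (fun z => by simp), key _ _ (fun z => by simp)⟩,
    extend_continuous hφ e.continuous h1, extend_continuous hφ e.symm.continuous h2⟩, ?_, ?_⟩
  · intro z
    exact hφ.injective.extend_apply _ _ _
  · intro x hx
    exact Function.extend_apply' _ _ _ (by simpa using hx)

/-- Points of a connected open set are exchanged by homeomorphisms supported in it. -/
lemma exists_homeo [Surf X] {U : Set X} (hU : IsOpen U) (hc : IsPreconnected U) {x y : X}
    (hx : x ∈ U) (hy : y ∈ U) : ∃ ψ : X ≃ₜ X, ψ x = y ∧ ∀ z ∉ U, ψ z = z := by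
  have step : ∀ x ∈ U, ∀ᶠ y in 𝓝[U] x, ∃ ψ : X ≃ₜ X, ψ x = y ∧ ∀ z ∉ U, ψ z = z := by
    intro x hx
    obtain ⟨φ, hφ, h0, hr⟩ := exists_chart_small (hU.mem_nhds hx)
    have : φ '' Metric.ball 0 1 ∈ 𝓝 x :=
      (hφ.isOpenMap _ Metric.isOpen_ball).mem_nhds ⟨0, by simp, h0⟩
    filter_upwards [mem_nhdsWithin_of_mem_nhds this] with y hy
    obtain ⟨v, hv, rfl⟩ := hy
    obtain ⟨e, he0, he1⟩ := exists_plane_push (v := v) (by simpa using hv)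
    obtain ⟨ψ, hψ, hψ'⟩ := extend_homeo hφ e he1
    exact ⟨ψ, by rw [← h0, hψ, he0], fun z hz => hψ' z (fun h => hz (hr h))⟩
  refine hc.induction₂' (fun x y => ∃ ψ : X ≃ₜ X, ψ x = y ∧ ∀ z ∉ U, ψ z = z) ?_ ?_ hx hy
  · intro x hx
    filter_upwards [step x hx] with y ⟨ψ, h1, h2⟩
    refine ⟨⟨ψ, h1, h2⟩, ψ.symm, by rw [← h1]; simp, fun z hz => ?_⟩
    rw [Homeomorph.symm_apply_eq, h2 z hz]
  · rintro x y z - - - ⟨ψ, h1, h2⟩ ⟨ψ', h1', h2'⟩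
    exact ⟨ψ.trans ψ', by simp [h1, h1'], fun w hw => by simp [h2 w hw, h2' w hw]⟩

end SurfDisc

namespace SurfDisc
variable {X : Type*} [TopologicalSpace X]

/-! ### One side of a Jordan curve in a simply connected surface is relatively compact -/

/-- A loop in a simply connected space contracts inside a compact set `K`; so a nonvanishing
function on `K` has a single-valued logarithm along the loop. -/
lemma exists_loop_log [SimplyConnectedSpace X] {γ : ℝ → X} (hγ : Continuous γ) (h01 : γ 0 = γ 1) :
    ∃ K : Set X, IsCompact K ∧ ∀ u : X → ℂ, ContinuousOn u K → (∀ x ∈ K, u x ≠ 0) →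
      ∃ l : ℝ → ℂ, ContinuousOn l (Icc 0 1) ∧ (∀ t ∈ Icc (0:ℝ) 1, Complex.exp (l t) = u (γ t)) ∧
        l 0 = l 1 := by
  let p : Path (γ 0) (γ 0) := ⟨⟨fun t => γ t, by fun_prop⟩, by simp, by simp [h01]⟩
  obtain ⟨F⟩ : (Path.refl (γ 0)).Homotopic p := SimplyConnectedSpace.paths_homotopic _ _
  refine ⟨range F, isCompact_range F.continuous, fun u hu h0 => ?_⟩
  have hF0 : ∀ s, F (0, s) = γ 0 := fun s => by simp
  have hF1 : ∀ s, F (1, s) = γ s := fun s => by rw [F.apply_one]; rfl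
  have hFl : ∀ t, F (t, 0) = γ 0 := fun t => F.source t
  have hFr : ∀ t, F (t, 1) = γ 0 := fun t => F.target t
  have hc : u (γ 0) ≠ 0 := h0 _ ⟨(0, 0), hF0 0⟩
  have huF : Continuous fun q => u (F q) :=
    hu.comp_continuous F.continuous (fun q => mem_range_self q)
  obtain ⟨G, hG, hexp, hG0⟩ := exists_log_homotopy (Y := unitInterval) univ
    (fun t s => u (F (projIcc 0 1 zero_le_one t, s)) / u (γ 0))
    (by
      refine Continuous.continuousOn ?_
      exact (huF.comp ((continuous_projIcc.comp continuous_fst).prodMk continuous_snd)).div_const _)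
    (fun t _ y _ => div_ne_zero (h0 _ (mem_range_self _)) hc)
    (fun y _ => by simp [projIcc_left, hc])
  have hend : ∀ s : unitInterval, (∀ t, F (t, s) = γ 0) → G 1 s = 0 := by
    intro s hs
    rw [← hG0 s trivial]
    refine const_of_exp (s := Icc (0:ℝ) 1) (h := fun t => G t s) isPreconnected_Icc ?_ ?_ (by simp)
      (by simp)
    · exact hG.comp (f := fun t : ℝ => (t, s)) (by fun_prop) (fun t ht => ⟨ht, trivial⟩)
    · intro t ht
      rw [hexp t ht s trivial, hs, div_self hc]
  refine ⟨fun t => G 1 (projIcc 0 1 zero_le_one t) + Complex.log (u (γ 0)), ?_, ?_, ?_⟩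
  · refine Continuous.continuousOn (Continuous.add ?_ continuous_const)
    exact hG.comp_continuous (f := fun t : ℝ => ((1:ℝ), projIcc 0 1 zero_le_one t))
      (continuous_const.prodMk continuous_projIcc) (fun t => by simp)
  · intro t ht
    rw [Complex.exp_add, hexp 1 (by simp) _ trivial, Complex.exp_log hc, projIcc_right]
    have : F ((⟨1, right_mem_Icc.2 zero_le_one⟩ : unitInterval), projIcc 0 1 zero_le_one t) = γ t := by
      have := hF1 (projIcc 0 1 zero_le_one t)
      rwa [projIcc_of_mem zero_le_one ht] at this ⊢
    rw [this]
    field_simp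
  · simp only [projIcc_left, projIcc_right]
    exact congrArg (· + _) ((hend 0 hFl).trans (hend 1 hFr).symm)

/-- The function `(ζ - y) / (ζ - y')` on a chart, interpolated between
radii `1` and `2` to the constant `1`, which is its value off the chart. -/
def cutoff (φ : ℂ → X) (y y' : ℂ) : X → ℂ :=
  Function.extend φ
    (fun ζ => 1 + ((max 0 (min 1 (2 - ‖ζ‖)) : ℝ) : ℂ) * ((ζ - y) / (ζ - y') - 1)) 1

lemma cutoff_apply {φ : ℂ → X} (hφ : IsOpenEmbedding φ) (y y' ζ : ℂ) :
    cutoff φ y y' (φ ζ) = 1 + ((max 0 (min 1 (2 - ‖ζ‖)) : ℝ) : ℂ) * ((ζ - y) / (ζ - y') - 1) :=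
  hφ.injective.extend_apply _ _ _

lemma cutoff_in {φ : ℂ → X} (hφ : IsOpenEmbedding φ) (y y' ζ : ℂ) (h : ‖ζ‖ ≤ 1) :
    cutoff φ y y' (φ ζ) = (ζ - y) / (ζ - y') := by
  rw [cutoff_apply hφ, min_eq_left (by linarith), max_eq_right zero_le_one]
  simp

lemma cutoff_continuousAt [T2Space X] {φ : ℂ → X} (hφ : IsOpenEmbedding φ) {y y' : ℂ} {x : X}
    (hx : x ≠ φ y') : ContinuousAt (cutoff φ y y') x := by
  have hK : IsClosed (φ '' Metric.closedBall 0 2) :=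
    ((isCompact_closedBall (0:ℂ) 2).image hφ.continuous).isClosed
  by_cases hr : x ∈ range φ
  · obtain ⟨z, rfl⟩ := hr
    have hz : z - y' ≠ 0 := sub_ne_zero.2 (fun h => hx (by rw [h]))
    rw [← hφ.continuousAt_iff, cutoff, Function.extend_comp hφ.injective]
    have : Continuous fun ζ : ℂ => ((max 0 (min 1 (2 - ‖ζ‖)) : ℝ) : ℂ) := by fun_prop
    refine ContinuousAt.add continuousAt_const (this.continuousAt.mul ?_)
    fun_prop (disch := assumption)
  · have hx' : x ∈ (φ '' Metric.closedBall 0 2)ᶜ := fun h => hr (image_subset_range _ _ h)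
    refine (continuousAt_const (y := (1:ℂ))).congr ?_
    filter_upwards [hK.isOpen_compl.mem_nhds hx'] with w hw
    by_cases hwr : w ∈ range φ
    · obtain ⟨z, rfl⟩ := hwr
      have : 2 - ‖z‖ ≤ 0 := by
        by_contra hc
        exact hw ⟨z, by simp; linarith, rfl⟩
      rw [cutoff_apply hφ, max_eq_left ((min_le_right _ _).trans this)]
      simp
    · rw [cutoff, Function.extend_apply' _ _ _ (by simpa using hwr)]
      rfl

/-- Outside the `ρ`-disc, where `y` and `y'` are small compared with `ζ`, the quotient
`(ζ - y) / (ζ - y')` is within `1 / 2` of `1`. -/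
lemma cutoff_re {φ : ℂ → X} (hφ : IsOpenEmbedding φ) {y y' : ℂ} {ρ : ℝ} (hρ : 0 < ρ)
    (hy : ‖y‖ < ρ / 10) (hy' : ‖y'‖ < ρ / 10) {x : X} (hx : x ∉ φ '' Metric.ball 0 ρ) :
    0 < (cutoff φ y y' x).re := by
  by_cases hr : x ∈ range φ
  · obtain ⟨z, rfl⟩ := hr
    have hz : ρ ≤ ‖z‖ := by
      by_contra hc
      exact hx ⟨z, by simpa using hc, rfl⟩
    have h1 : ρ * (9 / 10) ≤ ‖z - y'‖ := by
      have := norm_sub_norm_le z y'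
      linarith
    have h2 : z - y' ≠ 0 := norm_pos_iff.1 (by linarith)
    have h3 : ‖(z - y) / (z - y') - 1‖ ≤ 1 / 2 := by
      rw [div_sub_one h2, norm_div, div_le_iff₀ (by linarith)]
      have : ‖(z - y) - (z - y')‖ ≤ ‖y'‖ + ‖y‖ := by
        rw [show (z - y) - (z - y') = y' - y by ring]
        exact norm_sub_le _ _
      linarith
    rw [cutoff_apply hφ, Complex.add_re, Complex.one_re, Complex.re_ofReal_mul]
    set w := (z - y) / (z - y') - 1
    have h4 := (abs_le.1 (Complex.abs_re_le_norm w)).1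
    have h5 : 0 ≤ max 0 (min 1 (2 - ‖z‖)) := le_max_left _ _
    have h6 : max 0 (min 1 (2 - ‖z‖)) ≤ 1 := max_le zero_le_one (min_le_left _ _)
    nlinarith
  · rw [cutoff, Function.extend_apply' _ _ _ (by simpa using hr)]
    simp

/-- Along an arc with both ends in the half plane where the principal logarithm is continuous. -/
lemma log_end {γ : ℝ → X} (hγ : Continuous γ) {l : ℝ → ℂ} {u : X → ℂ} {s t : ℝ} (hst : s ≤ t)
    (hl : ContinuousOn l (Icc s t)) (hexp : ∀ r ∈ Icc s t, Complex.exp (l r) = u (γ r))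
    (hu : ∀ r ∈ Icc s t, ContinuousAt u (γ r)) (hre : ∀ r ∈ Icc s t, 0 < (u (γ r)).re) :
    l t - Complex.log (u (γ t)) = l s - Complex.log (u (γ s)) := by
  refine const_of_exp_eq (s := Icc s t) (h := l) (k := fun r => Complex.log (u (γ r)))
    isPreconnected_Icc hl ?_ ?_ (right_mem_Icc.2 hst) (left_mem_Icc.2 hst)
  · intro r hr
    refine ContinuousAt.continuousWithinAt ?_
    refine ContinuousAt.clog ?_ (Or.inl (hre r hr))
    exact ContinuousAt.comp (g := u) (hu r hr) hγ.continuousAt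
  · intro r hr
    rw [hexp r hr, Complex.exp_log]
    intro h
    have := hre r hr
    simp [h] at this

/-- The key estimate: if the loop `γ` contracts off the points `φ y` and `φ y'` next to `γ (1/2)`
then the increments of `log (y - a t)` and `log (y' - a t)` along the arc `a` of `γ` through
`γ (1/2)` nearly agree. -/
lemma log_increment [T2Space X] {γ : ℝ → X} (hγ : Continuous γ) (h01 : γ 0 = γ 1) {φ : ℂ → X}
    (hφ : IsOpenEmbedding φ) {s0 s1 ρ : ℝ} (hs0 : 0 ≤ s0) (hs : s0 < s1) (hs1 : s1 ≤ 1)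
    (hρ : 0 < ρ) {a : ℝ → ℂ}
    (ha : ∀ t ∈ Icc (0:ℝ) 1, φ (a t) = γ (s0 + t * (s1 - s0)))
    (han : ∀ t ∈ Icc (0:ℝ) 1, ‖a t‖ ≤ 1)
    (hout : ∀ t ∈ Icc (0:ℝ) s0 ∪ Icc s1 1, γ t ∉ φ '' Metric.ball 0 ρ)
    {G : ℝ → ℂ → ℂ}
    (hG : ContinuousOn (fun q : ℝ × ℂ => G q.1 q.2) (Icc 0 1 ×ˢ (a '' Icc 0 1)ᶜ))
    (hGexp : ∀ t ∈ Icc (0:ℝ) 1, ∀ y ∈ (a '' Icc 0 1)ᶜ,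
        Complex.exp (G t y) = (y - a t) / (y - a 0))
    (hG0 : ∀ y ∈ (a '' Icc 0 1)ᶜ, G 0 y = 0)
    {y y' : ℂ} (hy : ‖y‖ < ρ / 10) (hy' : ‖y'‖ < ρ / 10) (hya : y ∉ a '' Icc 0 1)
    (hya' : y' ∉ a '' Icc 0 1)
    {l : ℝ → ℂ} (hl : ContinuousOn l (Icc 0 1))
    (hlexp : ∀ t ∈ Icc (0:ℝ) 1, Complex.exp (l t) = cutoff φ y y' (γ t)) (hl01 : l 0 = l 1) :
    |(G 1 y - G 1 y').im| < Real.pi := by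
  have hyne : ∀ {y}, y ∉ a '' Icc 0 1 → ∀ t ∈ Icc (0:ℝ) 1, a t - y ≠ 0 := by
    intro y hya t ht h
    exact hya ⟨t, ht, sub_eq_zero.1 h⟩
  have h0m : (0:ℝ) ∈ Icc (0:ℝ) 1 := by simp
  have h1m : (1:ℝ) ∈ Icc (0:ℝ) 1 := by simp
  have hmaps : MapsTo (fun t : ℝ => s0 + t * (s1 - s0)) (Icc 0 1) (Icc 0 1) :=
    fun t ht => ⟨by nlinarith [ht.1, ht.2], by nlinarith [ht.1, ht.2]⟩
  have hGc : ∀ {y}, y ∉ a '' Icc 0 1 → ContinuousOn (fun t => G t y) (Icc 0 1) := by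
    intro y hya
    exact hG.comp (f := fun t : ℝ => (t, y)) (by fun_prop) (fun t ht => ⟨ht, hya⟩)
  have e1 := const_of_exp_eq (s := Icc (0:ℝ) 1)
    (h := fun t => l (s0 + t * (s1 - s0)) - l s0)
    (k := fun t => G t y - G t y') isPreconnected_Icc
    ((hl.comp (by fun_prop) hmaps).sub continuousOn_const) ((hGc hya).sub (hGc hya')) ?_ h1m h0m
  swap
  · intro t ht
    have k1 := hyne hya t ht
    have k2 := hyne hya' t ht
    have k3 := hyne hya 0 h0m
    have k4 := hyne hya' 0 h0m
    have e0 : Complex.exp (l s0) = (a 0 - y) / (a 0 - y') := by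
      rw [hlexp s0 ⟨hs0, by linarith⟩, ← cutoff_in hφ y y' (a 0) (han 0 h0m), ha 0 h0m]
      simp
    rw [Complex.exp_sub, Complex.exp_sub, hlexp _ (hmaps ht), ← ha t ht, cutoff_in hφ _ _ _ (han t ht),
      e0, hGexp t ht y hya, hGexp t ht y' hya']
    have k1' : y - a t ≠ 0 := by rw [← neg_sub]; exact neg_ne_zero.2 k1
    have k2' : y' - a t ≠ 0 := by rw [← neg_sub]; exact neg_ne_zero.2 k2
    have k3' : y - a 0 ≠ 0 := by rw [← neg_sub]; exact neg_ne_zero.2 k3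
    have k4' : y' - a 0 ≠ 0 := by rw [← neg_sub]; exact neg_ne_zero.2 k4
    rw [← neg_sub y, ← neg_sub y', ← neg_sub y (a 0), ← neg_sub y' (a 0)]
    field_simp
  simp only [one_mul, zero_mul, add_zero, hG0 y hya, hG0 y' hya', sub_self] at e1
  rw [show s0 + (s1 - s0) = s1 by ring] at e1
  have hcont : ∀ t ∈ Icc (0:ℝ) s0 ∪ Icc s1 1, ContinuousAt (cutoff φ y y') (γ t) := by
    intro t ht
    refine cutoff_continuousAt hφ (fun h => hout t ht ⟨y', ?_, h.symm⟩)
    simp; linarith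
  have hre : ∀ t ∈ Icc (0:ℝ) s0 ∪ Icc s1 1, 0 < (cutoff φ y y' (γ t)).re :=
    fun t ht => cutoff_re hφ hρ hy hy' (hout t ht)
  have e2 := log_end hγ hs0 (hl.mono (Icc_subset_Icc_right (by linarith)))
    (fun r hr => hlexp r ⟨hr.1, by linarith [hr.2]⟩) (fun r hr => hcont r (Or.inl hr))
    (fun r hr => hre r (Or.inl hr))
  have e3 := log_end hγ hs1 (hl.mono (Icc_subset_Icc_left (by linarith)))
    (fun r hr => hlexp r ⟨by linarith [hr.1], hr.2⟩) (fun r hr => hcont r (Or.inr hr))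
    (fun r hr => hre r (Or.inr hr))
  rw [← h01, ← hl01] at e3
  have e4 : G 1 y - G 1 y' =
      Complex.log (cutoff φ y y' (γ s1)) - Complex.log (cutoff φ y y' (γ s0)) := by
    linear_combination -e1 - e2 - e3
  rw [e4, Complex.sub_im, Complex.log_im, Complex.log_im]
  have a1 := Complex.abs_arg_lt_pi_div_two_iff.2 (Or.inl (hre s1 (Or.inr ⟨le_rfl, hs1⟩)))
  have a0 := Complex.abs_arg_lt_pi_div_two_iff.2 (Or.inl (hre s0 (Or.inl ⟨hs0, le_rfl⟩)))
  have := abs_sub (Complex.arg (cutoff φ y y' (γ s1))) (Complex.arg (cutoff φ y y' (γ s0)))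
  linarith

/-- A contraction of the curve sweeps out one of its two sides, which is therefore relatively
compact. -/
theorem IsSide.compact_or [Surf X] [SimplyConnectedSpace X] {A J : Set X} (hJ : IsJordan J)
    (hA : IsSide A J) : IsCompact (closure A) ∨ IsCompact (closure (A ∪ J)ᶜ) := by
  have hcl := hJ.curveLike
  have hB := hA.compl hcl
  set B := (A ∪ J)ᶜ with hBdef
  obtain ⟨γ, hγ, hper, hrange⟩ := hJ
  have h01 : γ 0 = γ 1 := (hper 0 1).2 ⟨1, by simp⟩
  obtain ⟨K, hK, hlog⟩ := exists_loop_log hγ h01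
  by_cases hAK : A ⊆ K
  · exact Or.inl (hK.of_isClosed_subset isClosed_closure (closure_minimal hAK hK.isClosed))
  by_cases hBK : B ⊆ K
  · exact Or.inr (hK.of_isClosed_subset isClosed_closure (closure_minimal hBK hK.isClosed))
  exfalso
  obtain ⟨pa, hpa, hpaK⟩ := not_subset.1 hAK
  obtain ⟨pb, hpb, hpbK⟩ := not_subset.1 hBK
  obtain ⟨φ, hφ, hφ0⟩ := Surf.exists_chart (γ (1 / 2))
  -- an arc of the curve around `γ (1/2)` inside the chart
  obtain ⟨δ, hδ, hδ2, hδb⟩ : ∃ δ : ℝ, 0 < δ ∧ δ < 1 / 2 ∧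
      ∀ t ∈ Icc (1 / 2 - δ) (1 / 2 + δ), γ t ∈ φ '' Metric.ball 0 1 := by
    have : γ ⁻¹' (φ '' Metric.ball 0 1) ∈ 𝓝 (1 / 2) := hγ.continuousAt
      ((hφ.isOpenMap _ Metric.isOpen_ball).mem_nhds ⟨0, by simp, hφ0⟩)
    obtain ⟨ε, hε, hb⟩ := Metric.mem_nhds_iff.1 this
    refine ⟨min (ε / 2) (1 / 4), by positivity, ?_, fun t ht => hb ?_⟩
    · exact (min_le_right _ _).trans_lt (by norm_num)
    · rw [Metric.mem_ball, Real.dist_eq, abs_lt]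
      have := min_le_left (ε / 2) (1 / 4)
      constructor <;> linarith [ht.1, ht.2]
  set s0 := 1 / 2 - δ with hs0d
  set s1 := 1 / 2 + δ with hs1d
  have hs0 : 0 < s0 := by linarith
  have hs01 : s0 < s1 := by linarith
  have hs1 : s1 < 1 := by linarith
  have hαm : IsArcMap (fun t : ℝ => γ (s0 + t * (s1 - s0))) := by
    refine ⟨by fun_prop, fun s hs t ht h => ?_⟩
    have := param_injOn hper (u := s0) (v := s1) ⟨by nlinarith [hs.1, hs.2], by nlinarith [hs.1, hs.2]⟩
      ⟨by nlinarith [ht.1, ht.2], by nlinarith [ht.1, ht.2]⟩ (by linarith) h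
    nlinarith
  have hmem : ∀ t ∈ Icc (0:ℝ) 1, s0 + t * (s1 - s0) ∈ Icc s0 s1 :=
    fun t ht => ⟨by nlinarith [ht.1, ht.2], by nlinarith [ht.1, ht.2]⟩
  obtain ⟨a, ham, ha⟩ := exists_arc_lift hφ hαm (by
    rintro _ ⟨t, ht, rfl⟩
    exact image_subset_range _ _ (hδb _ (hmem t ht)))
  have han : ∀ t ∈ Icc (0:ℝ) 1, ‖a t‖ ≤ 1 := by
    intro t ht
    obtain ⟨w, hw, hwe⟩ := hδb _ (hmem t ht)
    have : a t = w := hφ.injective ((ha t ht).trans hwe.symm)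
    rw [this]
    exact (by simpa using hw : ‖w‖ < 1).le
  have hahalf : a (1 / 2) = 0 := by
    refine hφ.injective ((ha _ (by norm_num)).trans ?_)
    rw [hφ0]; congr 1; linarith
  obtain ⟨ρ, hρ, hρ1, hout⟩ : ∃ ρ : ℝ, 0 < ρ ∧ ρ ≤ 1 ∧
      ∀ t ∈ Icc (0:ℝ) s0 ∪ Icc s1 1, γ t ∉ φ '' Metric.ball 0 ρ := by
    have hC : IsClosed (γ '' (Icc (0:ℝ) s0 ∪ Icc s1 1)) :=
      ((isCompact_Icc.union isCompact_Icc).image hγ).isClosed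
    have hn : φ 0 ∉ γ '' (Icc (0:ℝ) s0 ∪ Icc s1 1) := by
      rw [hφ0]
      rintro ⟨t, ht, he⟩
      obtain ⟨n, hn⟩ := (hper t (1 / 2)).1 he
      have ht' : t ∈ Icc (0:ℝ) 1 := by
        rcases ht with h | h
        · exact ⟨h.1, by linarith [h.2]⟩
        · exact ⟨by linarith [h.1], h.2⟩
      have n1 : (n:ℝ) < 1 := by linarith [ht'.1]
      have n2 : (-1:ℝ) < n := by linarith [ht'.2]
      have : n = 0 := by
        have n1' : n < 1 := by exact_mod_cast n1
        have n2' : -1 < n := by exact_mod_cast n2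
        omega
      rw [this] at hn
      simp only [Int.cast_zero, add_zero] at hn
      rcases ht with h | h
      · linarith [h.2]
      · linarith [h.1]
    have : φ ⁻¹' (γ '' (Icc (0:ℝ) s0 ∪ Icc s1 1))ᶜ ∈ 𝓝 0 :=
      hφ.continuous.continuousAt (hC.isOpen_compl.mem_nhds hn)
    obtain ⟨ε, hε, hb⟩ := Metric.mem_nhds_iff.1 this
    refine ⟨min ε 1, by positivity, min_le_right _ _, ?_⟩
    rintro t ht ⟨w, hw, hwe⟩
    exact hb (Metric.ball_subset_ball (min_le_left _ _) hw) (by rw [hwe]; exact ⟨t, ht, rfl⟩)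
  obtain ⟨G, hG, hGexp, hG0⟩ := exists_log_path a ham.cont
  -- near `0`, the lifted curve is exactly the arc
  have hKJ : ∀ y ∈ Metric.ball (0:ℂ) ρ, (y ∈ a '' Icc 0 1 ↔ φ y ∈ J) := by
    intro y hy
    constructor
    · rintro ⟨t, ht, rfl⟩
      rw [ha t ht, ← hrange]
      exact mem_range_self _
    · intro h
      rw [← hrange, param_range hper 0] at h
      obtain ⟨t, ht, he⟩ := h
      rw [zero_add] at ht
      have h1 : ¬ (t ∈ Icc (0:ℝ) s0 ∪ Icc s1 1) := fun h => hout t h ⟨y, hy, he.symm⟩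
      have h2 : s0 < t := by
        by_contra hc
        exact h1 (Or.inl ⟨ht.1, not_lt.1 hc⟩)
      have h3 : t < s1 := by
        by_contra hc
        exact h1 (Or.inr ⟨not_lt.1 hc, ht.2.le⟩)
      refine ⟨(t - s0) / (s1 - s0), ⟨div_nonneg (by linarith) (by linarith),
        (div_le_one (by linarith)).2 (by linarith)⟩, hφ.injective ?_⟩
      rw [ha _ ⟨div_nonneg (by linarith) (by linarith),
        (div_le_one (by linarith)).2 (by linarith)⟩, ← he]
      congr 1
      have : s1 - s0 ≠ 0 := by linarith
      field_simp
      ring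
  have key : ∀ y y' : ℂ, ‖y‖ < ρ / 10 → ‖y'‖ < ρ / 10 → φ y ∈ A → φ y' ∈ B →
      |(G 1 y - G 1 y').im| < Real.pi := by
    intro y y' hy hy' hyA hyB
    obtain ⟨ψ, hψ, hψ'⟩ := exists_homeo hA.isOpen hA.preconn hpa hyA
    obtain ⟨χ, hχ, hχ'⟩ := exists_homeo hB.isOpen hB.preconn hpb hyB
    have hAB : ∀ x ∈ A, x ∉ B := fun x hx h => h (Or.inl hx)
    have hψK : ∀ x ∈ K, χ (ψ x) ≠ φ y := by
      intro x hx h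
      have h1 : ψ x = φ y := χ.injective (h.trans (hχ' _ (hAB _ hyA)).symm)
      exact hpaK (ψ.injective (h1.trans hψ.symm) ▸ hx)
    have hψK' : ∀ x ∈ K, χ (ψ x) ≠ φ y' := by
      intro x hx h
      have h1 : ψ x = pb := χ.injective (h.trans hχ.symm)
      have h2 : ψ pb = pb := hψ' _ (fun h => hAB _ h hpb)
      exact hpbK (ψ.injective (h1.trans h2.symm) ▸ hx)
    have hψJ : ∀ t, χ (ψ (γ t)) = γ t := by
      intro t
      have : γ t ∈ J := hrange ▸ mem_range_self t
      rw [hψ' _ (fun h => hA.disj _ h this), hχ' _ (fun h => hB.disj _ h this)]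
    obtain ⟨l, hl, hlexp, hl01⟩ := hlog (fun x => cutoff φ y y' (χ (ψ x)))
      (fun x hx => ContinuousAt.continuousWithinAt
        (ContinuousAt.comp (f := fun x => χ (ψ x)) (cutoff_continuousAt hφ (hψK' x hx))
          (by fun_prop))) (by
        intro x hx
        by_cases hm : χ (ψ x) ∈ φ '' Metric.ball 0 ρ
        · obtain ⟨w, hw, hwe⟩ := hm
          have hw1 : ‖w‖ < ρ := by simpa using hw
          rw [← hwe, cutoff_in hφ _ _ _ (by linarith)]
          refine div_ne_zero (sub_ne_zero.2 fun h => ?_) (sub_ne_zero.2 fun h => ?_)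
          · exact hψK x hx (by rw [← hwe, h])
          · exact hψK' x hx (by rw [← hwe, h])
        · intro h
          have := cutoff_re hφ hρ hy hy' hm
          rw [h] at this
          simp at this)
    simp only [hψJ] at hlexp
    have hyb : y ∈ Metric.ball (0:ℂ) ρ := by simp; linarith
    have hyb' : y' ∈ Metric.ball (0:ℂ) ρ := by simp; linarith
    exact log_increment hγ h01 hφ hs0.le hs01 hs1.le hρ ha han hout hG hGexp hG0 hy hy'
      (fun h => hA.disj _ hyA ((hKJ y hyb).1 h)) (fun h => hB.disj _ hyB ((hKJ y' hyb').1 h))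
      hl hlexp hl01
  -- a branch of the logarithm near `0`
  have n0 : (0:ℂ) ≠ a 0 := by
    rw [← hahalf]
    exact fun h => by
      have := ham.inj (by norm_num) (by norm_num) h
      norm_num at this
  have n1 : (0:ℂ) ≠ a 1 := by
    rw [← hahalf]
    exact fun h => by
      have := ham.inj (by norm_num) (by norm_num) h
      norm_num at this
  obtain ⟨V, μ, hV, h0V, hVs, hμ, hμexp⟩ := exists_local_log (Y := ℂ) (z := 0)
    (m := fun y => (y - a 1) / (y - a 0)) (s := {a 0}ᶜ) (isOpen_ne.mem_nhds n0)
    (ContinuousOn.div (by fun_prop) (by fun_prop) (fun y hy => sub_ne_zero.2 hy))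
    (div_ne_zero (sub_ne_zero.2 n1) (sub_ne_zero.2 n0))
  obtain ⟨r, hr, hrρ, hrV, hrμ⟩ : ∃ r : ℝ, 0 < r ∧ r ≤ ρ / 10 ∧ Metric.ball (0:ℂ) r ⊆ V ∧
      ∀ y ∈ Metric.ball (0:ℂ) r, ‖μ y - μ 0‖ < 1 := by
    have h1 : ContinuousAt μ 0 := hμ.continuousAt (hV.mem_nhds h0V)
    have h2 := inter_mem (hV.mem_nhds h0V) (h1 (Metric.ball_mem_nhds (μ 0) one_pos))
    obtain ⟨ε, hε, hb⟩ := Metric.mem_nhds_iff.1 h2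
    refine ⟨min ε (ρ / 10), by positivity, min_le_right _ _, fun y hy => ?_, fun y hy => ?_⟩
    · exact (hb (Metric.ball_subset_ball (min_le_left _ _) hy)).1
    · have := (hb (Metric.ball_subset_ball (min_le_left _ _) hy)).2
      simpa [dist_eq_norm] using this
  have hbρ : Metric.ball (0:ℂ) r ⊆ Metric.ball 0 ρ := Metric.ball_subset_ball (by linarith)
  have hk : ∀ y ∈ Metric.ball (0:ℂ) r, y ∉ a '' Icc 0 1 →
      ∃ n : ℤ, G 1 y = μ y + n * (2 * Real.pi * Complex.I) := by
    intro y hy hya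
    refine Complex.exp_eq_exp_iff_exists_int.1 ?_
    rw [hGexp 1 (by simp) y hya, hμexp y (hrV hy)]
  choose! k hk using hk
  have hside : ∀ y ∈ Metric.ball (0:ℂ) r, y ∉ a '' Icc 0 1 → φ y ∈ A ∨ φ y ∈ B := by
    intro y hy hya
    by_cases h : φ y ∈ A
    · exact Or.inl h
    · exact Or.inr (fun h' => h'.elim h (fun h'' => hya ((hKJ y (hbρ hy)).2 h'')))
  have hkk : ∀ y ∈ Metric.ball (0:ℂ) r, ∀ y' ∈ Metric.ball (0:ℂ) r, φ y ∈ A → φ y' ∈ B →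
      k y = k y' := by
    intro y hy y' hy' hyA hyB
    have hya : y ∉ a '' Icc 0 1 := fun h => hA.disj _ hyA ((hKJ y (hbρ hy)).1 h)
    have hya' : y' ∉ a '' Icc 0 1 := fun h => hB.disj _ hyB ((hKJ y' (hbρ hy')).1 h)
    have hn : ‖y‖ < ρ / 10 := (by simpa using hy : ‖y‖ < r).trans_le hrρ
    have hn' : ‖y'‖ < ρ / 10 := (by simpa using hy' : ‖y'‖ < r).trans_le hrρ
    have e := key y y' hn hn' hyA hyB
    rw [hk y hy hya, hk y' hy' hya'] at e
    have m1 := (Complex.abs_im_le_norm (μ y - μ 0)).trans_lt (hrμ y hy)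
    have m2 := (Complex.abs_im_le_norm (μ y' - μ 0)).trans_lt (hrμ y' hy')
    simp only [Complex.sub_im, Complex.add_im, Complex.mul_im, Complex.intCast_re,
      Complex.intCast_im, Complex.mul_re, Complex.ofReal_re, Complex.ofReal_im, Complex.I_re,
      Complex.I_im, Complex.re_ofNat, Complex.im_ofNat] at e m1 m2
    have hpi := Real.pi_gt_three
    rw [abs_lt] at e m1 m2
    have b1 : ((k y - k y' : ℤ) : ℝ) < 1 := by push_cast; nlinarith
    have b2 : (-1 : ℝ) < ((k y - k y' : ℤ) : ℝ) := by push_cast; nlinarith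
    have b1' : k y - k y' < 1 := by exact_mod_cast b1
    have b2' : -1 < k y - k y' := by exact_mod_cast b2
    omega
  have hcl0 : ∀ E : Set X, closure E = E ∪ J → ∃ y ∈ Metric.ball (0:ℂ) r, φ y ∈ E := by
    intro E hE
    have h1 : φ 0 ∈ closure E := by
      rw [hE, hφ0, ← hrange]; exact Or.inr (mem_range_self _)
    obtain ⟨_, ⟨y, hy, rfl⟩, hyE⟩ := mem_closure_iff.1 h1 _
      (hφ.isOpenMap _ (Metric.isOpen_ball (x := (0:ℂ)) (ε := r))) ⟨0, by simpa using hr, rfl⟩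
    exact ⟨y, hy, hyE⟩
  obtain ⟨ya, hya, hyaA⟩ := hcl0 A (hA.closure_eq hcl)
  obtain ⟨yb, hyb, hybB⟩ := hcl0 B (hB.closure_eq hcl)
  have hkc : ∀ y ∈ Metric.ball (0:ℂ) r, y ∉ a '' Icc 0 1 → k y = k yb := by
    intro y hy h
    rcases hside y hy h with h | h
    · exact hkk y hy yb hyb h hybB
    · rw [← hkk ya hya y hy hyaA h, hkk ya hya yb hyb hyaA hybB]
  refine no_ext ham (g := G 1) (s := 1 / 2) (B := Metric.ball 0 r) (n := 1)
    (S := fun y => Complex.exp ((μ y + k yb * (2 * Real.pi * Complex.I)) / 2)) ?_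
    (fun y hy => hGexp 1 (by simp) y hy) (by norm_num) Metric.isOpen_ball
    (by rw [hahalf]; simpa using hr) one_ne_zero ?_ ?_ ?_
  · exact hG.comp (f := fun y : ℂ => ((1:ℝ), y)) (by fun_prop) (fun y hy => ⟨by simp, hy⟩)
  · have := hμ.mono hrV
    fun_prop
  · intro y hy _ _
    rw [mul_one, pow_one, ← Complex.exp_nat_mul, ← hμexp y (hrV hy)]
    have := Complex.exp_periodic.int_mul (k yb) (μ y)
    rw [← this]
    congr 1
    push_cast; ring
  · intro y hy hya'
    rw [hk y hy hya', hkc y hy hya']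

/-- A Jordan curve in a simply connected surface bounds a cell. -/
theorem IsJordan.exists_cell [Surf X] [SimplyConnectedSpace X] {J : Set X} (hJ : IsJordan J) :
    ∃ A, IsCell A J := by
  obtain ⟨A, hA, hA', -⟩ := hJ.curveLike.exists_side
  rcases hA.compact_or hJ with h | h
  · exact ⟨A, hJ, hA, h⟩
  · exact ⟨_, hJ, hA', h⟩

end SurfDisc

namespace SurfDisc
variable {X : Type*} [TopologicalSpace X]

/-! ### Arcs in open sets, and arcs reaching the boundary of a side -/

/-- `x` and `y` are equal, or are the ends of an arc in `U`. -/
def ArcJoined (U : Set X) (x y : X) : Prop :=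
  x = y ∨ ∃ a : ℝ → X, IsArcMap a ∧ a 0 = x ∧ a 1 = y ∧ a '' Icc 0 1 ⊆ U

lemma ArcJoined.mono {U V : Set X} {x y : X} (h : ArcJoined U x y) (hUV : U ⊆ V) :
    ArcJoined V x y := by
  rcases h with h | ⟨a, h1, h2, h3, h4⟩
  · exact Or.inl h
  · exact Or.inr ⟨a, h1, h2, h3, h4.trans hUV⟩

lemma ArcJoined.symm {U : Set X} {x y : X} (h : ArcJoined U x y) : ArcJoined U y x := by
  rcases h with h | ⟨a, h1, h2, h3, h4⟩
  · exact Or.inl h.symm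
  · exact Or.inr ⟨_, h1.rev, by simpa using h3, by simpa using h2, by rwa [rev_image]⟩

lemma IsArcMap.comp_homeo {a : ℝ → X} (ha : IsArcMap a) (ψ : X ≃ₜ X) :
    IsArcMap (fun t => ψ (a t)) :=
  ⟨ψ.continuous.comp_continuousOn ha.cont, fun _ hs _ ht h => ha.inj hs ht (ψ.injective h)⟩

/-- Connected open sets are arcwise connected, by injective arcs. -/
lemma arcJoined_of_preconnected [Surf X] {U : Set X} (hU : IsOpen U) (hc : IsPreconnected U)
    {x y : X} (hx : x ∈ U) (hy : y ∈ U) : ArcJoined U x y := by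
  refine (const_prop hc (p := fun z => ArcJoined U x z) ?_ hx hy).1 (Or.inl rfl)
  intro y hy
  refine Filter.Eventually.filter_mono nhdsWithin_le_nhds ?_
  by_cases hxy : x = y
  · subst hxy
    obtain ⟨φ, hφ, h0, hr⟩ := exists_chart_small (hU.mem_nhds hy)
    filter_upwards [hφ.isOpen_range.mem_nhds ⟨0, h0⟩] with z hz
    refine ⟨fun _ => Or.inl rfl, fun _ => ?_⟩
    obtain ⟨w, rfl⟩ := hz
    by_cases hw : w = 0
    · left; rw [hw, h0]
    · refine Or.inr ⟨fun t => φ (t * w), ⟨?_, fun s _ t _ h => ?_⟩, by simp [h0], by simp, ?_⟩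
      · exact (hφ.continuous.comp (by fun_prop)).continuousOn
      · have := hφ.injective h
        simpa [hw] using this
      · rintro _ ⟨t, -, rfl⟩
        exact hr (mem_range_self _)
  · have hN : U ∩ {x}ᶜ ∈ 𝓝 y := inter_mem (hU.mem_nhds hy) (isOpen_ne.mem_nhds (Ne.symm hxy))
    obtain ⟨φ, hφ, h0, hr⟩ := exists_chart_small hN
    filter_upwards [hφ.isOpen_range.mem_nhds ⟨0, h0⟩] with z hz
    obtain ⟨ψ, hψ, hψ'⟩ := exists_homeo hφ.isOpen_range (isPreconnected_range hφ.continuous)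
      ⟨0, h0⟩ hz
    have hψx : ψ x = x := hψ' x (fun h => (hr h).2 rfl)
    have hψU : ∀ w ∈ U, ψ w ∈ U := by
      intro w hw
      by_cases h : ψ w ∈ range φ
      · exact (hr h).1
      · have : w ∉ range φ := by
          intro hw'
          by_contra _
          have h2 := hψ' _ h
          exact h (by rw [ψ.injective h2]; exact hw')
        rwa [hψ' w this]
    have hψU' : ∀ w ∈ U, ψ.symm w ∈ U := by
      intro w hw
      by_cases h : ψ.symm w ∈ range φ
      · exact (hr h).1
      · have := hψ' _ h
        rw [ψ.apply_symm_apply] at this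
        rwa [← this]
    constructor
    · rintro (h | ⟨a, h1, h2, h3, h4⟩)
      · exact absurd h (fun h => (hr hz).2 h.symm)
      · refine Or.inr ⟨_, h1.comp_homeo ψ.symm, ?_, ?_, ?_⟩
        · rw [h2, ψ.symm_apply_eq, hψx]
        · rw [h3, ψ.symm_apply_eq, hψ]
        · rintro _ ⟨t, ht, rfl⟩
          exact hψU' _ (h4 ⟨t, ht, rfl⟩)
    · rintro (h | ⟨a, h1, h2, h3, h4⟩)
      · exact absurd h hxy
      · refine Or.inr ⟨_, h1.comp_homeo ψ, ?_, ?_, ?_⟩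
        · rw [h2, hψx]
        · rw [h3, hψ]
        · rintro _ ⟨t, ht, rfl⟩
          exact hψU _ (h4 ⟨t, ht, rfl⟩)

/-- The first point of an arc on a closed set. -/
lemma exists_first {a : ℝ → X} {s : ℝ} (hs : s ≤ 1) (ha : ContinuousOn a (Icc s 1)) {C : Set X}
    (hC : IsClosed C) (h1 : a 1 ∈ C) :
    ∃ c ∈ Icc s 1, a c ∈ C ∧ ∀ t ∈ Icc s c, a t ∈ C → t = c := by
  have hcl : IsClosed (Icc s 1 ∩ a ⁻¹' C) := ha.preimage_isClosed_of_isClosed isClosed_Icc hC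
  have hcpt : IsCompact (Icc s 1 ∩ a ⁻¹' C) := isCompact_Icc.of_isClosed_subset hcl inter_subset_left
  obtain ⟨c, hc, hmin⟩ := hcpt.exists_isLeast ⟨1, ⟨hs, le_rfl⟩, h1⟩
  exact ⟨c, hc.1, hc.2, fun t ht htC =>
    le_antisymm ht.2 (hmin ⟨⟨ht.1, ht.2.trans hc.1.2⟩, htC⟩)⟩

/-- Concatenation of two arcs that meet only at the common end. -/
lemma IsArcMap.concat {a b : ℝ → X} (ha : IsArcMap a) (hb : IsArcMap b) (hab : a 1 = b 0)
    (hd : ∀ s ∈ Icc (0:ℝ) 1, ∀ t ∈ Icc (0:ℝ) 1, a s = b t → s = 1) :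
    ∃ c : ℝ → X, IsArcMap c ∧ c 0 = a 0 ∧ c 1 = b 1 ∧
      c '' Icc 0 1 = a '' Icc 0 1 ∪ b '' Icc 0 1 ∧ c (1 / 2) = a 1 := by
  classical
  let c : ℝ → X := fun t => if t ≤ 1 / 2 then a (2 * t) else b (2 * t - 1)
  have c1 : ∀ t ≤ 1 / 2, c t = a (2 * t) := fun t ht => if_pos ht
  have c2 : ∀ t, 1 / 2 ≤ t → c t = b (2 * t - 1) := by
    intro t ht
    rcases eq_or_lt_of_le ht with h | h
    · rw [c1 t h.ge, ← h]; norm_num [hab]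
    · exact if_neg (not_le.2 h)
  refine ⟨c, ⟨contOn_glue (t := 1 / 2) (by norm_num) (by norm_num) ?_ ?_, ?_⟩, ?_, ?_, ?_, ?_⟩
  · exact (ha.cont.comp (f := fun t : ℝ => 2 * t) (by fun_prop)
      (fun t ht => ⟨by linarith [ht.1], by linarith [ht.2]⟩)).congr (fun t ht => c1 t ht.2)
  · exact (hb.cont.comp (f := fun t : ℝ => 2 * t - 1) (by fun_prop)
      (fun t ht => ⟨by linarith [ht.1], by linarith [ht.2]⟩)).congr (fun t ht => c2 t ht.1)
  · have key : ∀ s ∈ Icc (0:ℝ) 1, ∀ t ∈ Icc (0:ℝ) 1, s ≤ 1 / 2 → 1 / 2 ≤ t → c s = c t → s = t := by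
      intro s hs t ht h1 h2 h
      rw [c1 s h1, c2 t h2] at h
      have m1 : 2 * s ∈ Icc (0:ℝ) 1 := ⟨by linarith [hs.1], by linarith⟩
      have m2 : 2 * t - 1 ∈ Icc (0:ℝ) 1 := ⟨by linarith, by linarith [ht.2]⟩
      have e1 := hd _ m1 _ m2 h
      rw [e1, hab] at h
      have e2 := hb.inj (by simp) m2 h
      linarith
    intro s hs t ht h
    rcases le_total s (1 / 2) with h1 | h1 <;> rcases le_total t (1 / 2) with h2 | h2
    · rw [c1 s h1, c1 t h2] at h
      have := ha.inj ⟨by linarith [hs.1], by linarith⟩ ⟨by linarith [ht.1], by linarith⟩ h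
      linarith
    · exact key s hs t ht h1 h2 h
    · exact (key t ht s hs h2 h1 h.symm).symm
    · rw [c2 s h1, c2 t h2] at h
      have := hb.inj ⟨by linarith, by linarith [hs.2]⟩ ⟨by linarith, by linarith [ht.2]⟩ h
      linarith
  · rw [c1 0 (by norm_num)]; simp
  · rw [c2 1 (by norm_num)]; norm_num
  · ext x
    constructor
    · rintro ⟨t, ht, rfl⟩
      rcases le_total t (1 / 2) with h | h
      · exact Or.inl ⟨2 * t, ⟨by linarith [ht.1], by linarith⟩, (c1 t h).symm⟩
      · exact Or.inr ⟨2 * t - 1, ⟨by linarith, by linarith [ht.2]⟩, (c2 t h).symm⟩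
    · rintro (⟨t, ht, rfl⟩ | ⟨t, ht, rfl⟩)
      · refine ⟨t / 2, ⟨by linarith [ht.1], by linarith [ht.2]⟩, ?_⟩
        rw [c1 _ (by linarith [ht.2])]; congr 1; ring
      · refine ⟨(t + 1) / 2, ⟨by linarith [ht.1], by linarith [ht.2]⟩, ?_⟩
        rw [c2 _ (by linarith [ht.1])]; congr 1; ring
  · rw [c1 _ le_rfl]; norm_num

lemma ArcJoined.trans [T2Space X] {U : Set X} {x y z : X} (h : ArcJoined U x y)
    (h' : ArcJoined U y z) : ArcJoined U x z := by
  rcases h with rfl | ⟨a, ha, a0, a1, aU⟩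
  · exact h'
  rcases h' with rfl | ⟨b, hb, b0, b1, bU⟩
  · exact Or.inr ⟨a, ha, a0, a1, aU⟩
  by_cases hxz : x = z
  · exact Or.inl hxz
  obtain ⟨c, hc, hcb, hmin⟩ := exists_first zero_le_one ha.cont hb.isCompact.isClosed
    (by rw [a1, ← b0]; exact ⟨0, by simp, rfl⟩)
  obtain ⟨d, hd, hde⟩ := hcb
  rcases eq_or_lt_of_le hd.2 with rfl | hd1
  · -- the first meeting point is `z`
    have hc0 : 0 < c := by
      rcases eq_or_lt_of_le hc.1 with h | h
      · exact absurd (by rw [← a0, ← b1, hde, h]) hxz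
      · exact h
    refine Or.inr ⟨_, ha.sub le_rfl hc0 hc.2, by simpa using a0, by simp [← hde, b1], ?_⟩
    rw [affine_image a hc0.le]
    exact (image_mono (Icc_subset_Icc_right hc.2)).trans aU
  have hb' := hb.sub hd.1 hd1 le_rfl
  rcases eq_or_lt_of_le hc.1 with h | hc0
  · refine Or.inr ⟨_, hb', by simp [hde, ← h, a0], by simp [b1], ?_⟩
    rw [affine_image b hd.2]
    exact (image_mono (Icc_subset_Icc_left hd.1)).trans bU
  have ha' := ha.sub le_rfl hc0 hc.2
  obtain ⟨e, he, he0, he1, heU, -⟩ := ha'.concat hb' (by simp [hde]) (by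
    intro s hs t ht h
    have h1 : d + t * (1 - d) ∈ Icc (0:ℝ) 1 := affine_mapsTo hd.1 hd.2 le_rfl ht
    have := hmin (0 + s * (c - 0)) ⟨by nlinarith [hs.1], by nlinarith [hs.2]⟩
      ⟨_, h1, h.symm⟩
    have h2 : s * c = 1 * c := by linarith
    exact mul_right_cancel₀ hc0.ne' h2)
  refine Or.inr ⟨e, he, by simpa [a0] using he0, by simpa [b1] using he1, ?_⟩
  rw [heU, affine_image a hc0.le, affine_image b hd.2]
  exact union_subset ((image_mono (Icc_subset_Icc_right hc.2)).trans aU)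
    ((image_mono (Icc_subset_Icc_left hd.1)).trans bU)

end SurfDisc

/-! ### Local connectedness of a side at its curve -/

namespace SurfDisc
variable {X : Type*} [TopologicalSpace X]

/-- A side is uniformly locally connected at the points of its curve. -/
lemma IsSide.ulc [Surf X] [SimplyConnectedSpace X] {A J : Set X} (hA : IsSide A J) (hJ : CurveLike J) {p : X} (hp : p ∈ J)
    {U : Set X} (hU : U ∈ 𝓝 p) :
    ∃ W ⊆ U, IsOpen W ∧ p ∈ W ∧ ∀ x ∈ W ∩ A, ∀ y ∈ W ∩ A, ArcJoined (U ∩ A) x y := by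
  obtain ⟨O, hOU, hpO, hO⟩ := hJ.locArc.small hp hU
  have hB := hA.compl hJ
  have hOA : IsOpen (O ∩ A) := hO.isOpen.inter hA.isOpen
  let W := connectedComponentIn O p
  have hWO : W ⊆ O := connectedComponentIn_subset _ _
  have hpW : p ∈ W := mem_connectedComponentIn hpO
  refine ⟨W, hWO.trans hOU, hO.isOpen.connectedComponentIn, hpW, ?_⟩
  let D : X → Set X := fun x => connectedComponentIn (O ∩ A) x
  have hDs : ∀ x, D x ⊆ O ∩ A := fun x => connectedComponentIn_subset _ _
  have hDo : ∀ x, IsOpen (D x) := fun x => hOA.connectedComponentIn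
  have hDeq : ∀ x y, y ∈ D x → D x = D y := fun x y h => connectedComponentIn_eq h
  have hself : ∀ x ∈ O ∩ A, x ∈ D x := fun x hx => mem_connectedComponentIn hx
  have hDL : ∀ x, LocConst (D x) (O \ J) := by
    rintro x y ⟨hyO, hyJ⟩
    by_cases hyA : y ∈ A
    · filter_upwards [(hDo y).mem_nhds (hself y ⟨hyO, hyA⟩)] with y' hy'
      constructor
      · intro h
        rw [hDeq x y' h, ← hDeq y y' hy']
        exact hself y ⟨hyO, hyA⟩
      · intro h
        rw [hDeq x y h]; exact hy'
    · have hyB : y ∈ (A ∪ J)ᶜ := fun h => h.elim hyA hyJ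
      filter_upwards [hB.isOpen.mem_nhds hyB] with y' hy'
      exact ⟨fun h => absurd (Or.inl (hDs x h).2) hy', fun h => absurd (hDs x h).2 hyA⟩
  have hnf : ∀ x ∈ W ∩ A, ¬ Flat J (D x) p := by
    rintro x ⟨hxW, hxA⟩ hf
    have hxO : x ∈ O ∩ A := ⟨hWO hxW, hxA⟩
    have hfW : ∀ y ∈ W, Flat J (D x) y := by
      intro y hy
      by_cases hyJ : y ∈ J
      · exact hO.flat_all (hDL x) ⟨hpO, hp⟩ ⟨hWO hy, hyJ⟩ hf
      · exact (hDL x).flat ⟨hWO hy, hyJ⟩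
    have h1 : Ev J (D x) x := by
      filter_upwards [(hDo x).mem_nhds (hself x hxO)] with y hy _ using hy
    have h2 := (hJ.locArc.ev_const isPreconnected_connectedComponentIn hfW hxW hpW).1 h1
    refine hA.not_flat hJ p hp (Or.inl ?_)
    filter_upwards [h2] with y hy hyJ using (hDs x (hy hyJ)).2
  have hev : ∀ x ∈ W ∩ A, ∀ᶠ y in 𝓝 p, y ∈ A → y ∈ D x := by
    intro x hx
    have hAL : LocConst A (O \ J) := hA.locConst.mono (fun y hy => hy.2)
    rcases hO.flat_symmDiff (hDL x) hAL ⟨hpO, hp⟩ ⟨hpO, hp⟩ (hnf x hx) (hA.not_flat hJ p hp)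
      with h | h
    · refine absurd (Or.inl ?_) (hA.not_flat hJ p hp)
      filter_upwards [h] with y hy hyJ
      rcases hy hyJ with h | h
      · exact (hDs x h.1).2
      · exact h.1
    · filter_upwards [h] with y hy hyA
      by_contra hc
      exact hy (hA.disj y hyA) (Or.inr ⟨hyA, hc⟩)
  intro x hx y hy
  have hpc : p ∈ closure A := by rw [hA.closure_eq hJ]; exact Or.inr hp
  obtain ⟨z, hzA, hz1, hz2⟩ := (mem_closure_iff_frequently.1 hpc).and_eventually
    ((hev x hx).and (hev y hy)) |>.exists
  have e : D x = D y := (hDeq x z (hz1 hzA)).trans (hDeq y z (hz2 hzA)).symm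
  have hxD : x ∈ D x := hself x ⟨hWO hx.1, hx.2⟩
  have hyD : y ∈ D x := e ▸ hself y ⟨hWO hy.1, hy.2⟩
  exact (arcJoined_of_preconnected (hDo x) isPreconnected_connectedComponentIn hxD hyD).mono
    ((hDs x).trans (inter_subset_inter_left _ hOU))

/-- An infinite chain of arcs shrinking to a point `p` is an arc ending at `p`. -/
lemma exists_infinite_concat {b : ℕ → ℝ → X} (hb : ∀ n, IsArcMap (b n))
    (hcon : ∀ n, b n 1 = b (n + 1) 0)
    (hd1 : ∀ n, ∀ s ∈ Icc (0:ℝ) 1, ∀ t ∈ Icc (0:ℝ) 1, b n s = b (n + 1) t → s = 1)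
    (hd2 : ∀ n m, n + 2 ≤ m → ∀ s ∈ Icc (0:ℝ) 1, ∀ t ∈ Icc (0:ℝ) 1, b n s ≠ b m t)
    {p : X} (hp : ∀ n, p ∉ b n '' Icc 0 1)
    (hlim : ∀ U ∈ 𝓝 p, ∃ N, ∀ n ≥ N, b n '' Icc 0 1 ⊆ U) :
    ∃ c : ℝ → X, IsArcMap c ∧ c 0 = b 0 0 ∧ c 1 = p ∧
      ∀ t ∈ Ico (0:ℝ) 1, ∃ n, c t ∈ b n '' Icc 0 1 := by
  classical
  let f : ℝ → X := fun s => b ⌊s⌋₊ (s - ⌊s⌋₊)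
  have hfl : ∀ s : ℝ, 0 ≤ s → s - ⌊s⌋₊ ∈ Ico (0:ℝ) 1 := fun s hs =>
    ⟨by linarith [Nat.floor_le hs], by linarith [Nat.lt_floor_add_one s]⟩
  have hfn : ∀ (n : ℕ), ∀ s ∈ Icc (n:ℝ) (n + 1), f s = b n (s - n) := by
    intro n s hs
    rcases eq_or_lt_of_le hs.2 with h | h
    · have : ⌊s⌋₊ = n + 1 := by rw [h]; exact_mod_cast Nat.floor_natCast (n + 1)
      show b ⌊s⌋₊ (s - ⌊s⌋₊) = _
      rw [this, h]
      push_cast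
      rw [sub_self, ← hcon]; congr 1; ring
    · have : ⌊s⌋₊ = n := (Nat.floor_eq_iff ((Nat.cast_nonneg n).trans hs.1)).2 ⟨hs.1, h⟩
      simp only [f, this]
  have hf1 : ∀ n : ℕ, ContinuousOn f (Icc 0 (n:ℝ)) := by
    intro n
    induction n with
    | zero => simp
    | succ n ih =>
      push_cast
      refine contOn_glue (Nat.cast_nonneg n) (by linarith) ih ?_
      refine ContinuousOn.congr ?_ (hfn n)
      exact (hb n).cont.comp (by fun_prop) (fun s hs => ⟨by linarith [hs.1], by linarith [hs.2]⟩)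
  have hfc : ContinuousOn f (Ici 0) := by
    intro x hx
    obtain ⟨n, hn⟩ := exists_nat_gt x
    refine (hf1 n x ⟨hx, hn.le⟩).mono_of_mem_nhdsWithin ?_
    rw [← Ici_inter_Iic]
    exact inter_mem self_mem_nhdsWithin (mem_nhdsWithin_of_mem_nhds (Iic_mem_nhds hn))
  have hlt : ∀ s t : ℝ, 0 ≤ s → 0 ≤ t → ⌊s⌋₊ < ⌊t⌋₊ → f s ≠ f t := by
    intro s t hs ht h he
    rcases Nat.eq_or_lt_of_le (Nat.succ_le_of_lt h) with h' | h'
    · have := hd1 ⌊s⌋₊ _ (Ico_subset_Icc_self (hfl s hs)) _ (Ico_subset_Icc_self (hfl t ht))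
        (by simp only [f] at he; rw [he, ← h'])
      linarith [(hfl s hs).2]
    · exact hd2 _ _ h' _ (Ico_subset_Icc_self (hfl s hs)) _ (Ico_subset_Icc_self (hfl t ht)) he
  have hfi : InjOn f (Ici 0) := by
    intro s hs t ht he
    rcases lt_trichotomy ⌊s⌋₊ ⌊t⌋₊ with h | h | h
    · exact absurd he (hlt s t hs ht h)
    · have he' : b ⌊s⌋₊ (s - ⌊s⌋₊) = b ⌊s⌋₊ (t - ⌊s⌋₊) := by
        have : f t = b ⌊s⌋₊ (t - ⌊s⌋₊) := by simp only [f, h]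
        rw [← this, ← he]
      have m := hfl t ht
      rw [← h] at m
      have := (hb _).inj (Ico_subset_Icc_self (hfl s hs)) (Ico_subset_Icc_self m) he'
      linarith
    · exact absurd he.symm (hlt t s ht hs h)
  have hfm : ∀ s : ℝ, 0 ≤ s → f s ∈ b ⌊s⌋₊ '' Icc 0 1 :=
    fun s hs => ⟨_, Ico_subset_Icc_self (hfl s hs), rfl⟩
  let g : ℝ → ℝ := fun t => t / (1 - t)
  have hg0 : ∀ t ∈ Ico (0:ℝ) 1, 0 ≤ g t := fun t ht => div_nonneg ht.1 (by linarith [ht.2])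
  have hgc : ContinuousOn g (Ico 0 1) :=
    ContinuousOn.div (by fun_prop) (by fun_prop) (fun t ht => by linarith [ht.2])
  let c : ℝ → X := fun t => if t < 1 then f (g t) else p
  have c1 : ∀ t < 1, c t = f (g t) := fun t ht => if_pos ht
  have c2 : c 1 = p := if_neg (lt_irrefl _)
  have hcm : ∀ t ∈ Ico (0:ℝ) 1, ∃ n, c t ∈ b n '' Icc 0 1 := by
    intro t ht
    rw [c1 t ht.2]
    exact ⟨_, hfm _ (hg0 t ht)⟩
  have hcp : ∀ t ∈ Ico (0:ℝ) 1, c t ≠ p := by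
    intro t ht h
    obtain ⟨n, hn⟩ := hcm t ht
    exact hp n (h ▸ hn)
  refine ⟨c, ⟨?_, ?_⟩, ?_, c2, hcm⟩
  · intro t ht
    rcases eq_or_lt_of_le ht.2 with rfl | h1
    · rw [ContinuousWithinAt, c2]
      intro U hU
      obtain ⟨N, hN⟩ := hlim U hU
      have h2 : Ioi (1 - 1 / ((N:ℝ) + 1)) ∈ 𝓝 (1:ℝ) := Ioi_mem_nhds (by
        have : 0 < 1 / ((N:ℝ) + 1) := by positivity
        linarith)
      rw [mem_map]
      filter_upwards [mem_nhdsWithin_of_mem_nhds h2, self_mem_nhdsWithin] with t ht ht'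
      rcases eq_or_lt_of_le ht'.2 with rfl | h1
      · rw [mem_preimage, c2]; exact mem_of_mem_nhds hU
      · rw [mem_preimage, c1 t h1]
        refine hN ⌊g t⌋₊ (Nat.le_floor ?_) (hfm _ (hg0 t ⟨ht'.1, h1⟩))
        rw [le_div_iff₀ (by linarith)]
        have h3 : 1 - t < 1 / ((N:ℝ) + 1) := by linarith [mem_Ioi.1 ht]
        rw [lt_div_iff₀ (by positivity)] at h3
        nlinarith
    · have h2 : ContinuousWithinAt (fun t => f (g t)) (Ico 0 1) t :=
        hfc.comp hgc hg0 t ⟨ht.1, h1⟩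
      have h3 : ContinuousWithinAt c (Ico 0 1) t :=
        h2.congr (fun s hs => c1 s hs.2) (c1 t h1)
      refine h3.mono_of_mem_nhdsWithin ?_
      rw [← Ici_inter_Iio]
      exact inter_mem (mem_of_superset self_mem_nhdsWithin (fun s hs => hs.1))
        (mem_nhdsWithin_of_mem_nhds (Iio_mem_nhds h1))
  · intro s hs t ht h
    rcases eq_or_lt_of_le hs.2 with rfl | hs1 <;> rcases eq_or_lt_of_le ht.2 with rfl | ht1
    · rfl
    · exact absurd (h.symm.trans c2) (hcp t ⟨ht.1, ht1⟩)
    · exact absurd (h.trans c2) (hcp s ⟨hs.1, hs1⟩)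
    · rw [c1 s hs1, c1 t ht1] at h
      have := hfi (hg0 s ⟨hs.1, hs1⟩) (hg0 t ⟨ht.1, ht1⟩) h
      simp only [g] at this
      rw [div_eq_div_iff (by linarith) (by linarith)] at this
      linarith
  · rw [c1 0 one_pos]; simp [f, g]

end SurfDisc

/-! ### Accessibility and crosscuts -/

namespace SurfDisc
variable {X : Type*} [TopologicalSpace X]

/-- Dependent choice along `ℕ`. -/
lemma exists_seq_of_step {α : Type*} (P : ℕ → α → Prop) (R : ℕ → α → α → Prop) {a₀ : α}
    (h₀ : P 0 a₀) (h : ∀ n a, P n a → ∃ a', P (n + 1) a' ∧ R n a a') :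
    ∃ f : ℕ → α, f 0 = a₀ ∧ (∀ n, P n (f n)) ∧ ∀ n, R n (f n) (f (n + 1)) := by
  choose! g hg hr using h
  let f : ℕ → α := fun n => Nat.rec a₀ (fun n a => g n a) n
  have hf : ∀ n, P n (f n) := by
    intro n
    induction n with
    | zero => exact h₀
    | succ n ih => exact hg n _ ih
  exact ⟨f, rfl, hf, fun n => hr n _ (hf n)⟩

instance Surf.countable_nhds [Surf X] (p : X) : (𝓝 p).IsCountablyGenerated := by
  obtain ⟨φ, hφ, rfl⟩ := Surf.exists_chart p
  rw [← hφ.map_nhds_eq]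
  infer_instance

/-- A sequence of arcs, consecutive ones meeting end to end, can be cut to an arc when
non-consecutive ones are disjoint. -/
lemma exists_arc_of_chain [T2Space X] {β : ℕ → ℝ → X} (hβ : ∀ n, IsArcMap (β n))
    (hcon : ∀ n, β n 1 = β (n + 1) 0) (h0 : β 0 0 ∉ β 1 '' Icc 0 1)
    (hd : ∀ n m, n + 2 ≤ m → Disjoint (β n '' Icc 0 1) (β m '' Icc 0 1))
    {p : X} (hp : ∀ n, p ∉ β n '' Icc 0 1)
    (hlim : ∀ U ∈ 𝓝 p, ∃ N, ∀ n ≥ N, β n '' Icc 0 1 ⊆ U) :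
    ∃ c : ℝ → X, IsArcMap c ∧ c 0 = β 0 0 ∧ c 1 = p ∧
      ∀ t ∈ Ico (0:ℝ) 1, ∃ n, c t ∈ β n '' Icc 0 1 := by
  obtain ⟨f, hf0, hf, hR⟩ := exists_seq_of_step
    (fun n a => a ∈ Icc (0:ℝ) 1 ∧ β n a ∉ β (n + 1) '' Icc 0 1)
    (fun n a a' => ∃ c ∈ Icc a 1, β n c = β (n + 1) a' ∧
      ∀ t ∈ Icc a c, β n t ∈ β (n + 1) '' Icc 0 1 → t = c)
    (a₀ := 0) ⟨by simp, h0⟩ (by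
      rintro n a ⟨ha, ha'⟩
      obtain ⟨c, hc, ⟨a', ha1, ha2⟩, hcf⟩ := exists_first ha.2
        ((hβ n).cont.mono (Icc_subset_Icc_left ha.1)) (hβ (n + 1)).isCompact.isClosed
        ⟨0, by simp, (hcon n).symm⟩
      refine ⟨a', ⟨ha1, ?_⟩, c, hc, ha2.symm, hcf⟩
      rw [ha2]
      exact Set.disjoint_left.1 (hd n (n + 1 + 1) le_rfl) ⟨c, ⟨ha.1.trans hc.1, hc.2⟩, rfl⟩)
  choose c hc hcf hcu using hR
  have hlt : ∀ n, f n < c n := by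
    intro n
    refine lt_of_le_of_ne (hc n).1 fun h => (hf n).2 ?_
    rw [h, hcf n]
    exact ⟨_, (hf (n + 1)).1, rfl⟩
  have hmem : ∀ n, ∀ u ∈ Icc (0:ℝ) 1, f n + u * (c n - f n) ∈ Icc (f n) (c n) := by
    intro n u hu
    have := hlt n
    constructor <;> nlinarith [hu.1, hu.2]
  have hmem' : ∀ n, ∀ u ∈ Icc (0:ℝ) 1, f n + u * (c n - f n) ∈ Icc (0:ℝ) 1 := fun n u hu =>
    ⟨(hf n).1.1.trans (hmem n u hu).1, (hmem n u hu).2.trans (hc n).2⟩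
  have hsub : ∀ n, (fun u => β n (f n + u * (c n - f n))) '' Icc 0 1 ⊆ β n '' Icc 0 1 := by
    rintro n _ ⟨u, hu, rfl⟩
    exact ⟨_, hmem' n u hu, rfl⟩
  obtain ⟨g, hg, hg0, hg1, hgm⟩ := exists_infinite_concat
    (b := fun n u => β n (f n + u * (c n - f n)))
    (fun n => (hβ n).sub (hf n).1.1 (hlt n) (hc n).2)
    (fun n => by simp [hcf n])
    (fun n s hs t ht h => by
      have := hcu n _ (hmem n s hs) (h ▸ ⟨_, hmem' (n + 1) t ht, rfl⟩)
      have h2 := hlt n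
      have h3 : (s - 1) * (c n - f n) = 0 := by linarith
      rcases mul_eq_zero.1 h3 with h | h <;> linarith)
    (fun n m hnm s hs t ht => (hd n m hnm).ne_of_mem
      ⟨_, hmem' n s hs, rfl⟩ ⟨_, hmem' m t ht, rfl⟩)
    (p := p) (fun n h => hp n (hsub n h))
    (fun U hU => by
      obtain ⟨N, hN⟩ := hlim U hU
      exact ⟨N, fun n hn => (hsub n).trans (hN n hn)⟩)
  refine ⟨g, hg, by simpa [hf0] using hg0, hg1, fun t ht => ?_⟩
  obtain ⟨n, hn⟩ := hgm t ht
  exact ⟨n, hsub n hn⟩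

variable [Surf X] [SimplyConnectedSpace X]

/-- Every point of the curve is accessible from either side. -/
lemma IsSide.exists_ray {A J : Set X} (hA : IsSide A J) (hJ : CurveLike J) {p : X} (hp : p ∈ J) :
    ∃ c : ℝ → X, IsArcMap c ∧ c 1 = p ∧ c '' Ico 0 1 ⊆ A := by
  obtain ⟨U, hU⟩ := (𝓝 p).exists_antitone_basis
  have hulc := fun (V : Set X) (hV : V ∈ 𝓝 p) => hA.ulc hJ hp hV
  choose! w hwV hwo hwp hw using hulc
  have hpc : p ∈ closure A := by rw [hA.closure_eq hJ]; exact Or.inr hp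
  have hpA : p ∉ A := fun h => hA.disj p h hp
  have hex : ∀ V ∈ 𝓝 p, ∃ x, x ∈ V ∩ A := fun V hV =>
    (mem_closure_iff_nhds.1 hpc V hV)
  -- A state is a neighbourhood `V` of `p`, a point `x` of `A` near `p`, and the last arc `β`.
  obtain ⟨x₀, hx₀⟩ := hex (w univ) ((hwo _ univ_mem).mem_nhds (hwp _ univ_mem))
  obtain ⟨f, -, hf, hR⟩ := exists_seq_of_step (α := Set X × X × Set X)
    (fun n s => s.1 ∈ 𝓝 p ∧ s.2.1 ∈ w s.1 ∩ A ∧ IsClosed s.2.2 ∧ p ∉ s.2.2)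
    (fun n s s' => s'.1 ⊆ s.1 ∩ U n ∧ Disjoint s'.1 s.2.2 ∧ s.2.1 ∉ s'.1 ∧
      ∃ β : ℝ → X, IsArcMap β ∧ β 0 = s.2.1 ∧ β 1 = s'.2.1 ∧ β '' Icc 0 1 ⊆ s.1 ∩ A ∧
        s'.2.2 = β '' Icc 0 1) (a₀ := (univ, x₀, ∅)) ⟨univ_mem, hx₀, isClosed_empty, by simp⟩ (by
      rintro n ⟨V, x, C⟩ ⟨hV, hx, hC, hpC⟩
      dsimp only at *
      have hxp : x ≠ p := fun h => hpA (h ▸ hx.2)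
      let V' := w V ∩ U n ∩ Cᶜ ∩ {x}ᶜ
      have hV' : V' ∈ 𝓝 p := inter_mem (inter_mem (inter_mem ((hwo V hV).mem_nhds (hwp V hV))
        (hU.1.mem_of_mem trivial)) (hC.isOpen_compl.mem_nhds hpC)) (isOpen_ne.mem_nhds hxp.symm)
      obtain ⟨x', hx'⟩ := hex _ ((hwo _ hV').mem_nhds (hwp _ hV'))
      have hx'V : x' ∈ V' := hwV _ hV' hx'.1
      obtain h | ⟨β, hβ, h0, h1, hβs⟩ := hw V hV x hx x' ⟨hx'V.1.1.1, hx'.2⟩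
      · exact absurd h.symm hx'V.2
      · refine ⟨(V', x', β '' Icc 0 1), ⟨hV', hx', hβ.isCompact.isClosed, fun h => hpA (hβs h).2⟩,
          fun y hy => ⟨hwV V hV hy.1.1.1, hy.1.1.2⟩,
          Set.disjoint_left.2 fun y hy => hy.1.2, fun h => h.2 rfl, β, hβ, h0, h1, hβs, rfl⟩)
  choose hs hdis hx β hβ h0 h1 hβs hβe using hR
  have hanti : ∀ n m, n ≤ m → (f m).1 ⊆ (f n).1 := by
    intro n m h
    induction h with
    | refl => exact subset_rfl
    | step _ ih => exact ((hs _).trans inter_subset_left).trans ih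
  obtain ⟨c, hc, -, hc1, hcm⟩ := exists_arc_of_chain hβ
    (fun n => (h1 n).trans (h0 (n + 1)).symm)
    (fun h => hx 0 (h0 0 ▸ (hβs 1 h).1))
    (fun n m hnm => by
      rw [← hβe n]
      refine (hdis (n + 1)).symm.mono_right ?_
      exact ((hβs m).trans inter_subset_left).trans (hanti _ _ hnm))
    (p := p) (fun n h => hpA (hβs n h).2)
    (fun V hV => by
      obtain ⟨N, -, hN⟩ := hU.1.mem_iff.1 hV
      refine ⟨N + 1, fun n hn => ?_⟩
      refine ((hβs n).trans inter_subset_left).trans ((hanti (N + 1) n hn).trans ?_)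
      exact ((hs N).trans inter_subset_right).trans hN)
  refine ⟨c, hc, hc1, ?_⟩
  rintro _ ⟨t, ht, rfl⟩
  obtain ⟨n, hn⟩ := hcm t ht
  exact (hβs n hn).2

/-- Two points of the curve are joined by a crosscut. -/
lemma IsSide.exists_crosscut {A J : Set X} (hA : IsSide A J) (hJ : CurveLike J) {p q : X}
    (hp : p ∈ J) (hq : q ∈ J) (hpq : p ≠ q) :
    ∃ α : ℝ → X, IsArcMap α ∧ α 0 = p ∧ α 1 = q ∧ α '' Ioo 0 1 ⊆ A := by
  obtain ⟨c, hc, hc1, hcA⟩ := hA.exists_ray hJ hp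
  obtain ⟨d, hd, hd1, hdA⟩ := hA.exists_ray hJ hq
  have key : ∀ (e : ℝ → X) r, e 1 = r → r ∈ ({p, q} : Set X) → e '' Ico 0 1 ⊆ A →
      e '' Icc 0 1 ⊆ A ∪ {p, q} := by
    rintro e r h1 hr hA _ ⟨t, ht, rfl⟩
    rcases ht.2.eq_or_lt with rfl | h
    · rw [h1]; exact Or.inr hr
    · exact Or.inl (hA ⟨t, ⟨ht.1, h⟩, rfl⟩)
  have j1 : ArcJoined (A ∪ {p, q}) (c 0) p := Or.inr ⟨c, hc, rfl, hc1, key c p hc1 (by simp) hcA⟩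
  have j2 : ArcJoined (A ∪ {p, q}) (d 0) q := Or.inr ⟨d, hd, rfl, hd1, key d q hd1 (by simp) hdA⟩
  have j3 := (arcJoined_of_preconnected hA.isOpen hA.preconn (hcA ⟨0, by simp, rfl⟩)
    (hdA ⟨0, by simp, rfl⟩)).mono (subset_union_left (t := {p, q}))
  obtain h | ⟨α, hα, h0, h1, hαs⟩ := (j1.symm.trans j3).trans j2
  · exact absurd h hpq
  refine ⟨α, hα, h0, h1, ?_⟩
  rintro _ ⟨t, ht, rfl⟩
  rcases hαs ⟨t, Ioo_subset_Icc_self ht, rfl⟩ with h | h | h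
  · exact h
  · have := hα.inj (Ioo_subset_Icc_self ht) (left_mem_Icc.2 zero_le_one) (h.trans h0.symm)
    exact absurd this ht.1.ne'
  · have := hα.inj (Ioo_subset_Icc_self ht) (right_mem_Icc.2 zero_le_one)
      ((mem_singleton_iff.1 h).trans h1.symm)
    exact absurd this ht.2.ne

/-- The crosscut can be taken through a prescribed point. -/
lemma IsSide.exists_crosscut_through {A J : Set X} (hA : IsSide A J) (hJ : CurveLike J) {p q : X}
    (hp : p ∈ J) (hq : q ∈ J) (hpq : p ≠ q) {x : X} (hx : x ∈ A) :
    ∃ α : ℝ → X, IsArcMap α ∧ α 0 = p ∧ α 1 = q ∧ α '' Ioo 0 1 ⊆ A ∧ x ∈ α '' Ioo 0 1 := by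
  obtain ⟨α, hα, h0, h1, hαs⟩ := hA.exists_crosscut hJ hp hq hpq
  have hm : (1/2:ℝ) ∈ Ioo (0:ℝ) 1 := by norm_num
  obtain ⟨ψ, hψ, hψ'⟩ := exists_homeo hA.isOpen hA.preconn (hαs ⟨_, hm, rfl⟩) hx
  refine ⟨_, hα.comp_homeo ψ, ?_, ?_, ?_, _, hm, hψ⟩
  · show ψ (α 0) = p
    rw [h0, hψ' p fun h => hA.disj p h hp]
  · show ψ (α 1) = q
    rw [h1, hψ' q fun h => hA.disj q h hq]
  · rintro _ ⟨t, ht, rfl⟩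
    show ψ (α t) ∈ A
    by_contra hc
    have := ψ.injective (hψ' _ hc)
    rw [this] at hc
    exact hc (hαs ⟨t, ht, rfl⟩)

end SurfDisc

namespace SurfDisc
set_option linter.unusedSectionVars false
variable {X : Type*} [TopologicalSpace X]

/-! ### Arcs cut by a side out of a closed curve -/

/-- The parameter interval `[a, b]` of the closed curve `γ` gives an arc with interior in `A` and
end points on `J`. -/
structure Gap (γ : ℝ → X) (A J : Set X) (a b : ℝ) : Prop where
  lt : a < b
  lt_add : b < a + 1
  left : γ a ∈ J
  right : γ b ∈ J
  sub : γ '' Ioo a b ⊆ A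

lemma exists_small_arc [T2Space X] {J V : Set X} (hJ : LocArc J) {p : X} (hp : p ∈ J)
    (hV : V ∈ 𝓝 p) : ∃ N ∈ 𝓝 p, ∀ u ∈ N ∩ J, ∀ v ∈ N ∩ J, u ≠ v →
      ∃ j : ℝ → X, IsArcMap j ∧ j 0 = u ∧ j 1 = v ∧ j '' Icc 0 1 ⊆ J ∩ V := by
  obtain ⟨O, hOV, hpO, φ, a, hφ, ha, haφ, hO, hOJ, -⟩ := hJ.small hp hV
  have key : ∀ s ∈ Ioo (0:ℝ) 1, ∀ t ∈ Ioo (0:ℝ) 1, s < t →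
      ∃ j : ℝ → X, IsArcMap j ∧ j 0 = a s ∧ j 1 = a t ∧ j '' Icc 0 1 ⊆ J ∩ V := by
    intro s hs t ht hst
    refine ⟨_, ha.sub hs.1.le hst ht.2.le, by simp, by simp, ?_⟩
    rw [affine_image a hst.le]
    have : a '' Icc s t ⊆ O ∩ J := by
      rw [hOJ]; exact image_mono fun u hu => ⟨hs.1.trans_le hu.1, hu.2.trans_lt ht.2⟩
    exact fun y hy => ⟨(this hy).2, hOV (this hy).1⟩
  refine ⟨O, hO.mem_nhds hpO, fun u hu v hv huv => ?_⟩
  rw [hOJ] at hu hv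
  obtain ⟨s, hs, rfl⟩ := hu
  obtain ⟨t, ht, rfl⟩ := hv
  rcases lt_trichotomy s t with h | rfl | h
  · exact key s hs t ht h
  · exact absurd rfl huv
  · obtain ⟨j, h1, h2, h3, h4⟩ := key t ht s hs h
    exact ⟨_, h1.rev, by simpa using h3, by simpa using h2, by rwa [rev_image]⟩

variable {γ : ℝ → X}

/-- If the closed curve `γ` meets `J` at least twice, then each of its points in `A` lies in a gap. -/
lemma exists_gap (hc : Continuous γ) (hγ : ∀ s t, γ s = γ t ↔ ∃ n : ℤ, t = s + n)
    {A J : Set X} (hA : IsSide A J) (hJ : IsClosed J)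
    (h2 : ∃ p ∈ J ∩ range γ, ∃ q ∈ J ∩ range γ, p ≠ q) {s : ℝ} (hs : γ s ∈ A) :
    ∃ a b, s ∈ Ioo a b ∧ Gap γ A J a b := by
  obtain ⟨p, ⟨hpJ, hp⟩, q, ⟨hqJ, hq⟩, hpq⟩ := h2
  have hsJ := hA.disj _ hs
  have hper : ∀ t, γ (t + 1) = γ t := fun t => ((hγ _ _).2 ⟨1, by push_cast; ring⟩).symm
  rw [param_range hγ s] at hp hq
  obtain ⟨u, hu, rfl⟩ := hp
  obtain ⟨v, hv, rfl⟩ := hq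
  have hcl : IsClosed (γ ⁻¹' J) := hJ.preimage hc
  obtain ⟨a, ha, hau⟩ := (isCompact_Icc (a := s - 1) (b := s)).inter_right hcl
    |>.exists_isGreatest ⟨u - 1, ⟨by linarith [hu.1], by linarith [hu.2]⟩, by
      show γ (u - 1) ∈ J
      rwa [← hper, sub_add_cancel]⟩
  obtain ⟨b, hb, hbl⟩ := (isCompact_Icc (a := s) (b := s + 1)).inter_right hcl
    |>.exists_isLeast ⟨u, ⟨hu.1, hu.2.le⟩, hpJ⟩
  have has : a < s := lt_of_le_of_ne ha.1.2 (by rintro rfl; exact hsJ ha.2)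
  have hsb : s < b := lt_of_le_of_ne hb.1.1 (by rintro rfl; exact hsJ hb.2)
  have hno : ∀ t ∈ Ioo a b, γ t ∉ J := by
    intro t ht htJ
    rcases le_total t s with h | h
    · exact absurd (hau ⟨⟨by linarith [ha.1.1, ht.1], h⟩, htJ⟩) (not_le.2 ht.1)
    · exact absurd (hbl ⟨⟨h, by linarith [hb.1.2, ht.2]⟩, htJ⟩) (not_le.2 ht.2)
  have hba : b ≤ a + 1 := hbl ⟨⟨by linarith [ha.1.1], by linarith⟩, by
    show γ (a + 1) ∈ J
    rw [hper]; exact ha.2⟩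
  refine ⟨a, b, ⟨has, hsb⟩, by linarith, ?_, ha.2, hb.2, ?_⟩
  · refine lt_of_le_of_ne hba fun hab => hpq ?_
    have key : ∀ w ∈ Ico s (s + 1), γ w ∈ J → w = b := by
      intro w hw hwJ
      have h1 := hbl ⟨⟨hw.1, hw.2.le⟩, hwJ⟩
      by_contra hne
      have h2 : b < w := lt_of_le_of_ne h1 (Ne.symm hne)
      refine hno (w - 1) ⟨by linarith, by linarith [hw.2]⟩ ?_
      rwa [← hper, sub_add_cancel]
    rw [key u hu hpJ, key v hv hqJ]
  · have hP : IsPreconnected (γ '' Ioo a b) := isPreconnected_Ioo.image _ hc.continuousOn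
    rcases hA.subset_or_disjoint hP (by rintro _ ⟨t, ht, rfl⟩; exact hno t ht) with h | h
    · exact h
    · exact absurd hs (Set.disjoint_left.1 h ⟨s, ⟨has, hsb⟩, rfl⟩)

/-- The interior of a gap is relatively open in the curve. -/
lemma Gap.compl_eq (hγ : ∀ s t, γ s = γ t ↔ ∃ n : ℤ, t = s + n) {A J : Set X} {a b : ℝ}
    (h : Gap γ A J a b) : (γ '' Icc b (a + 1))ᶜ ∩ range γ = γ '' Ioo a b := by
  have hper : γ (a + 1) = γ a := ((hγ _ _).2 ⟨1, by push_cast; ring⟩).symm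
  rw [param_range hγ a]
  ext y
  constructor
  · rintro ⟨h1, s, hs, rfl⟩
    refine ⟨s, ⟨lt_of_le_of_ne hs.1 ?_, ?_⟩, rfl⟩
    · rintro rfl
      exact h1 ⟨a + 1, ⟨h.lt_add.le, le_rfl⟩, hper⟩
    · by_contra hc
      exact h1 ⟨s, ⟨not_lt.1 hc, hs.2.le⟩, rfl⟩
  · rintro ⟨s, hs, rfl⟩
    refine ⟨?_, s, ⟨hs.1.le, by linarith [hs.2, h.lt_add]⟩, rfl⟩
    rintro ⟨r, hr, he⟩
    have := param_injOn hγ (s := r) (t := s) (u := s) (v := a + 1)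
      ⟨by linarith [hs.2, hr.1], hr.2⟩ ⟨le_rfl, by linarith [hs.2, h.lt_add]⟩
      (by linarith [hs.1]) he
    linarith [hr.1, hs.2]

/-- Gaps are the connected components of the part of the curve off `J`. -/
lemma Gap.maximal [T2Space X] (hc : Continuous γ) (hγ : ∀ s t, γ s = γ t ↔ ∃ n : ℤ, t = s + n)
    {A J : Set X} {a b : ℝ} (h : Gap γ A J a b) {P : Set X} (hP : IsPreconnected P)
    (hPγ : P ⊆ range γ) (hPJ : Disjoint P J) (hPm : (P ∩ γ '' Ioo a b).Nonempty) :
    P ⊆ γ '' Ioo a b := by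
  have e := h.compl_eq hγ
  have c1 : IsClosed (γ '' Icc b (a + 1)) := (isCompact_Icc.image hc).isClosed
  have c2 : IsClosed (γ '' Icc a b) := (isCompact_Icc.image hc).isClosed
  obtain ⟨w, hwP, hw⟩ := hPm
  have hcst : ∀ y ∈ P, ∀ᶠ z in 𝓝[P] y, (z ∈ γ '' Ioo a b ↔ y ∈ γ '' Ioo a b) := by
    intro y hy
    by_cases hyG : y ∈ γ '' Ioo a b
    · have : y ∈ (γ '' Icc b (a + 1))ᶜ := (e.symm.subset hyG).1
      filter_upwards [self_mem_nhdsWithin, mem_nhdsWithin_of_mem_nhds (c1.isOpen_compl.mem_nhds this)]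
        with z hz hz'
      exact ⟨fun _ => hyG, fun _ => e.subset ⟨hz', hPγ hz⟩⟩
    · have : y ∈ (γ '' Icc a b)ᶜ := by
        rintro ⟨s, hs, rfl⟩
        have hsJ := Set.disjoint_left.1 hPJ hy
        refine hyG ⟨s, ⟨lt_of_le_of_ne hs.1 ?_, lt_of_le_of_ne hs.2 ?_⟩, rfl⟩
        · rintro rfl; exact hsJ h.left
        · rintro rfl; exact hsJ h.right
      filter_upwards [mem_nhdsWithin_of_mem_nhds (c2.isOpen_compl.mem_nhds this)] with z hz
      exact ⟨fun h' => absurd (image_mono Ioo_subset_Icc_self h') hz, fun h' => absurd h' hyG⟩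
  exact fun y hy => (const_prop hP hcst hwP hy).1 hw

/-- Short arcs of the circle with ends on `J` close up, by short arcs of `J`, inside a small
disc. -/
lemma exists_mesh [T2Space X] (hc : Continuous γ) (hγ : ∀ s t, γ s = γ t ↔ ∃ n : ℤ, t = s + n)
    {φ : ℂ → X} (hφ : IsOpenEmbedding φ) (hT : range γ = φ '' Metric.sphere 0 (3/2))
    {J : Set X} (hJc : IsClosed J) (hJ : LocArc J) :
    ∃ δ > 0, ∀ a b, a < b → b < a + δ → γ a ∈ J → γ b ∈ J → γ a ≠ γ b →
      ∃ z : ℂ, Metric.ball z (1/2) ⊆ Metric.ball 0 2 \ Metric.closedBall 0 1 ∧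
        γ '' Icc a b ⊆ φ '' Metric.ball z (1/2) ∧
        ∃ j : ℝ → X, IsArcMap j ∧ j 0 = γ a ∧ j 1 = γ b ∧
          j '' Icc 0 1 ⊆ J ∩ φ '' Metric.ball z (1/2) := by
  have hloc : ∀ t : ℝ, ∃ ε > 0, ∀ a b, Icc a b ⊆ Metric.ball t ε → a < b → γ a ∈ J → γ b ∈ J →
      γ a ≠ γ b →
      ∃ z : ℂ, Metric.ball z (1/2) ⊆ Metric.ball 0 2 \ Metric.closedBall 0 1 ∧
        γ '' Icc a b ⊆ φ '' Metric.ball z (1/2) ∧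
        ∃ j : ℝ → X, IsArcMap j ∧ j 0 = γ a ∧ j 1 = γ b ∧
          j '' Icc 0 1 ⊆ J ∩ φ '' Metric.ball z (1/2) := by
    intro t
    by_cases htJ : γ t ∈ J
    · obtain ⟨z, hz, hzt⟩ := hT ▸ mem_range_self (f := γ) t
      rw [mem_sphere_zero_iff_norm] at hz
      have hV : φ '' Metric.ball z (1/2) ∈ 𝓝 (γ t) :=
        (hφ.isOpenMap _ Metric.isOpen_ball).mem_nhds ⟨z, by simp, hzt⟩
      obtain ⟨N, hN, hNj⟩ := exists_small_arc hJ htJ hV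
      obtain ⟨ε, hε, hb⟩ := Metric.mem_nhds_iff.1 (hc.continuousAt (inter_mem hV hN))
      refine ⟨ε, hε, fun a b hab hlt ha hb' hne => ⟨z, ?_, ?_, ?_⟩⟩
      · intro w hw
        rw [Metric.mem_ball, dist_eq_norm] at hw
        have h1 := norm_sub_norm_le w z
        have h2 := norm_sub_norm_le z w
        rw [norm_sub_rev] at h2
        constructor
        · rw [mem_ball_zero_iff]; linarith
        · rw [mem_closedBall_zero_iff]; linarith
      · rintro _ ⟨s, hs, rfl⟩
        exact (hb (hab hs)).1
      · exact hNj _ ⟨(hb (hab ⟨le_rfl, hlt.le⟩)).2, ha⟩ _ ⟨(hb (hab ⟨hlt.le, le_rfl⟩)).2, hb'⟩ hne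
    · obtain ⟨ε, hε, hb⟩ := Metric.mem_nhds_iff.1
        (hc.continuousAt (hJc.isOpen_compl.mem_nhds htJ))
      exact ⟨ε, hε, fun a b hab hlt ha => absurd ha (hb (hab ⟨le_rfl, hlt.le⟩))⟩
  choose ε hε hloc using hloc
  obtain ⟨δ, hδ, hδb⟩ := lebesgue_number_lemma_of_metric (isCompact_Icc (a := (0:ℝ)) (b := 1))
    (c := fun t : ℝ => Metric.ball t (ε t)) (fun t => Metric.isOpen_ball)
    (fun t _ => mem_iUnion.2 ⟨t, Metric.mem_ball_self (hε t)⟩)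
  refine ⟨δ, hδ, fun a b hab hbδ ha hb hne => ?_⟩
  have hsh : ∀ t, γ (t - ⌊a⌋) = γ t := fun t => (hγ _ _).2 ⟨⌊a⌋, by ring⟩
  obtain ⟨t, ht⟩ := hδb (Int.fract a) ⟨Int.fract_nonneg a, (Int.fract_lt_one a).le⟩
  have e1 : Int.fract a = a - ⌊a⌋ := rfl
  obtain ⟨z, h1, h2, h3⟩ := hloc t (a - ⌊a⌋) (b - ⌊a⌋) (by
    refine Subset.trans (fun s hs => ?_) ht
    rw [Metric.mem_ball, Real.dist_eq, e1, abs_lt]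
    constructor <;> linarith [hs.1, hs.2]) (by linarith) (by rwa [hsh]) (by rwa [hsh])
      (by rwa [hsh, hsh])
  rw [hsh, hsh] at h3
  refine ⟨z, h1, ?_, h3⟩
  rintro _ ⟨s, hs, rfl⟩
  exact h2 ⟨s - ⌊a⌋, ⟨by linarith [hs.1], by linarith [hs.2]⟩, hsh s⟩

end SurfDisc

/-! ### Undoing short crossings -/

namespace SurfDisc
variable {X : Type*} [TopologicalSpace X] [Surf X] [SimplyConnectedSpace X] {γ : ℝ → X}

/-- A short gap and a short arc of `J` bound a small region, which can be used to undo the crossing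
of the gap. -/
lemma Gap.exists_region (hc : Continuous γ) (hγ : ∀ s t, γ s = γ t ↔ ∃ n : ℤ, t = s + n)
    {φ : ℂ → X} (hφ : IsOpenEmbedding φ) {A J : Set X} (hA : IsSide A J) (hJ : IsClosed J)
    {a b : ℝ} (h : Gap γ A J a b) {z : ℂ} (hz : γ '' Icc a b ⊆ φ '' Metric.ball z (1/2))
    {j : ℝ → X} (hj : IsArcMap j) (h0 : j 0 = γ a) (h1 : j 1 = γ b)
    (hjs : j '' Icc 0 1 ⊆ J ∩ φ '' Metric.ball z (1/2)) :
    ∃ E, LocConst E (J ∪ γ '' Ioo a b)ᶜ ∧ (∀ w ∈ γ '' Ioo a b, ¬ Flat (range γ) E w) ∧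
      E ⊆ φ '' Metric.ball z (1/2) := by
  let α : ℝ → X := fun u => γ (a + u * (b - a))
  have hα : IsArcMap α := param_arc hc hγ h.lt h.lt_add
  have hαi : α '' Icc 0 1 = γ '' Icc a b := affine_image γ h.lt.le
  have hαo : α '' Ioo 0 1 = γ '' Ioo a b := affine_image_Ioo γ h.lt
  have hab : ArcPair α j := by
    refine ⟨hα, hj, by simp [α, h0], by simp [α, h1], fun s hs t ht he => ?_⟩
    refine hA.disj (α s) (h.sub (hαo ▸ ⟨s, hs, rfl⟩)) ?_
    rw [he]
    exact (hjs ⟨t, Ioo_subset_Icc_self ht, rfl⟩).1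
  obtain ⟨E, hE, hEs⟩ := exists_small_side hφ (z := z) (r := 1/2) (by norm_num) hab.isJordan
    (union_subset (hαi ▸ hz) (hjs.trans inter_subset_right))
  have hIcc : γ '' Icc a b ⊆ J ∪ γ '' Ioo a b := by
    rintro _ ⟨s, hs, rfl⟩
    rcases hs.1.eq_or_lt with rfl | h1
    · exact Or.inl h.left
    rcases hs.2.eq_or_lt with rfl | h2
    · exact Or.inl h.right
    exact Or.inr ⟨s, ⟨h1, h2⟩, rfl⟩
  refine ⟨E, hE.side.locConst.mono (compl_subset_compl.2 (union_subset (hαi ▸ hIcc)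
    ((hjs.trans inter_subset_left).trans subset_union_left))), fun w hw hf => ?_, hEs⟩
  refine hE.side.not_flat hab.isJordan.curveLike w (Or.inl (hαi ▸ image_mono Ioo_subset_Icc_self hw))
    (hf.congr_nhds ?_ (Eventually.of_forall fun _ _ => Iff.rfl))
  have c1 : IsClosed (γ '' Icc b (a + 1)) := (isCompact_Icc.image hc).isClosed
  have e := h.compl_eq hγ
  filter_upwards [c1.isOpen_compl.mem_nhds (e.symm.subset hw).1,
    hJ.isOpen_compl.mem_nhds (hA.disj w (h.sub hw))] with y hy1 hy2
  constructor
  · intro hy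
    exact Or.inl (hαi ▸ image_mono Ioo_subset_Icc_self (e.subset ⟨hy1, hy⟩))
  · rintro (hy | hy)
    · rw [hαi] at hy
      exact image_subset_range _ _ hy
    · exact absurd (hjs hy).1 hy2

open Classical in
/-- A connected compact subset of `A` which meets the circle only in short gaps does not go from
the inside of the circle to the outside. -/
lemma no_crossing (hc : Continuous γ) (hγ : ∀ s t, γ s = γ t ↔ ∃ n : ℤ, t = s + n)
    {φ : ℂ → X} (hφ : IsOpenEmbedding φ) (hT : range γ = φ '' Metric.sphere 0 (3/2))
    {A J : Set X} (hA : IsSide A J) (hJ : IsClosed J) {δ : ℝ}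
    (hδ : ∀ a b, a < b → b < a + δ → γ a ∈ J → γ b ∈ J → γ a ≠ γ b →
      ∃ z : ℂ, Metric.ball z (1/2) ⊆ Metric.ball 0 2 \ Metric.closedBall 0 1 ∧
        γ '' Icc a b ⊆ φ '' Metric.ball z (1/2) ∧
        ∃ j : ℝ → X, IsArcMap j ∧ j 0 = γ a ∧ j 1 = γ b ∧
          j '' Icc 0 1 ⊆ J ∩ φ '' Metric.ball z (1/2))
    {ω : Set X} (hωc : IsCompact ω) (hωp : IsPreconnected ω) (hωA : ω ⊆ A)
    (hω : ∀ s, γ s ∈ ω → ∃ a b, s ∈ Ioo a b ∧ Gap γ A J a b ∧ b < a + δ)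
    {x y : X} (hx : x ∈ ω) (hy : y ∈ ω) (hxK : x ∈ φ '' Metric.closedBall 0 1)
    (hyL : y ∉ φ '' Metric.ball 0 2) : False := by
  have hTJ : IsJordan (range γ) := ⟨γ, hc, hγ, rfl⟩
  have hTc := hTJ.curveLike
  let D := φ '' Metric.ball 0 (3/2)
  have hD : IsSide D (range γ) := hT ▸ IsOpenEmbedding.isSide_ball hφ 0 (by norm_num)
  let IsG : Set X → Prop := fun G => ∃ a b, Gap γ A J a b ∧ b < a + δ ∧ G = γ '' Ioo a b
  have hxU : x ∉ φ '' (Metric.ball 0 2 \ Metric.closedBall 0 1) := by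
    rintro ⟨w, hw, he⟩
    obtain ⟨v, hv, rfl⟩ := hxK
    exact hw.2 (hφ.injective he ▸ hv)
  have hyU : y ∉ φ '' (Metric.ball 0 2 \ Metric.closedBall 0 1) :=
    fun h => hyL (image_mono sdiff_subset h)
  have hE : ∀ G, IsG G → ∃ E, LocConst E (J ∪ G)ᶜ ∧ (∀ w ∈ G, ¬ Flat (range γ) E w) ∧
      x ∉ E ∧ y ∉ E := by
    rintro G ⟨a, b, h, hb, rfl⟩
    obtain ⟨z, hz, hz1, j, hj, h0, h1, hjs⟩ := hδ a b h.lt hb h.left h.right (fun he =>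
      h.lt.ne (param_injOn hγ ⟨le_rfl, h.lt.le⟩ ⟨h.lt.le, le_rfl⟩ h.lt_add he))
    obtain ⟨E, h1, h2, h3⟩ := h.exists_region hc hγ hφ hA hJ hz1 hj h0 h1 hjs
    exact ⟨E, h1, h2, fun h => hxU (image_mono hz (h3 h)), fun h => hyU (image_mono hz (h3 h))⟩
  choose! E hE1 hE2 hEx hEy using hE
  have hGo : ∀ G, IsG G → ∃ N, IsOpen N ∧ N ∩ range γ = G := by
    rintro G ⟨a, b, h, hb, rfl⟩
    exact ⟨_, (isCompact_Icc.image hc).isClosed.isOpen_compl, h.compl_eq hγ⟩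
  have hGA : ∀ G, IsG G → G ⊆ A ∧ G ⊆ range γ := by
    rintro G ⟨a, b, h, hb, rfl⟩
    exact ⟨h.sub, image_subset_range _ _⟩
  have hGsub : ∀ G G', IsG G → IsG G' → ∀ w ∈ G, w ∈ G' → G ⊆ G' := by
    rintro G _ hG ⟨a', b', h', hb', rfl⟩ w hw hw'
    obtain ⟨a, b, h, hb, rfl⟩ := hG
    exact h'.maximal hc hγ (isPreconnected_Ioo.image _ hc.continuousOn) (image_subset_range _ _)
      (Set.disjoint_left.2 fun v hv => hA.disj v (h.sub hv)) ⟨w, hw, hw'⟩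
  have hGeq : ∀ G G', IsG G → IsG G' → ∀ w ∈ G, w ∈ G' → G = G' := fun G G' h h' w hw hw' =>
    (hGsub G G' h h' w hw hw').antisymm (hGsub G' G h' h w hw' hw)
  have hcov : ∀ w ∈ ω ∩ range γ, ∃ G, IsG G ∧ w ∈ G := by
    rintro _ ⟨hw, s, rfl⟩
    obtain ⟨a, b, hs, h, hb⟩ := hω s hw
    exact ⟨_, ⟨a, b, h, hb, rfl⟩, s, hs, rfl⟩
  choose! G hG hwG using hcov
  choose! N hN hNG using hGo
  -- By compactness, finitely many gaps meet `ω`.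
  obtain ⟨F, hFG, hF⟩ : ∃ F : Finset (Set X), (∀ G ∈ F, IsG G) ∧
      ∀ w ∈ ω ∩ range γ, ∃ G ∈ F, w ∈ G := by
    obtain ⟨t, ht, htc⟩ := (hωc.inter_right hTc.isClosed).elim_nhds_subcover (fun w => N (G w))
      (fun w hw => (hN _ (hG w hw)).mem_nhds ((hNG _ (hG w hw)).symm.subset (hwG w hw)).1)
    refine ⟨t.image G, ?_, ?_⟩
    · intro G' hG'
      obtain ⟨w, hw, rfl⟩ := Finset.mem_image.1 hG'
      exact hG w (ht w hw)
    · intro w hw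
      obtain ⟨v, hv, hwv⟩ := mem_iUnion₂.1 (htc hw)
      exact ⟨G v, Finset.mem_image_of_mem _ hv, (hNG _ (hG v (ht v hv))).subset ⟨hwv, hw.2⟩⟩
  let i : Set X → X → ZMod 2 := fun S z => if z ∈ S then 1 else 0
  have hi : ∀ {S : Set X} {z w : X}, (z ∈ S ↔ w ∈ S) → i S z = i S w := by
    intro S z w h; simp only [i, h]
  let D' : Set X := {z | i D z + ∑ G ∈ F, i (E G) z = 1}
  have hflat : ∀ w ∈ ω, Flat (range γ) D' w := by
    intro w hw
    have hwJ : w ∉ J := hA.disj w (hωA hw)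
    by_cases hwT : w ∈ range γ
    · obtain ⟨G, hGF, hwG⟩ := hF w ⟨hw, hwT⟩
      have hG := hFG G hGF
      have hfl : Flat (range γ) (symmDiff D (E G)) w := by
        refine hTc.locArc.flat_symmDiff (N := N G ∩ Jᶜ) ((hN G hG).inter hJ.isOpen_compl)
          (hD.locConst.mono fun v hv => hv.2) ((hE1 G hG).mono ?_)
          (fun v hv => hD.not_flat hTc v hv.2) (fun v hv => hE2 G hG v
            ((hNG G hG).subset ⟨hv.1.1, hv.2⟩)) ⟨((hNG G hG).symm.subset hwG).1, hwJ⟩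
        rintro v ⟨hv1, hv2⟩ (hv | hv)
        · exact hv1.2 hv
        · exact hv2 ((hGA G hG).2 hv)
      have hrest : ∀ᶠ z in 𝓝 w, ∑ G ∈ F.erase G, i (E G) z = ∑ G ∈ F.erase G, i (E G) w := by
        have : ∀ᶠ z in 𝓝 w, ∀ G' ∈ F.erase G, (z ∈ E G' ↔ w ∈ E G') := by
          rw [Finset.eventually_all]
          intro G' hG'
          obtain ⟨hne, hG'F⟩ := Finset.mem_erase.1 hG'
          refine hE1 G' (hFG G' hG'F) w ?_
          rintro (h | h)
          · exact hwJ h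
          · exact hne (hGeq _ _ (hFG G' hG'F) hG w h hwG)
        filter_upwards [this] with z hz
        exact Finset.sum_congr rfl fun G' hG' => hi (hz G' hG')
      have hD' : ∀ z, z ∈ D' ↔ (i D z + i (E G) z) + ∑ G ∈ F.erase G, i (E G) z = 1 := by
        intro z
        rw [add_assoc, Finset.add_sum_erase F (fun G => i (E G) z) hGF]
        rfl
      have key : ∀ r s : ZMod 2, (∀ᶠ z in 𝓝 w, z ∉ range γ → i D z + i (E G) z = r) →
          Flat (range γ) D' w := by
        intro r s hr
        by_cases h1 : r + ∑ G ∈ F.erase G, i (E G) w = 1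
        · left
          filter_upwards [hr, hrest] with z hz1 hz2 hz
          rw [hD', hz1 hz, hz2, h1]
        · right
          filter_upwards [hr, hrest] with z hz1 hz2 hz
          rw [hD', hz1 hz, hz2]
          exact h1
      rcases hfl with h | h
      · refine key 1 1 ?_
        filter_upwards [h] with z hz hzT
        rcases hz hzT with ⟨h1, h2⟩ | ⟨h1, h2⟩ <;> simp [i, h1, h2]
      · refine key 0 0 ?_
        filter_upwards [h] with z hz hzT
        have := hz hzT
        rw [mem_symmDiff] at this
        by_cases h1 : z ∈ D <;> by_cases h2 : z ∈ E G
        · simp only [i, h1, h2, if_true]; decide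
        · exact absurd (Or.inl ⟨h1, h2⟩) this
        · exact absurd (Or.inr ⟨h2, h1⟩) this
        · simp [i, h1, h2]
    · have h1 : ∀ᶠ z in 𝓝 w, ∀ G' ∈ F, (z ∈ E G' ↔ w ∈ E G') := by
        rw [Finset.eventually_all]
        intro G' hG'
        refine hE1 G' (hFG G' hG') w ?_
        rintro (h | h)
        · exact hwJ h
        · exact hwT ((hGA _ (hFG G' hG')).2 h)
      have h2 : ∀ᶠ z in 𝓝 w, (z ∈ D' ↔ w ∈ D') := by
        filter_upwards [h1, hD.locConst w hwT] with z hz1 hz2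
        show _ = _ ↔ _ = _
        rw [hi hz2, Finset.sum_congr rfl fun G' hG' => hi (hz1 G' hG')]
      exact LocConst.flat (s := {w}) (by rintro _ rfl; exact h2) rfl
  have hxT : x ∉ range γ := by
    rw [hT]
    rintro ⟨w, hw, he⟩
    obtain ⟨v, hv, rfl⟩ := hxK
    rw [hφ.injective he, mem_sphere_zero_iff_norm] at hw
    rw [mem_closedBall_zero_iff] at hv
    linarith
  have hyT : y ∉ range γ := by
    rw [hT]
    rintro ⟨w, hw, rfl⟩
    rw [mem_sphere_zero_iff_norm] at hw
    exact hyL ⟨w, by rw [mem_ball_zero_iff]; linarith, rfl⟩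
  have hxD : x ∈ D := by
    obtain ⟨v, hv, rfl⟩ := hxK
    rw [mem_closedBall_zero_iff] at hv
    exact ⟨v, by rw [mem_ball_zero_iff]; linarith, rfl⟩
  have hyD : y ∉ D := fun h => hyL (image_mono (Metric.ball_subset_ball (by norm_num)) h)
  have hfin := hTc.locArc.mem_const hωp hflat hx hy hxT hyT
  have s1 : ∑ G ∈ F, i (E G) x = 0 := Finset.sum_eq_zero fun G hG => if_neg (hEx G (hFG G hG))
  have s2 : ∑ G ∈ F, i (E G) y = 0 := Finset.sum_eq_zero fun G hG => if_neg (hEy G (hFG G hG))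
  have m1 : x ∈ D' := by
    show i D x + _ = 1
    rw [s1]; simp [i, hxD]
  have m2 : i D y + ∑ G ∈ F, i (E G) y = 1 := hfin.1 m1
  rw [s2] at m2
  simp [i, hyD] at m2

end SurfDisc

namespace SurfDisc
variable {X : Type*} [TopologicalSpace X]

/-! ### Subdividing cells by crosscuts -/

/-- The cell `A`, bounded by `J`, can be cut by finitely many successive crosscuts into cells
satisfying `P`. -/
inductive Good (P : Set X → Set X → Prop) : Set X → Set X → Prop
  | base {A J : Set X} : IsCell A J → P A J → Good P A J
  | cut {A E F : Set X} {a b α : ℝ → X} : ArcPair a b → IsCell A (a '' Icc 0 1 ∪ b '' Icc 0 1) →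
      IsArcMap α → α 0 = a 0 → α 1 = a 1 → α '' Ioo 0 1 ⊆ A →
      IsCell E (a '' Icc 0 1 ∪ α '' Icc 0 1) → IsCell F (b '' Icc 0 1 ∪ α '' Icc 0 1) →
      Disjoint E F → E ∪ F = A \ α '' Icc 0 1 → Good P E (a '' Icc 0 1 ∪ α '' Icc 0 1) →
      Good P F (b '' Icc 0 1 ∪ α '' Icc 0 1) → Good P A (a '' Icc 0 1 ∪ b '' Icc 0 1)

/-- Subdivisions can be iterated. -/
lemma Good.bind {P Q : Set X → Set X → Prop} {A J : Set X} (h : Good P A J)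
    (hPQ : ∀ A' J', IsCell A' J' → A' ⊆ A → P A' J' → Good Q A' J') : Good Q A J := by
  induction h with
  | base h hP => exact hPQ _ _ h subset_rfl hP
  | cut h1 h2 h3 h4 h5 h6 h7 h8 h9 h10 _ _ ih1 ih2 =>
    refine Good.cut h1 h2 h3 h4 h5 h6 h7 h8 h9 h10 (ih1 fun A' J' h h' => hPQ A' J' h (h'.trans ?_))
      (ih2 fun A' J' h h' => hPQ A' J' h (h'.trans ?_))
    · exact (subset_union_left.trans h10.subset).trans sdiff_subset
    · exact (subset_union_right.trans h10.subset).trans sdiff_subset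

variable [Surf X] [SimplyConnectedSpace X]

/-- To subdivide a cell it is enough to subdivide the two pieces left by a crosscut. The pieces `E`
enter through the properties that survive later cuts: a connected subset of `A` off the crosscut
lies in `E` or is disjoint from it. -/
lemma Good.of_cut {P : Set X → Set X → Prop} {A J : Set X} (hA : IsCell A J) {α : ℝ → X}
    (hα : IsArcMap α) (h0 : α 0 ∈ J) (h1 : α 1 ∈ J) (hαs : α '' Ioo 0 1 ⊆ A)
    (hP : ∀ E JE, IsCell E JE → E ⊆ A → Disjoint E (α '' Icc 0 1) → α '' Icc 0 1 ⊆ JE →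
      (∀ C, IsPreconnected C → C ⊆ A → Disjoint C (α '' Icc 0 1) → C ⊆ E ∨ Disjoint C E) →
      Good P E JE) : Good P A J := by
  obtain ⟨a, b, hab, ha0, ha1, rfl⟩ := hA.jordan.split h0 h1 hα.ends_ne
  obtain ⟨E, F, hE, hF, hEF, hu⟩ := theta hab hA hα ha0.symm ha1.symm hαs
  have hEs : E ⊆ A \ α '' Icc 0 1 := subset_union_left.trans hu.subset
  have hFs : F ⊆ A \ α '' Icc 0 1 := subset_union_right.trans hu.subset
  refine Good.cut hab hA hα ha0.symm ha1.symm hαs hE hF hEF hu ?_ ?_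
  · refine hP _ _ hE (hEs.trans sdiff_subset) (Set.disjoint_left.2 fun x hx => (hEs hx).2)
      subset_union_right fun C hC hCA hCα => hE.side.subset_or_disjoint hC ?_
    rintro x hx (h | h)
    · exact hA.side.disj x (hCA hx) (Or.inl h)
    · exact Set.disjoint_left.1 hCα hx h
  · refine hP _ _ hF (hFs.trans sdiff_subset) (Set.disjoint_left.2 fun x hx => (hFs hx).2)
      subset_union_right fun C hC hCA hCα => hF.side.subset_or_disjoint hC ?_
    rintro x hx (h | h)
    · exact hA.side.disj x (hCA hx) (Or.inr h)
    · exact Set.disjoint_left.1 hCα hx h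

/-- Cutting along the finitely many long gaps of the circle `‖ζ‖ = 3 / 2` in a chart yields cells
which do not reach from the unit disc to the outside of the disc of radius `2`. -/
lemma good_circle_aux {γ : ℝ → X} (hc : Continuous γ)
    (hγ : ∀ s t, γ s = γ t ↔ ∃ n : ℤ, t = s + n)
    {φ : ℂ → X} (hφ : IsOpenEmbedding φ) (hT : range γ = φ '' Metric.sphere 0 (3/2))
    {A J : Set X} (hA : IsCell A J) (h2 : ∃ p ∈ J ∩ range γ, ∃ q ∈ J ∩ range γ, p ≠ q) :
    Good (fun A' _ => Disjoint A' (φ '' Metric.closedBall 0 1) ∨ A' ⊆ φ '' Metric.ball 0 2) A J := by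
  have hJ := hA.jordan.curveLike
  obtain ⟨δ, hδ, hmesh⟩ := exists_mesh hc hγ hφ hT hJ.isClosed hJ.locArc
  obtain ⟨n, hn⟩ := exists_nat_one_div_lt hδ
  have hN : (0:ℝ) < (n:ℝ) + 1 := by positivity
  -- The circle is cut along all gaps which contain one of the points `γ (i / (n + 1))`.
  let Inv : ℕ → Set X → Set X → Prop := fun k A' J' => A' ⊆ A ∧
    (∃ p ∈ J' ∩ range γ, ∃ q ∈ J' ∩ range γ, p ≠ q) ∧
    (∀ C, IsPreconnected C → C ⊆ range γ → C ⊆ A → C ⊆ A' ∨ Disjoint C A') ∧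
    ∀ i < k, γ ((i:ℝ) / ((n:ℝ) + 1)) ∉ A'
  have hInv : ∀ k, Good (Inv k) A J := by
    intro k
    induction k with
    | zero =>
      exact Good.base hA ⟨subset_rfl, h2, fun C _ _ h => Or.inl h, fun i hi => absurd hi (by omega)⟩
    | succ k ih =>
      refine ih.bind ?_
      rintro A' J' hA' - ⟨hA'A, h2', hC', hk⟩
      by_cases hin : γ ((k:ℝ) / ((n:ℝ) + 1)) ∈ A'
      · obtain ⟨a, b, hs, hg⟩ := exists_gap hc hγ hA'.side hA'.jordan.isCompact.isClosed h2' hin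
        have hαi : (fun u => γ (a + u * (b - a))) '' Icc 0 1 = γ '' Icc a b := affine_image γ hg.lt.le
        have hαo : (fun u => γ (a + u * (b - a))) '' Ioo 0 1 = γ '' Ioo a b :=
          affine_image_Ioo γ hg.lt
        refine Good.of_cut hA' (param_arc hc hγ hg.lt hg.lt_add) (by simpa using hg.left)
          (by simpa using hg.right) (hαo ▸ hg.sub) ?_
        rw [hαi]
        intro E JE hE hEA' hEα hαJ hCE
        refine Good.base hE ⟨hEA'.trans hA'A, ?_, ?_, ?_⟩
        · refine ⟨γ a, ⟨hαJ ⟨a, ⟨le_rfl, hg.lt.le⟩, rfl⟩, mem_range_self _⟩,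
            γ b, ⟨hαJ ⟨b, ⟨hg.lt.le, le_rfl⟩, rfl⟩, mem_range_self _⟩, fun he => ?_⟩
          exact hg.lt.ne (param_injOn hγ ⟨le_rfl, hg.lt.le⟩ ⟨hg.lt.le, le_rfl⟩ hg.lt_add he)
        · intro C hC hCγ hCA
          rcases hC' C hC hCγ hCA with h | h
          · by_cases hm : (C ∩ γ '' Ioo a b).Nonempty
            · right
              have := hg.maximal hc hγ hC hCγ
                (Set.disjoint_left.2 fun x hx => hA'.side.disj x (h hx)) hm
              exact (hEα.mono_right (this.trans (image_mono Ioo_subset_Icc_self))).symm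
            · refine hCE C hC h (Set.disjoint_left.2 ?_)
              rintro _ hx ⟨s, hs, rfl⟩
              have hsJ := hA'.side.disj _ (h hx)
              refine hm ⟨γ s, hx, s, ⟨lt_of_le_of_ne hs.1 ?_, lt_of_le_of_ne hs.2 ?_⟩, rfl⟩
              · rintro rfl; exact hsJ hg.left
              · rintro rfl; exact hsJ hg.right
          · exact Or.inr (h.mono_right hEA')
        · intro i hi h
          rcases Nat.lt_succ_iff_lt_or_eq.1 hi with h' | rfl
          · exact hk i h' (hEA' h)
          · exact Set.disjoint_left.1 hEα h ⟨_, Ioo_subset_Icc_self hs, rfl⟩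
      · refine Good.base hA' ⟨hA'A, h2', hC', fun i hi => ?_⟩
        rcases Nat.lt_succ_iff_lt_or_eq.1 hi with h' | rfl
        · exact hk i h'
        · exact hin
  refine (hInv (n + 1)).bind ?_
  rintro A' J' hA' - ⟨hA'A, h2', hC', hk⟩
  refine Good.base hA' ?_
  by_contra! hcon
  obtain ⟨h1, h3⟩ := hcon
  obtain ⟨x, hxA, hxK⟩ := Set.not_disjoint_iff.1 h1
  obtain ⟨y, hyA, hyL⟩ := Set.not_subset.1 h3
  obtain rfl | ⟨w, hw, hw0, hw1, hws⟩ :=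
    arcJoined_of_preconnected hA'.side.isOpen hA'.side.preconn hxA hyA
  · exact hyL (image_mono (Metric.closedBall_subset_ball (by norm_num)) hxK)
  refine no_crossing hc hγ hφ hT hA.side hJ.isClosed hmesh hw.isCompact
    (isPreconnected_Icc.image _ hw.cont) (hws.trans hA'A) ?_ (x := x) (y := y)
    ⟨0, by simp, hw0⟩ ⟨1, by simp, hw1⟩ hxK hyL
  intro s hs
  have hsA' := hws hs
  obtain ⟨a, b, hsab, hg⟩ := exists_gap hc hγ hA.side hJ.isClosed h2 (hA'A hsA')
  refine ⟨a, b, hsab, hg, ?_⟩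
  by_contra! hba
  have hGA' : γ '' Ioo a b ⊆ A' := by
    rcases hC' _ (isPreconnected_Ioo.image _ hc.continuousOn) (image_subset_range _ _) hg.sub
      with h | h
    · exact h
    · exact absurd hsA' (Set.disjoint_left.1 h ⟨s, hsab, rfl⟩)
  let m : ℤ := ⌊a * (n + 1)⌋ + 1
  have hm1 : a * (n + 1) < m := by
    simp only [m]; push_cast; exact Int.lt_floor_add_one _
  have hm2 : (m:ℝ) ≤ a * (n + 1) + 1 := by
    simp only [m]; push_cast; linarith [Int.floor_le (a * ((n:ℝ) + 1))]
  have hmod := Int.emod_add_mul_ediv m (n + 1)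
  have hnn : 0 ≤ m % ((n:ℤ) + 1) := Int.emod_nonneg _ (by omega)
  have hlt : m % ((n:ℤ) + 1) < n + 1 := Int.emod_lt_of_pos _ (by omega)
  obtain ⟨i, hi⟩ := Int.eq_ofNat_of_zero_le hnn
  refine hk i (by omega) (hGA' ⟨m / (n + 1), ⟨?_, ?_⟩, ?_⟩)
  · rw [lt_div_iff₀ hN]; exact hm1
  · rw [div_lt_iff₀ hN]
    rw [div_lt_iff₀ hN] at hn
    nlinarith
  · refine ((hγ _ _).2 ⟨m / (n + 1), ?_⟩).symm
    rw [hi] at hmod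
    have hmod' : (m:ℝ) = i + (n + 1) * ((m / (n + 1) : ℤ) : ℝ) := by exact_mod_cast hmod.symm
    nth_rewrite 1 [hmod']
    field_simp

/-- A cell can be cut so that no piece meets both `φ (|z| ≤ 1)` and the complement of
`φ (|z| < 2)`. -/
lemma good_circle {φ : ℂ → X} (hφ : IsOpenEmbedding φ) {A J : Set X} (hA : IsCell A J) :
    Good (fun A' _ => Disjoint A' (φ '' Metric.closedBall 0 1) ∨ A' ⊆ φ '' Metric.ball 0 2) A J := by
  by_cases hcon : Disjoint A (φ '' Metric.closedBall 0 1) ∨ A ⊆ φ '' Metric.ball 0 2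
  · exact Good.base hA hcon
  push Not at hcon
  obtain ⟨h1, h3⟩ := hcon
  obtain ⟨x, hxA, hxK⟩ := Set.not_disjoint_iff.1 h1
  obtain ⟨y, hyA, hyL⟩ := Set.not_subset.1 h3
  have hTJ := IsOpenEmbedding.isJordan_circle hφ 0 (r := 3/2) (by norm_num)
  have hD := IsOpenEmbedding.isSide_ball hφ 0 (r := 3/2) (by norm_num)
  obtain ⟨γ, hc, hγ, hT⟩ := hTJ
  by_cases h2 : ∃ p ∈ J ∩ range γ, ∃ q ∈ J ∩ range γ, p ≠ q
  · exact good_circle_aux hc hγ hφ hT hA h2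
  -- If the circle meets `J` at most once, the rest of `J` is on one side of the circle, and a
  -- crosscut through a point of the other side meets the circle twice.
  push Not at h2
  have hJ := hA.jordan.curveLike
  obtain ⟨η, hηc, hη, hηJ⟩ := hA.jordan
  obtain ⟨t, ht⟩ : ∃ t, ∀ s ∈ Ioo t (t + 1), η s ∉ range γ := by
    by_cases hne : ∃ t, η t ∈ range γ
    · obtain ⟨t, ht⟩ := hne
      refine ⟨t, fun s hs hsT => ?_⟩
      have := h2 (η t) ⟨hηJ ▸ mem_range_self _, ht⟩ (η s) ⟨hηJ ▸ mem_range_self _, hsT⟩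
      have := param_injOn hη (u := t) (v := s) ⟨le_rfl, hs.1.le⟩ ⟨hs.1.le, le_rfl⟩ hs.2 this
      linarith [hs.1]
    · push Not at hne
      exact ⟨0, fun s _ => hne s⟩
  set D := φ '' Metric.ball 0 (3/2) with hDdef
  rw [← hT] at hD
  have hcst : ∀ C, IsPreconnected C → Disjoint C (range γ) → ∀ u ∈ C, ∀ v ∈ C, (u ∈ D ↔ v ∈ D) :=
    fun C hC hCT u hu v hv => hD.locConst.mem_const
      (fun z hz => Set.disjoint_left.1 hCT hz) hC hu hv
  have hp : t + 1/3 ∈ Ioo t (t + 1) := ⟨by linarith, by linarith⟩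
  have hq : t + 2/3 ∈ Ioo t (t + 1) := ⟨by linarith, by linarith⟩
  have hpq : η (t + 1/3) ≠ η (t + 2/3) := fun he => by
    have := param_injOn hη (u := t + 1/3) (v := t + 2/3) ⟨le_rfl, by linarith⟩
      ⟨by linarith, le_rfl⟩ (by linarith) he
    linarith
  have hpqD : η (t + 1/3) ∈ D ↔ η (t + 2/3) ∈ D :=
    hcst (η '' Ioo t (t + 1)) (isPreconnected_Ioo.image _ hηc.continuousOn) (Set.disjoint_left.2
      (by rintro _ ⟨s, hs, rfl⟩; exact ht s hs)) _ ⟨_, hp, rfl⟩ _ ⟨_, hq, rfl⟩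
  have hxT : x ∉ range γ := by
    rw [hT]
    rintro ⟨w, hw, he⟩
    obtain ⟨v, hv, rfl⟩ := hxK
    rw [hφ.injective he, mem_sphere_zero_iff_norm] at hw
    rw [mem_closedBall_zero_iff] at hv
    linarith
  have hyT : y ∉ range γ := by
    rw [hT]
    rintro ⟨w, hw, rfl⟩
    rw [mem_sphere_zero_iff_norm] at hw
    exact hyL ⟨w, by rw [mem_ball_zero_iff]; linarith, rfl⟩
  have hxD : x ∈ D := by
    obtain ⟨v, hv, rfl⟩ := hxK
    rw [mem_closedBall_zero_iff] at hv
    exact ⟨v, by rw [mem_ball_zero_iff]; linarith, rfl⟩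
  have hyD : y ∉ D := fun h => hyL (image_mono (Metric.ball_subset_ball (by norm_num)) h)
  obtain ⟨w, hwA, hwT, hwD⟩ : ∃ w ∈ A, w ∉ range γ ∧ ¬ (η (t + 1/3) ∈ D ↔ w ∈ D) := by
    by_cases h : η (t + 1/3) ∈ D
    · exact ⟨y, hyA, hyT, by tauto⟩
    · exact ⟨x, hxA, hxT, by tauto⟩
  have hpJ : η (t + 1/3) ∈ J := hηJ ▸ mem_range_self _
  have hqJ : η (t + 2/3) ∈ J := hηJ ▸ mem_range_self _
  obtain ⟨α, hα, h0, h1, hαs, u, hu, rfl⟩ := hA.side.exists_crosscut_through hJ hpJ hqJ hpq hwA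
  have hfind : ∀ s s', 0 ≤ s → s ≤ s' → s' ≤ 1 → ¬ (α s ∈ D ↔ α s' ∈ D) →
      ∃ v ∈ Icc s s', α v ∈ range γ := by
    intro s s' hs0 hss hs1 hne
    by_contra! hno
    refine hne (hcst (α '' Icc s s') (isPreconnected_Icc.image _
      (hα.cont.mono (Icc_subset_Icc hs0 hs1))) (Set.disjoint_left.2 ?_) _
      ⟨s, ⟨le_rfl, hss⟩, rfl⟩ _ ⟨s', ⟨hss, le_rfl⟩, rfl⟩)
    rintro _ ⟨v, hv, rfl⟩
    exact hno v hv
  obtain ⟨v1, hv1, hv1T⟩ := hfind 0 u le_rfl hu.1.le hu.2.le (by rwa [h0])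
  obtain ⟨v2, hv2, hv2T⟩ := hfind u 1 hu.1.le hu.2.le le_rfl (by rw [h1, ← hpqD]; tauto)
  have hv1' : v1 ∈ Icc (0:ℝ) 1 := ⟨hv1.1, hv1.2.trans hu.2.le⟩
  have hv2' : v2 ∈ Icc (0:ℝ) 1 := ⟨hu.1.le.trans hv2.1, hv2.2⟩
  refine Good.of_cut hA hα (h0 ▸ hpJ) (h1 ▸ hqJ) hαs fun E JE hE hEA hEα hαJ _ => ?_
  refine good_circle_aux hc hγ hφ hT hE ⟨α v1, ⟨hαJ ⟨v1, hv1', rfl⟩, hv1T⟩, α v2,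
    ⟨hαJ ⟨v2, hv2', rfl⟩, hv2T⟩, fun he => ?_⟩
  have := hα.inj hv1' hv2' he
  have hvu : v1 = u := le_antisymm hv1.2 (this ▸ hv2.1)
  exact hwT (hvu ▸ hv1T)

/-- A cell can be cut into pieces subordinate to a given family of neighbourhoods. -/
theorem IsCell.good {A J : Set X} (hA : IsCell A J) {c : X → Set X} (hc : ∀ x ∈ closure A, c x ∈ 𝓝 x) :
    Good (fun A' _ => ∃ x ∈ closure A, A' ⊆ c x) A J := by
  have hex : ∀ x ∈ closure A, ∃ φ : ℂ → X, IsOpenEmbedding φ ∧ φ 0 = x ∧ range φ ⊆ c x :=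
    fun x hx => exists_chart_small (hc x hx)
  choose! φ hφ h0 hφc using hex
  obtain ⟨t, ht, htc⟩ := hA.compact.elim_nhds_subcover (fun x => φ x '' Metric.ball 0 1)
    (fun x hx => ((hφ x hx).isOpenMap _ Metric.isOpen_ball).mem_nhds ⟨0, by simp, h0 x hx⟩)
  have key : ∀ s : Finset X, s ⊆ t → Good (fun A' _ => ∀ x ∈ s,
      Disjoint A' (φ x '' Metric.closedBall 0 1) ∨ A' ⊆ φ x '' Metric.ball 0 2) A J := by
    classical
    intro s
    induction s using Finset.induction_on with
    | empty => exact fun _ => Good.base hA (by simp)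
    | insert x s _ ih =>
      intro hs
      refine (ih ((Finset.subset_insert _ _).trans hs)).bind fun A' J' hA' _ hP => ?_
      refine (good_circle (hφ x (ht x (hs (Finset.mem_insert_self _ _)))) hA').bind
        fun A'' J'' hA'' hsub hP' => Good.base hA'' fun y hy => ?_
      rcases Finset.mem_insert.1 hy with rfl | hy
      · exact hP'
      · rcases hP y hy with h | h
        · exact Or.inl (h.mono_left hsub)
        · exact Or.inr (hsub.trans h)
  refine (key t subset_rfl).bind fun A' J' hA' hsub hP => Good.base hA' ?_
  obtain ⟨z, hz⟩ := hA'.side.nonempty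
  obtain ⟨x, hx, hzx⟩ := mem_iUnion₂.1 (htc (subset_closure (hsub hz)))
  refine ⟨x, ht x hx, ?_⟩
  rcases hP x hx with h | h
  · exact absurd (image_mono Metric.ball_subset_closedBall hzx) (Set.disjoint_left.1 h hz)
  · exact (h.trans (image_subset_range _ _)).trans (hφc x (ht x hx))

end SurfDisc

/-! ### Matching subdivisions of two cells -/

namespace SurfDisc
set_option linter.unusedSectionVars false

/-- A cell `A` of `X` with boundary curve `J`, paired with a cell `A'` of `Y` with boundary
curve `J'`. -/
structure Quad (X Y : Type*) where
  /-- the cell in `X` -/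
  A : Set X
  /-- its boundary curve -/
  J : Set X
  /-- the cell in `Y` -/
  A' : Set Y
  /-- its boundary curve -/
  J' : Set Y

/-- The union of the boundary curves of the cells in `X`. -/
def skel {X X' : Type*} (L : Set (Quad X X')) : Set X := ⋃ q ∈ L, q.J

variable {X X' : Type*} [TopologicalSpace X'] [TopologicalSpace X]

/-- Two matching finite families of cells in `X` and `X'`, together with a map `f` that carries the
boundary curve of each cell in `X` onto the boundary curve of its partner, injectively on the union
of all these curves. -/
structure State (f : X → X') (L : Set (Quad X X')) : Prop where
  fin : L.Finite
  cell : ∀ q ∈ L, IsCell q.A q.J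
  cell' : ∀ q ∈ L, IsCell q.A' q.J'
  cont : ∀ q ∈ L, ContinuousOn f q.J
  image : ∀ q ∈ L, f '' q.J = q.J'
  inj : InjOn f (skel L)
  disj : ∀ q ∈ L, ∀ r ∈ L, q ≠ r → Disjoint q.A r.A ∧ Disjoint q.A' r.A'

lemma mem_skel {X X' : Type*} {L : Set (Quad X X')} {x : X} : x ∈ skel L ↔ ∃ q ∈ L, x ∈ q.J := by
  simp [skel]

/-- The matched family `(f', L')` subdivides `(f, L)`. -/
structure Refines (f : X → X') (L : Set (Quad X X')) (f' : X → X') (L' : Set (Quad X X')) :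
    Prop where
  eqOn : EqOn f' f (skel L)
  skel : skel L ⊆ skel L'
  below : ∀ q' ∈ L', ∃ q ∈ L, q'.A ⊆ q.A ∧ q'.A' ⊆ q.A'
  cover : ∀ q ∈ L, ∀ x ∈ closure q.A, ∃ q' ∈ L', x ∈ closure q'.A
  cover' : ∀ q ∈ L, ∀ x ∈ closure q.A', ∃ q' ∈ L', x ∈ closure q'.A'

lemma Refines.refl (f : X → X') (L : Set (Quad X X')) : Refines f L f L :=
  ⟨fun _ _ => rfl, subset_rfl, fun q hq => ⟨q, hq, subset_rfl, subset_rfl⟩,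
    fun q hq _ hx => ⟨q, hq, hx⟩, fun q hq _ hx => ⟨q, hq, hx⟩⟩

lemma Refines.trans {f g h : X → X'} {L M N : Set (Quad X X')} (h1 : Refines f L g M)
    (h2 : Refines g M h N) : Refines f L h N := by
  refine ⟨fun x hx => (h2.eqOn (h1.skel hx)).trans (h1.eqOn hx), h1.skel.trans h2.skel,
    fun q hq => ?_, fun q hq x hx => ?_, fun q hq x hx => ?_⟩
  · obtain ⟨r, hr, hr1, hr2⟩ := h2.below q hq
    obtain ⟨s, hs, hs1, hs2⟩ := h1.below r hr
    exact ⟨s, hs, hr1.trans hs1, hr2.trans hs2⟩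
  · obtain ⟨r, hr, hr1⟩ := h1.cover q hq x hx
    exact h2.cover r hr x hr1
  · obtain ⟨r, hr, hr1⟩ := h1.cover' q hq x hx
    exact h2.cover' r hr x hr1

variable [Surf X] [SimplyConnectedSpace X] [Surf X'] [SimplyConnectedSpace X']

lemma IsCell.closure_eq {A J : Set X} (h : IsCell A J) : closure A = A ∪ J :=
  h.side.closure_eq h.jordan.curveLike

lemma IsCell.not_mem_of_disjoint {A J B K : Set X} (hA : IsCell A J) (hB : IsCell B K)
    (h : Disjoint A B) {x : X} (hx : x ∈ A) : x ∉ K := fun hxK => by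
  have : x ∈ closure B := by rw [hB.closure_eq]; exact Or.inr hxK
  obtain ⟨y, hy1, hy2⟩ := mem_closure_iff.1 this A hA.side.isOpen hx
  exact Set.disjoint_left.1 h hy1 hy2

lemma State.not_mem_skel {f : X → X'} {L : Set (Quad X X')} (h : State f L) {q : Quad X X'}
    (hq : q ∈ L) {x : X} (hx : x ∈ q.A) : x ∉ SurfDisc.skel L := by
  rw [mem_skel]
  rintro ⟨r, hr, hxr⟩
  by_cases hqr : q = r
  · subst hqr; exact (h.cell q hq).side.disj x hx hxr
  · exact (h.cell q hq).not_mem_of_disjoint (h.cell r hr) (h.disj q hq r hr hqr).1 hx hxr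

lemma State.not_mem_image {f : X → X'} {L : Set (Quad X X')} (h : State f L) {q : Quad X X'}
    (hq : q ∈ L) {x : X} (hx : x ∈ SurfDisc.skel L) : f x ∉ q.A' := fun hfx => by
  obtain ⟨r, hr, hxr⟩ := mem_skel.1 hx
  have hJ : f x ∈ r.J' := by rw [← h.image r hr]; exact ⟨x, hxr, rfl⟩
  by_cases hqr : q = r
  · subst hqr; exact (h.cell' q hq).side.disj _ hfx hJ
  · exact (h.cell' q hq).not_mem_of_disjoint (h.cell' r hr) (h.disj q hq r hr hqr).2 hfx hJ

lemma cover_cut {A E F a b c : Set X} (hA : IsCell A (a ∪ b)) (hE : IsCell E (a ∪ c))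
    (hF : IsCell F (b ∪ c)) (h : E ∪ F = A \ c) {x : X} (hx : x ∈ closure A) :
    x ∈ closure E ∨ x ∈ closure F := by
  rw [hA.closure_eq] at hx
  rw [hE.closure_eq, hF.closure_eq]
  by_cases hxc : x ∈ c
  · exact Or.inl (Or.inr (Or.inr hxc))
  rcases hx with hx | hx | hx
  · have : x ∈ E ∪ F := h ▸ ⟨hx, hxc⟩
    exact this.imp Or.inl Or.inl
  · exact Or.inl (Or.inr (Or.inl hx))
  · exact Or.inr (Or.inr (Or.inl hx))

/-- A map is continuous on an arc as soon as its composition with the parametrisation is. -/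
lemma IsArcMap.continuousOn_image {Y : Type*} [TopologicalSpace Y] [T2Space Y] {α : ℝ → Y}
    (hα : IsArcMap α) {g : Y → X'} (hg : ContinuousOn (g ∘ α) (Icc 0 1)) :
    ContinuousOn g (α '' Icc 0 1) := by
  rw [continuousOn_iff_isClosed]
  intro t ht
  obtain ⟨u, hu, hut⟩ := continuousOn_iff_isClosed.1 hg t ht
  refine ⟨α '' (u ∩ Icc 0 1), ?_, ?_⟩
  · exact ((isCompact_Icc.inter_left hu).image_of_continuousOn
      (hα.cont.mono inter_subset_right)).isClosed
  · ext y
    constructor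
    · rintro ⟨hy, s, hs, rfl⟩
      have : s ∈ u ∩ Icc 0 1 := hut ▸ ⟨hy, hs⟩
      exact ⟨⟨s, this, rfl⟩, s, hs, rfl⟩
    · rintro ⟨⟨s, hs, rfl⟩, -⟩
      have : s ∈ g ∘ α ⁻¹' t ∩ Icc 0 1 := hut.symm ▸ hs
      exact ⟨this.1, s, hs.2, rfl⟩

/-- One crosscut of a cell of `X` is matched by a crosscut of its partner. -/
lemma State.split {f : X → X'} {L : Set (Quad X X')} (h : State f L) {A E F : Set X} {A' J' : Set X'}
    {a b α : ℝ → X} (hab : ArcPair a b) (hq : ⟨A, a '' Icc 0 1 ∪ b '' Icc 0 1, A', J'⟩ ∈ L)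
    (hα : IsArcMap α) (h0 : α 0 = a 0) (h1 : α 1 = a 1) (hαA : α '' Ioo 0 1 ⊆ A)
    (hE : IsCell E (a '' Icc 0 1 ∪ α '' Icc 0 1)) (hF : IsCell F (b '' Icc 0 1 ∪ α '' Icc 0 1))
    (hEF : Disjoint E F) (hEFA : E ∪ F = A \ α '' Icc 0 1) :
    ∃ (f' : X → X') (E' JE' F' JF' : Set X'),
      State f' (insert ⟨E, a '' Icc 0 1 ∪ α '' Icc 0 1, E', JE'⟩
        (insert ⟨F, b '' Icc 0 1 ∪ α '' Icc 0 1, F', JF'⟩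
          (L \ {⟨A, a '' Icc 0 1 ∪ b '' Icc 0 1, A', J'⟩}))) ∧
      Refines f L f' (insert ⟨E, a '' Icc 0 1 ∪ α '' Icc 0 1, E', JE'⟩
        (insert ⟨F, b '' Icc 0 1 ∪ α '' Icc 0 1, F', JF'⟩
          (L \ {⟨A, a '' Icc 0 1 ∪ b '' Icc 0 1, A', J'⟩}))) := by
  classical
  set q : Quad X X' := ⟨A, a '' Icc 0 1 ∪ b '' Icc 0 1, A', J'⟩ with hqdef
  have hA : IsCell A (a '' Icc 0 1 ∪ b '' Icc 0 1) := h.cell q hq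
  have hA' : IsCell A' J' := h.cell' q hq
  have himg : f '' (a '' Icc 0 1 ∪ b '' Icc 0 1) = J' := h.image q hq
  have hcont : ContinuousOn f (a '' Icc 0 1 ∪ b '' Icc 0 1) := h.cont q hq
  have hJs : a '' Icc 0 1 ∪ b '' Icc 0 1 ⊆ SurfDisc.skel L := fun x hx => mem_skel.2 ⟨q, hq, hx⟩
  have hinj : InjOn f (a '' Icc 0 1 ∪ b '' Icc 0 1) := h.inj.mono hJs
  have hma : ∀ t ∈ Icc (0:ℝ) 1, a t ∈ a '' Icc 0 1 ∪ b '' Icc 0 1 := fun t ht => Or.inl ⟨t, ht, rfl⟩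
  have hmb : ∀ t ∈ Icc (0:ℝ) 1, b t ∈ a '' Icc 0 1 ∪ b '' Icc 0 1 := fun t ht => Or.inr ⟨t, ht, rfl⟩
  have hI : ∀ t ∈ Ioo (0:ℝ) 1, t ∈ Icc (0:ℝ) 1 := fun t ht => Ioo_subset_Icc_self ht
  have h00 : (0:ℝ) ∈ Icc (0:ℝ) 1 := by simp
  have h11 : (1:ℝ) ∈ Icc (0:ℝ) 1 := by simp
  -- the images of the two boundary arcs
  have hab' : ArcPair (f ∘ a) (f ∘ b) := by
    refine ⟨⟨hcont.comp hab.left.cont hma, hinj.comp hab.left.inj hma⟩,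
      ⟨hcont.comp hab.right.cont hmb, hinj.comp hab.right.inj hmb⟩, ?_, ?_, ?_⟩
    · simp [hab.zero]
    · simp [hab.one]
    · intro s hs t ht hst
      exact hab.ne s hs t ht (hinj (hma s (hI s hs)) (hmb t (hI t ht)) hst)
  have himg' : J' = (f ∘ a) '' Icc 0 1 ∪ (f ∘ b) '' Icc 0 1 := by
    rw [← himg, image_union, image_comp, image_comp]
  obtain ⟨α', hα', h0', h1', hαA'⟩ := hA'.side.exists_crosscut hA'.jordan.curveLike
    (p := f (a 0)) (q := f (a 1)) (by rw [← himg]; exact ⟨_, hma 0 h00, rfl⟩)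
    (by rw [← himg]; exact ⟨_, hma 1 h11, rfl⟩) hab'.left.ends_ne
  rw [himg'] at hA'
  obtain ⟨E', F', hE', hF', hEF', hEFA'⟩ := theta hab' hA' hα' h0' h1' hαA'
  let f' : X → X' := fun x => if x ∈ α '' Ioo 0 1 then α' (Function.invFunOn α (Icc 0 1) x) else f x
  have hf's : ∀ x ∈ SurfDisc.skel L, f' x = f x := fun x hx =>
    if_neg fun hx' => h.not_mem_skel hq (hαA hx') hx
  have hf'α : ∀ t ∈ Icc (0:ℝ) 1, f' (α t) = α' t := by
    intro t ht
    rcases ht.1.eq_or_lt with rfl | ht0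
    · rw [h0, hf's _ (hJs (hma 0 h00)), h0']
    rcases ht.2.eq_or_lt with rfl | ht1
    · rw [h1, hf's _ (hJs (hma 1 h11)), h1']
    · have : f' (α t) = α' (Function.invFunOn α (Icc 0 1) (α t)) := if_pos ⟨t, ⟨ht0, ht1⟩, rfl⟩
      rw [this, hα.inj.leftInvOn_invFunOn ht]
  have hcα : ContinuousOn f' (α '' Icc 0 1) :=
    hα.continuousOn_image (hα'.cont.congr fun t ht => hf'α t ht)
  have hcJ : ContinuousOn f' (a '' Icc 0 1 ∪ b '' Icc 0 1) := hcont.congr fun x hx => hf's x (hJs hx)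
  have hiα : f' '' (α '' Icc 0 1) = α' '' Icc 0 1 := by
    rw [image_image]; exact image_congr hf'α
  have hia : f' '' (a '' Icc 0 1) = (f ∘ a) '' Icc 0 1 := by
    rw [image_image]; exact image_congr fun t ht => hf's _ (hJs (hma t ht))
  have hib : f' '' (b '' Icc 0 1) = (f ∘ b) '' Icc 0 1 := by
    rw [image_image]; exact image_congr fun t ht => hf's _ (hJs (hmb t ht))
  have hEA : E ⊆ A := fun x hx => (hEFA ▸ (Or.inl hx : x ∈ E ∪ F) : x ∈ A \ α '' Icc 0 1).1
  have hFA : F ⊆ A := fun x hx => (hEFA ▸ (Or.inr hx : x ∈ E ∪ F) : x ∈ A \ α '' Icc 0 1).1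
  have hEA' : E' ⊆ A' := fun x hx => (hEFA' ▸ (Or.inl hx : x ∈ E' ∪ F') : x ∈ A' \ α' '' Icc 0 1).1
  have hFA' : F' ⊆ A' := fun x hx => (hEFA' ▸ (Or.inr hx : x ∈ E' ∪ F') : x ∈ A' \ α' '' Icc 0 1).1
  have hαJ : ∀ t ∈ Icc (0:ℝ) 1, α t ∈ α '' Ioo 0 1 ∨ α t ∈ SurfDisc.skel L := by
    intro t ht
    rcases ht.1.eq_or_lt with rfl | ht0
    · right; rw [h0]; exact hJs (hma 0 h00)
    rcases ht.2.eq_or_lt with rfl | ht1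
    · right; rw [h1]; exact hJs (hma 1 h11)
    · exact Or.inl ⟨t, ⟨ht0, ht1⟩, rfl⟩
  refine ⟨f', E', (f ∘ a) '' Icc 0 1 ∪ α' '' Icc 0 1, F', (f ∘ b) '' Icc 0 1 ∪ α' '' Icc 0 1, ?_, ?_⟩
  · refine ⟨((h.fin.sdiff).insert _).insert _, ?_, ?_, ?_, ?_, ?_, ?_⟩
    · rintro r (rfl | rfl | hr)
      exacts [hE, hF, h.cell r hr.1]
    · rintro r (rfl | rfl | hr)
      exacts [hE', hF', h.cell' r hr.1]
    · rintro r (rfl | rfl | hr)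
      · exact (hcJ.mono subset_union_left).union_of_isClosed hcα hab.left.isCompact.isClosed
          hα.isCompact.isClosed
      · exact (hcJ.mono subset_union_right).union_of_isClosed hcα hab.right.isCompact.isClosed
          hα.isCompact.isClosed
      · exact (h.cont r hr.1).congr fun x hx => hf's x (mem_skel.2 ⟨r, hr.1, hx⟩)
    · rintro r (rfl | rfl | hr)
      · show f' '' (_ ∪ _) = _
        rw [image_union, hia, hiα]
      · show f' '' (_ ∪ _) = _
        rw [image_union, hib, hiα]
      · rw [← h.image r hr.1]
        exact image_congr fun x hx => hf's x (mem_skel.2 ⟨r, hr.1, hx⟩)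
    · have hsub : ∀ x ∈ SurfDisc.skel (insert (⟨E, a '' Icc 0 1 ∪ α '' Icc 0 1, E',
          (f ∘ a) '' Icc 0 1 ∪ α' '' Icc 0 1⟩ : Quad X X')
          (insert ⟨F, b '' Icc 0 1 ∪ α '' Icc 0 1, F', (f ∘ b) '' Icc 0 1 ∪ α' '' Icc 0 1⟩
          (L \ {q}))), x ∈ α '' Ioo 0 1 ∨ x ∈ SurfDisc.skel L := by
        intro x hx
        obtain ⟨r, (rfl | rfl | hr), hxr⟩ := mem_skel.1 hx
        · rcases hxr with hxr | ⟨t, ht, rfl⟩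
          · exact Or.inr (hJs (Or.inl hxr))
          · exact hαJ t ht
        · rcases hxr with hxr | ⟨t, ht, rfl⟩
          · exact Or.inr (hJs (Or.inr hxr))
          · exact hαJ t ht
        · exact Or.inr (mem_skel.2 ⟨r, hr.1, hxr⟩)
      have hmix : ∀ x ∈ α '' Ioo 0 1, ∀ y ∈ SurfDisc.skel L, f' x ≠ f' y := by
        rintro _ ⟨t, ht, rfl⟩ y hy he
        rw [hf'α t (hI t ht), hf's y hy] at he
        exact h.not_mem_image hq hy (he ▸ hαA' ⟨t, ht, rfl⟩)
      intro x hx y hy hxy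
      rcases hsub x hx with hx | hx <;> rcases hsub y hy with hy | hy
      · obtain ⟨s, hs, rfl⟩ := hx
        obtain ⟨t, ht, rfl⟩ := hy
        rw [hf'α s (hI s hs), hf'α t (hI t ht)] at hxy
        rw [hα'.inj (hI s hs) (hI t ht) hxy]
      · exact absurd hxy (hmix x hx y hy)
      · exact absurd hxy.symm (hmix y hy x hx)
      · rw [hf's x hx, hf's y hy] at hxy
        exact h.inj hx hy hxy
    · have hmono : ∀ r ∈ L \ {q}, Disjoint A r.A ∧ Disjoint A' r.A' := fun r hr =>
        h.disj q hq r hr.1 (fun he => hr.2 he.symm)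
      rintro r (rfl | rfl | hr) s (rfl | rfl | hs) hrs
      · exact absurd rfl hrs
      · exact ⟨hEF, hEF'⟩
      · exact ⟨(hmono s hs).1.mono_left hEA, (hmono s hs).2.mono_left hEA'⟩
      · exact ⟨hEF.symm, hEF'.symm⟩
      · exact absurd rfl hrs
      · exact ⟨(hmono s hs).1.mono_left hFA, (hmono s hs).2.mono_left hFA'⟩
      · exact ⟨(hmono r hr).1.symm.mono_right hEA, (hmono r hr).2.symm.mono_right hEA'⟩
      · exact ⟨(hmono r hr).1.symm.mono_right hFA, (hmono r hr).2.symm.mono_right hFA'⟩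
      · exact h.disj r hr.1 s hs.1 hrs
  · refine ⟨hf's, ?_, ?_, ?_, ?_⟩
    · intro x hx
      obtain ⟨r, hr, hxr⟩ := mem_skel.1 hx
      by_cases hrq : r = q
      · subst hrq
        rcases hxr with hxr | hxr
        · exact mem_skel.2 ⟨_, Or.inl rfl, Or.inl hxr⟩
        · exact mem_skel.2 ⟨_, Or.inr (Or.inl rfl), Or.inl hxr⟩
      · exact mem_skel.2 ⟨r, Or.inr (Or.inr ⟨hr, hrq⟩), hxr⟩
    · rintro r (rfl | rfl | hr)
      · exact ⟨q, hq, hEA, hEA'⟩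
      · exact ⟨q, hq, hFA, hFA'⟩
      · exact ⟨r, hr.1, subset_rfl, subset_rfl⟩
    · intro r hr x hx
      by_cases hrq : r = q
      · subst hrq
        rcases cover_cut hA hE hF hEFA hx with h | h
        · exact ⟨_, Or.inl rfl, h⟩
        · exact ⟨_, Or.inr (Or.inl rfl), h⟩
      · exact ⟨r, Or.inr (Or.inr ⟨hr, hrq⟩), hx⟩
    · intro r hr x hx
      by_cases hrq : r = q
      · subst hrq
        rcases cover_cut hA' hE' hF' hEFA' hx with h | h
        · exact ⟨_, Or.inl rfl, h⟩
        · exact ⟨_, Or.inr (Or.inl rfl), h⟩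
      · exact ⟨r, Or.inr (Or.inr ⟨hr, hrq⟩), hx⟩

/-- A subdivision of one cell of `X` by crosscuts can be matched in `X'`. -/
lemma State.refine_one {P : Set X → Set X → Prop} {A J : Set X} (hG : Good P A J) :
    ∀ {f : X → X'} {L : Set (Quad X X')} {A' J' : Set X'}, State f L → ⟨A, J, A', J'⟩ ∈ L →
      ∃ (f' : X → X') (L' : Set (Quad X X')), State f' L' ∧ Refines f L f' L' ∧
        L \ {⟨A, J, A', J'⟩} ⊆ L' ∧ ∀ q ∈ L', q ∈ L \ {⟨A, J, A', J'⟩} ∨ P q.A q.J := by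
  induction hG with
  | @base A J h hP =>
    intro f L A' J' hS hq
    refine ⟨f, L, hS, Refines.refl f L, sdiff_subset, fun q hq => ?_⟩
    by_cases he : q = ⟨A, J, A', J'⟩
    · subst he; exact Or.inr hP
    · exact Or.inl ⟨hq, he⟩
  | @cut A E F a b α hab hA hα h0 h1 hαA hE hF hEF hEFA _ _ ih1 ih2 =>
    intro f L A' J' hS hq
    obtain ⟨f1, E', JE', F', JF', hS1, hR1⟩ := hS.split hab hq hα h0 h1 hαA hE hF hEF hEFA
    have hne : ∀ (B C K : Set X) (B' C' K' : Set X') (r : Quad X X'), B.Nonempty → Disjoint B r.A →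
        r ≠ ⟨B, K, B', K'⟩ := by
      rintro B C K B' C' K' r ⟨x, hx⟩ hd rfl
      exact Set.disjoint_left.1 hd hx hx
    have hEA : E ⊆ A := fun x hx => (hEFA ▸ (Or.inl hx : x ∈ E ∪ F) : x ∈ A \ α '' Icc 0 1).1
    have hFA : F ⊆ A := fun x hx => (hEFA ▸ (Or.inr hx : x ∈ E ∪ F) : x ∈ A \ α '' Icc 0 1).1
    obtain ⟨f2, L2, hS2, hR2, hsub2, hP2⟩ := ih1 hS1 (Or.inl rfl)
    obtain ⟨f3, L3, hS3, hR3, hsub3, hP3⟩ := ih2 hS2 (A' := F') (J' := JF')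
      (hsub2 ⟨Or.inr (Or.inl rfl), hne E E _ _ E' _ _ hE.side.nonempty hEF⟩)
    refine ⟨f3, L3, hS3, (hR1.trans hR2).trans hR3, ?_, ?_⟩
    · intro r hr
      have hd := (hS.disj _ hq r hr.1 fun he => hr.2 he.symm).1
      exact hsub3 ⟨hsub2 ⟨Or.inr (Or.inr hr),
        hne E E _ _ E' _ _ hE.side.nonempty (hd.mono_left hEA)⟩,
        hne F F _ _ E' _ _ hF.side.nonempty (hd.mono_left hFA)⟩
    · intro r hr
      rcases hP3 r hr with ⟨hr, hrF⟩ | hr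
      · rcases hP2 r hr with ⟨hr, hrE⟩ | hr
        · rcases hr with hr | hr | hr
          · exact absurd hr hrE
          · exact absurd hr hrF
          · exact Or.inl hr
        · exact Or.inr hr
      · exact Or.inr hr

/-- If each cell on the `X` side can be subdivided into cells satisfying `P`, then so can the matched
family as a whole. -/
lemma State.refine_all {P : Set X → Set X → Prop} {f : X → X'} {L : Set (Quad X X')}
    (hS : State f L) (hG : ∀ q ∈ L, Good P q.A q.J) :
    ∃ (f' : X → X') (L' : Set (Quad X X')), State f' L' ∧ Refines f L f' L' ∧
      ∀ q ∈ L', P q.A q.J := by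
  have key : ∀ T : Set (Quad X X'), T.Finite → ∀ (f : X → X') (L : Set (Quad X X')), State f L →
      T ⊆ L → (∀ q ∈ T, Good P q.A q.J) → (∀ q ∈ L, q ∈ T ∨ P q.A q.J) →
      ∃ (f' : X → X') (L' : Set (Quad X X')), State f' L' ∧ Refines f L f' L' ∧
        ∀ q ∈ L', P q.A q.J := by
    intro T hT
    induction T, hT using Set.Finite.induction_on with
    | empty => exact fun f L hS _ _ h => ⟨f, L, hS, Refines.refl f L, by simpa using h⟩
    | @insert q T hqT _ ih =>
      intro f L hS hTL hG hP
      obtain ⟨f1, L1, hS1, hR1, hsub1, hP1⟩ :=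
        State.refine_one (hG q (mem_insert _ _)) hS (hTL (mem_insert _ _))
      obtain ⟨f2, L2, hS2, hR2, hP2⟩ := ih f1 L1 hS1
        (fun r hr => hsub1 ⟨hTL (Or.inr hr), fun he => hqT ((show r = q from he) ▸ hr)⟩)
        (fun r hr => hG r (Or.inr hr)) (fun r hr => by
          rcases hP1 r hr with ⟨hr, hrq⟩ | hr
          · rcases hP r hr with (rfl | hr) | hr
            · exact absurd rfl hrq
            · exact Or.inl hr
            · exact Or.inr hr
          · exact Or.inr hr)
      exact ⟨f2, L2, hS2, hR1.trans hR2, hP2⟩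
  exact key L hS.fin f L hS subset_rfl hG fun q hq => Or.inl hq

/-- The pair of cells with the roles of the two surfaces exchanged. -/
def Quad.swap {X X' : Type*} (q : Quad X X') : Quad X' X := ⟨q.A', q.J', q.A, q.J⟩

lemma State.skel_swap {f : X → X'} {L : Set (Quad X X')} (h : State f L) :
    SurfDisc.skel (Quad.swap '' L) = f '' SurfDisc.skel L := by
  ext y
  simp only [mem_skel, mem_image]
  constructor
  · rintro ⟨_, ⟨q, hq, rfl⟩, hy⟩
    have hy' : y ∈ f '' q.J := by rw [h.image q hq]; exact hy
    obtain ⟨x, hx, rfl⟩ := hy'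
    exact ⟨x, ⟨q, hq, hx⟩, rfl⟩
  · rintro ⟨x, ⟨q, hq, hx⟩, rfl⟩
    refine ⟨_, ⟨q, hq, rfl⟩, ?_⟩
    show f x ∈ q.J'
    rw [← h.image q hq]
    exact ⟨x, hx, rfl⟩

lemma IsCompact.continuousOn_leftInv {K : Set X} (hK : IsCompact K) {f : X → X'}
    (hf : ContinuousOn f K) {g : X' → X} (hg : ∀ x ∈ K, g (f x) = x) : ContinuousOn g (f '' K) := by
  rw [continuousOn_iff_isClosed]
  intro t ht
  refine ⟨f '' (t ∩ K), ((hK.inter_left ht).image_of_continuousOn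
    (hf.mono inter_subset_right)).isClosed, ?_⟩
  ext y
  constructor
  · rintro ⟨hy, x, hx, rfl⟩
    have : x ∈ t := hg x hx ▸ hy
    exact ⟨⟨x, ⟨this, hx⟩, rfl⟩, x, hx, rfl⟩
  · rintro ⟨⟨x, hx, rfl⟩, -⟩
    exact ⟨by rw [mem_preimage, hg x hx.2]; exact hx.1, x, hx.2, rfl⟩

lemma State.swap [Nonempty X] {f : X → X'} {L : Set (Quad X X')} (h : State f L) :
    State (Function.invFunOn f (SurfDisc.skel L)) (Quad.swap '' L) := by
  have hinv : ∀ x ∈ SurfDisc.skel L, Function.invFunOn f (SurfDisc.skel L) (f x) = x :=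
    fun x hx => h.inj.leftInvOn_invFunOn hx
  have hinv' : ∀ q ∈ L, ∀ x ∈ q.J, Function.invFunOn f (SurfDisc.skel L) (f x) = x :=
    fun q hq x hx => hinv x (mem_skel.2 ⟨q, hq, hx⟩)
  refine ⟨h.fin.image _, ?_, ?_, ?_, ?_, ?_, ?_⟩
  · rintro _ ⟨q, hq, rfl⟩; exact h.cell' q hq
  · rintro _ ⟨q, hq, rfl⟩; exact h.cell q hq
  · rintro _ ⟨q, hq, rfl⟩
    show ContinuousOn _ q.J'
    rw [← h.image q hq]
    exact IsCompact.continuousOn_leftInv (h.cell q hq).jordan.isCompact (h.cont q hq) (hinv' q hq)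
  · rintro _ ⟨q, hq, rfl⟩
    show _ '' q.J' = q.J
    rw [← h.image q hq, image_image]
    exact (image_congr (hinv' q hq)).trans (image_id' _)
  · rw [h.skel_swap]
    rintro _ ⟨x, hx, rfl⟩ _ ⟨y, hy, rfl⟩ hxy
    rw [hinv x hx, hinv y hy] at hxy
    rw [hxy]
  · rintro _ ⟨q, hq, rfl⟩ _ ⟨r, hr, rfl⟩ hqr
    exact (h.disj q hq r hr fun he => hqr (by rw [he])).symm

/-- The refinement on the `X'` side, obtained by exchanging the two surfaces. -/
lemma State.refine_all' {P : Set X' → Set X' → Prop} {f : X → X'} {L : Set (Quad X X')}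
    (hS : State f L) (hG : ∀ q ∈ L, Good P q.A' q.J') :
    ∃ (f' : X → X') (L' : Set (Quad X X')), State f' L' ∧ Refines f L f' L' ∧
      ∀ q ∈ L', P q.A' q.J' := by
  have : Nonempty X := inferInstance
  have : Nonempty X' := inferInstance
  obtain ⟨g, M, hSg, hR, hP⟩ := hS.swap.refine_all (P := P) (by
    rintro _ ⟨q, hq, rfl⟩; exact hG q hq)
  have hinv : ∀ x ∈ SurfDisc.skel L, f x ∈ SurfDisc.skel M ∧ g (f x) = x := by
    intro x hx
    have h1 : f x ∈ SurfDisc.skel (Quad.swap '' L) := by rw [hS.skel_swap]; exact ⟨x, hx, rfl⟩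
    exact ⟨hR.skel h1, (hR.eqOn h1).trans (hS.inj.leftInvOn_invFunOn hx)⟩
  refine ⟨_, _, hSg.swap, ⟨?_, ?_, ?_, ?_, ?_⟩, ?_⟩
  · intro x hx
    obtain ⟨h1, h2⟩ := hinv x hx
    conv_lhs => rw [← h2]
    exact hSg.inj.leftInvOn_invFunOn h1
  · intro x hx
    obtain ⟨h1, h2⟩ := hinv x hx
    rw [hSg.skel_swap]
    exact ⟨f x, h1, h2⟩
  · rintro _ ⟨q, hq, rfl⟩
    obtain ⟨_, ⟨r, hr, rfl⟩, h1, h2⟩ := hR.below q hq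
    exact ⟨r, hr, h2, h1⟩
  · intro q hq x hx
    obtain ⟨r, hr, h1⟩ := hR.cover' _ ⟨q, hq, rfl⟩ x hx
    exact ⟨_, ⟨r, hr, rfl⟩, h1⟩
  · intro q hq x hx
    obtain ⟨r, hr, h1⟩ := hR.cover _ ⟨q, hq, rfl⟩ x hx
    exact ⟨_, ⟨r, hr, rfl⟩, h1⟩
  · rintro _ ⟨q, hq, rfl⟩
    exact hP q hq

end SurfDisc

/-! ### Closed cells are determined by their boundary -/

namespace SurfDisc
set_option linter.unusedSectionVars false

section mesh
variable {X : Type*} [TopologicalSpace X] [Surf X]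

lemma secondCountable_of_isCompact {K : Set X} (hK : IsCompact K) : SecondCountableTopology K := by
  choose φ hφ h0 using fun x : X => Surf.exists_chart x
  obtain ⟨t, ht, htc⟩ := hK.elim_nhds_subcover (fun x => range (φ x))
    (fun x hx => (hφ x).isOpen_range.mem_nhds ⟨0, h0 x⟩)
  have hsc : ∀ i : t, SecondCountableTopology ((Subtype.val : K → X) ⁻¹' range (φ i)) := by
    intro i
    let e := (hφ i).isEmbedding.toHomeomorph
    have hsr : SecondCountableTopology (range (φ i)) := e.symm.isInducing.secondCountableTopology
    have hind : IsInducing (fun x : (Subtype.val : K → X) ⁻¹' range (φ i) =>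
        (⟨x.1.1, x.2⟩ : range (φ i))) := by
      have h1 : IsInducing (fun x : (Subtype.val : K → X) ⁻¹' range (φ i) => x.1.1) :=
        IsInducing.subtypeVal.comp IsInducing.subtypeVal
      exact h1.codRestrict _
    exact hind.secondCountableTopology
  refine TopologicalSpace.secondCountableTopology_of_countable_cover
    (U := fun i : t => (Subtype.val : K → X) ⁻¹' range (φ i))
    (fun i => (hφ i).isOpen_range.preimage continuous_subtype_val) ?_
  rw [eq_univ_iff_forall]
  intro x
  obtain ⟨i, hi, hx⟩ := mem_iUnion₂.1 (htc x.2)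
  exact mem_iUnion.2 ⟨⟨i, hi⟩, hx⟩

/-- Coverings `c n` of a compact set that become fine enough to separate points: two distinct
points are not joined by a chain of two sets subordinate to `c n`, for a suitable `n`. -/
lemma exists_mesh_seq {K : Set X} (hK : IsCompact K) : ∃ c : ℕ → X → Set X,
    (∀ n, ∀ x ∈ K, c n x ∈ 𝓝 x) ∧ ∀ x y, x ≠ y → ∃ n, ∀ B C : Set X, B ⊆ K → C ⊆ K →
      (∃ z ∈ K, B ⊆ c n z) → (∃ z ∈ K, C ⊆ c n z) → ∀ w, x ∈ closure B → w ∈ closure B →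
      w ∈ closure C → y ∉ closure C := by
  have := secondCountable_of_isCompact hK
  have := isCompact_iff_compactSpace.1 hK
  let _ : MetricSpace K := TopologicalSpace.metrizableSpaceMetric K
  refine ⟨fun n x => {y | ∀ (hx : x ∈ K) (hy : y ∈ K),
    dist (⟨y, hy⟩ : K) ⟨x, hx⟩ < 1 / ((n:ℝ) + 1)}, ?_, ?_⟩
  · intro n x hx
    obtain ⟨U, hU, hUb⟩ := isOpen_induced_iff.1
      (Metric.isOpen_ball (x := (⟨x, hx⟩ : K)) (ε := 1 / ((n:ℝ) + 1)))
    have hxU : (⟨x, hx⟩ : K) ∈ (Subtype.val : K → X) ⁻¹' U := by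
      rw [hUb]; exact Metric.mem_ball_self (by positivity)
    refine mem_of_superset (hU.mem_nhds hxU) fun y hy hx' hyK => ?_
    have : (⟨y, hyK⟩ : K) ∈ (Subtype.val : K → X) ⁻¹' U := hy
    rw [hUb] at this
    exact this
  · intro x y hxy
    by_cases hyx : x ∈ K ∧ y ∈ K
    swap
    · refine ⟨0, fun B C hB hC _ _ w hx _ _ hy => hyx ⟨?_, ?_⟩⟩
      · exact closure_minimal hB hK.isClosed hx
      · exact closure_minimal hC hK.isClosed hy
    obtain ⟨hx, hy⟩ := hyx
    have hd : 0 < dist (⟨x, hx⟩ : K) ⟨y, hy⟩ := dist_pos.2 fun h => hxy (congrArg Subtype.val h)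
    obtain ⟨n, hn⟩ := exists_nat_one_div_lt (div_pos hd (by norm_num : (0:ℝ) < 4))
    have key : ∀ B : Set X, B ⊆ K → ∀ z (hz : z ∈ K), (B ⊆ {y | ∀ (hx : z ∈ K) (hy : y ∈ K),
        dist (⟨y, hy⟩ : K) ⟨z, hx⟩ < 1 / ((n:ℝ) + 1)}) → ∀ u (hu : u ∈ K), u ∈ closure B →
        dist (⟨u, hu⟩ : K) ⟨z, hz⟩ ≤ 1 / ((n:ℝ) + 1) := by
      intro B hB z hz hBz u hu huB
      have h1 : closure B ⊆ Subtype.val '' (Metric.closedBall (⟨z, hz⟩ : K) (1 / ((n:ℝ) + 1))) := by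
        refine closure_minimal (fun v hv => ⟨⟨v, hB hv⟩, (hBz hv hz (hB hv)).le, rfl⟩) ?_
        exact (hK.isClosed.isClosedEmbedding_subtypeVal).isClosedMap _ Metric.isClosed_closedBall
      obtain ⟨⟨v, hv⟩, hv1, hv2⟩ := h1 huB
      simp only at hv2
      subst hv2
      exact hv1
    refine ⟨n, fun B C hB hC ⟨z, hz, hBz⟩ ⟨z', hz', hCz⟩ w hxB hwB hwC hyC => ?_⟩
    have hw : w ∈ K := closure_minimal hB hK.isClosed hwB
    have e1 := key B hB z hz hBz x hx hxB
    have e2 := key B hB z hz hBz w hw hwB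
    have e3 := key C hC z' hz' hCz w hw hwC
    have e4 := key C hC z' hz' hCz y hy hyC
    have t1 := dist_triangle_right (⟨x, hx⟩ : K) ⟨w, hw⟩ ⟨z, hz⟩
    have t2 := dist_triangle_right (⟨w, hw⟩ : K) ⟨y, hy⟩ ⟨z', hz'⟩
    have t3 := dist_triangle (⟨x, hx⟩ : K) ⟨w, hw⟩ ⟨y, hy⟩
    linarith
end mesh

variable {X X' : Type*} [TopologicalSpace X] [TopologicalSpace X']
variable [Surf X'] [SimplyConnectedSpace X'] [Surf X] [SimplyConnectedSpace X]

/-- Cells of `X` whose closures meet are matched with cells of `X'` whose closures meet. -/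
lemma State.inter {f : X → X'} {L : Set (Quad X X')} (h : State f L) {q r : Quad X X'}
    (hq : q ∈ L) (hr : r ∈ L) {x : X} (hxq : x ∈ closure q.A) (hxr : x ∈ closure r.A) :
    ∃ w, w ∈ closure q.A' ∧ w ∈ closure r.A' ∧ (x ∈ skel L ∨ q = r) := by
  by_cases hqr : q = r
  · subst hqr
    obtain ⟨w, hw⟩ := (h.cell' q hq).side.nonempty
    exact ⟨w, subset_closure hw, subset_closure hw, Or.inr rfl⟩
  have hd := (h.disj q hq r hr hqr).1
  have h1 : x ∈ q.J := by
    rw [(h.cell q hq).closure_eq] at hxq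
    refine hxq.resolve_left fun hx => ?_
    obtain ⟨y, hy1, hy2⟩ := mem_closure_iff.1 hxr _ (h.cell q hq).side.isOpen hx
    exact Set.disjoint_left.1 hd hy1 hy2
  have h2 : x ∈ r.J := by
    rw [(h.cell r hr).closure_eq] at hxr
    refine hxr.resolve_left fun hx => ?_
    exact (h.cell r hr).not_mem_of_disjoint (h.cell q hq) hd.symm hx h1
  refine ⟨f x, ?_, ?_, Or.inl (mem_skel.2 ⟨q, hq, h1⟩)⟩
  · rw [(h.cell' q hq).closure_eq, ← h.image q hq]
    exact Or.inr ⟨x, h1, rfl⟩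
  · rw [(h.cell' r hr).closure_eq, ← h.image r hr]
    exact Or.inr ⟨x, h2, rfl⟩

/-- The point is carried along nested families: the partner cells of the cells through `x` have a
common point. -/
lemma exists_limit {f : ℕ → X → X'} {L : ℕ → Set (Quad X X')} (hS : ∀ n, State (f n) (L n))
    (hR : ∀ n, Refines (f n) (L n) (f (n + 1)) (L (n + 1))) {x : X}
    (hx : ∃ q ∈ L 0, x ∈ closure q.A) :
    ∃ y, ∀ n, ∃ q ∈ L n, x ∈ closure q.A ∧ y ∈ closure q.A' := by
  have hcov : ∀ n, ∃ q ∈ L n, x ∈ closure q.A := by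
    intro n
    induction n with
    | zero => exact hx
    | succ n ih => obtain ⟨q, hq, hxq⟩ := ih; exact (hR n).cover q hq x hxq
  let V : ℕ → Set X' := fun n => ⋃ q ∈ {q ∈ L n | x ∈ closure q.A}, closure q.A'
  have hfin : ∀ n, {q ∈ L n | x ∈ closure q.A}.Finite := fun n => (hS n).fin.subset (sep_subset _ _)
  have hVc : ∀ n, IsCompact (V n) := fun n =>
    (hfin n).isCompact_biUnion fun q hq => ((hS n).cell' q hq.1).compact
  have hne : (⋂ n, V n).Nonempty := by
    refine IsCompact.nonempty_iInter_of_sequence_nonempty_isCompact_isClosed V ?_ ?_ (hVc 0)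
      (fun n => (hVc n).isClosed)
    · intro n y hy
      simp only [V, mem_iUnion, exists_prop] at hy ⊢
      obtain ⟨q, ⟨hq, hxq⟩, hyq⟩ := hy
      obtain ⟨r, hr, hr1, hr2⟩ := (hR n).below q hq
      exact ⟨r, ⟨hr, closure_mono hr1 hxq⟩, closure_mono hr2 hyq⟩
    · intro n
      obtain ⟨q, hq, hxq⟩ := hcov n
      obtain ⟨w, hw⟩ := ((hS n).cell' q hq).side.nonempty
      exact ⟨w, mem_biUnion (show q ∈ {q ∈ L n | x ∈ closure q.A} from ⟨hq, hxq⟩)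
        (subset_closure hw)⟩
  obtain ⟨y, hy⟩ := hne
  refine ⟨y, fun n => ?_⟩
  have := mem_iInter.1 hy n
  simp only [V, mem_iUnion, exists_prop] at this
  obtain ⟨q, ⟨hq, hxq⟩, hyq⟩ := this
  exact ⟨q, hq, hxq, hyq⟩

/-- The Schoenflies theorem for cells: a homeomorphism between the boundary curves of two cells
extends to a homeomorphism of the closed cells. -/
theorem schoenflies {A J : Set X} {A' J' : Set X'} (hA : IsCell A J) (hA' : IsCell A' J')
    {f : X → X'} (hf : ContinuousOn f J) (hfi : InjOn f J) (hfJ : f '' J = J') :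
    ∃ h : closure A ≃ₜ closure A', ∀ x : closure A, x.1 ∈ J → (h x).1 = f x.1 := by
  obtain ⟨c, hc, hcs⟩ := exists_mesh_seq hA.compact
  obtain ⟨c', hc', hcs'⟩ := exists_mesh_seq hA'.compact
  let q₀ : Quad X X' := ⟨A, J, A', J'⟩
  let P : ℕ → (X → X') × Set (Quad X X') → Prop := fun n s =>
    State s.1 s.2 ∧ Refines f {q₀} s.1 s.2
  let R : ℕ → (X → X') × Set (Quad X X') → (X → X') × Set (Quad X X') → Prop := fun n s t =>
    Refines s.1 s.2 t.1 t.2 ∧ (∀ q ∈ t.2, ∃ z ∈ closure A, q.A ⊆ c n z) ∧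
      ∀ q ∈ t.2, ∃ z ∈ closure A', q.A' ⊆ c' n z
  have hP0 : P 0 (f, {q₀}) := by
    refine ⟨⟨finite_singleton _, ?_, ?_, ?_, ?_, ?_, ?_⟩, Refines.refl _ _⟩
    · rintro q rfl; exact hA
    · rintro q rfl; exact hA'
    · rintro q rfl; exact hf
    · rintro q rfl; exact hfJ
    · intro x hx y hy
      obtain ⟨_, rfl, hx⟩ := mem_skel.1 hx
      obtain ⟨_, rfl, hy⟩ := mem_skel.1 hy
      exact hfi hx hy
    · rintro q rfl r rfl hqr
      exact absurd rfl hqr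
  have hstep : ∀ n s, P n s → ∃ t, P (n + 1) t ∧ R n s t := by
    rintro n ⟨g, L⟩ ⟨hS, hR⟩
    have hsub : ∀ q ∈ L, q.A ⊆ A ∧ q.A' ⊆ A' := fun q hq => by
      obtain ⟨_, rfl, h⟩ := hR.below q hq; exact h
    obtain ⟨g1, L1, hS1, hR1, hm1⟩ := hS.refine_all
      (P := fun B _ => ∃ z ∈ closure A, B ⊆ c n z) fun q hq =>
      ((hS.cell q hq).good (c := c n)
        fun x hx => hc n x (closure_mono (hsub q hq).1 hx)).bind fun B K hB _ ⟨z, hz, hBz⟩ =>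
          Good.base hB ⟨z, closure_mono (hsub q hq).1 hz, hBz⟩
    have hsub1 : ∀ q ∈ L1, q.A ⊆ A ∧ q.A' ⊆ A' := fun q hq => by
      obtain ⟨r, hr, h1, h2⟩ := hR1.below q hq
      exact ⟨h1.trans (hsub r hr).1, h2.trans (hsub r hr).2⟩
    obtain ⟨g2, L2, hS2, hR2, hm2⟩ := hS1.refine_all'
      (P := fun B _ => ∃ z ∈ closure A', B ⊆ c' n z) fun q hq =>
      ((hS1.cell' q hq).good (c := c' n)
        fun x hx => hc' n x (closure_mono (hsub1 q hq).2 hx)).bind fun B K hB _ ⟨z, hz, hBz⟩ =>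
          Good.base hB ⟨z, closure_mono (hsub1 q hq).2 hz, hBz⟩
    refine ⟨(g2, L2), ⟨hS2, (hR.trans hR1).trans hR2⟩, hR1.trans hR2, ?_, hm2⟩
    intro q hq
    obtain ⟨r, hr, h1, -⟩ := hR2.below q hq
    obtain ⟨z, hz, hrz⟩ := hm1 r hr
    exact ⟨z, hz, h1.trans hrz⟩
  obtain ⟨s, hs0, hsP, hsR⟩ := exists_seq_of_step P R hP0 hstep
  have hS : ∀ n, State (s n).1 (s n).2 := fun n => (hsP n).1
  have hR : ∀ n, Refines (s n).1 (s n).2 (s (n + 1)).1 (s (n + 1)).2 := fun n => (hsR n).1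
  have hsub : ∀ n, ∀ q ∈ (s n).2, q.A ⊆ A ∧ q.A' ⊆ A' := fun n q hq => by
    obtain ⟨_, rfl, h⟩ := (hsP n).2.below q hq; exact h
  -- the limiting relation
  let G : Set (X × X') := {p | ∀ n, ∃ q ∈ (s n).2, p.1 ∈ closure q.A ∧ p.2 ∈ closure q.A'}
  have hGc : IsClosed G := by
    have : G = ⋂ n, ⋃ q ∈ (s n).2, closure q.A ×ˢ closure q.A' := by
      ext p
      simp only [G, mem_ofPred_eq, mem_iInter, mem_iUnion, mem_prod, exists_prop]
    rw [this]
    exact isClosed_iInter fun n => (hS n).fin.isClosed_biUnion fun q hq =>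
      isClosed_closure.prod isClosed_closure
  have hGs : G ⊆ closure A ×ˢ closure A' := fun p hp => by
    obtain ⟨q, hq, h1, h2⟩ := hp 0
    exact ⟨closure_mono (hsub 0 q hq).1 h1, closure_mono (hsub 0 q hq).2 h2⟩
  have hGK : IsCompact G := (hA.compact.prod hA'.compact).of_isClosed_subset hGc hGs
  have hGtot : ∀ x ∈ closure A, ∃ y, (x, y) ∈ G := fun x hx =>
    exists_limit hS hR ⟨q₀, by rw [hs0]; rfl, hx⟩
  -- the exchanged families
  have hne : Nonempty X := inferInstance
  have hinv : ∀ n, ∀ x ∈ skel (s n).2, (s n).1 x ∈ skel (Quad.swap '' (s n).2) := fun n x hx => by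
    rw [(hS n).skel_swap]; exact ⟨x, hx, rfl⟩
  have hR' : ∀ n, Refines (Function.invFunOn (s n).1 (skel (s n).2)) (Quad.swap '' (s n).2)
      (Function.invFunOn (s (n+1)).1 (skel (s (n+1)).2)) (Quad.swap '' (s (n+1)).2) := by
    intro n
    refine ⟨?_, ?_, ?_, ?_, ?_⟩
    · rw [(hS n).skel_swap]
      rintro _ ⟨x, hx, rfl⟩
      rw [(hS n).inj.leftInvOn_invFunOn hx, ← (hR n).eqOn hx]
      exact (hS (n+1)).inj.leftInvOn_invFunOn ((hR n).skel hx)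
    · rw [(hS n).skel_swap, (hS (n+1)).skel_swap]
      rintro _ ⟨x, hx, rfl⟩
      exact ⟨x, (hR n).skel hx, (hR n).eqOn hx⟩
    · rintro _ ⟨q, hq, rfl⟩
      obtain ⟨r, hr, h1, h2⟩ := (hR n).below q hq
      exact ⟨_, ⟨r, hr, rfl⟩, h2, h1⟩
    · rintro _ ⟨q, hq, rfl⟩ x hx
      obtain ⟨r, hr, h1⟩ := (hR n).cover' q hq x hx
      exact ⟨_, ⟨r, hr, rfl⟩, h1⟩
    · rintro _ ⟨q, hq, rfl⟩ x hx
      obtain ⟨r, hr, h1⟩ := (hR n).cover q hq x hx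
      exact ⟨_, ⟨r, hr, rfl⟩, h1⟩
  have hGtot' : ∀ y ∈ closure A', ∃ x, (x, y) ∈ G := by
    intro y hy
    obtain ⟨x, hx⟩ := exists_limit (fun n => (hS n).swap) hR' (x := y)
      ⟨q₀.swap, ⟨q₀, by rw [hs0]; rfl, rfl⟩, hy⟩
    refine ⟨x, fun n => ?_⟩
    obtain ⟨_, ⟨q, hq, rfl⟩, h1, h2⟩ := hx n
    exact ⟨q, hq, h2, h1⟩
  have huni : ∀ x y₁ y₂, (x, y₁) ∈ G → (x, y₂) ∈ G → y₁ = y₂ := by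
    intro x y₁ y₂ h1 h2
    by_contra hne
    obtain ⟨n, hn⟩ := hcs' y₁ y₂ hne
    obtain ⟨q, hq, hq1, hq2⟩ := h1 (n + 1)
    obtain ⟨r, hr, hr1, hr2⟩ := h2 (n + 1)
    obtain ⟨w, hw1, hw2, -⟩ := (hS (n+1)).inter hq hr hq1 hr1
    exact hn q.A' r.A' ((hsub _ q hq).2.trans subset_closure) ((hsub _ r hr).2.trans subset_closure)
      ((hsR n).2.2 q hq) ((hsR n).2.2 r hr) w hq2 hw1 hw2 hr2
  have huni' : ∀ y x₁ x₂, (x₁, y) ∈ G → (x₂, y) ∈ G → x₁ = x₂ := by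
    intro y x₁ x₂ h1 h2
    by_contra hne
    obtain ⟨n, hn⟩ := hcs x₁ x₂ hne
    obtain ⟨q, hq, hq1, hq2⟩ := h1 (n + 1)
    obtain ⟨r, hr, hr1, hr2⟩ := h2 (n + 1)
    obtain ⟨w, hw1, hw2, -⟩ := (hS (n+1)).swap.inter (q := q.swap) (r := r.swap)
      ⟨q, hq, rfl⟩ ⟨r, hr, rfl⟩ hq2 hr2
    exact hn q.A r.A ((hsub _ q hq).1.trans subset_closure) ((hsub _ r hr).1.trans subset_closure)
      ((hsR n).2.1 q hq) ((hsR n).2.1 r hr) w hq1 hw1 hw2 hr1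
  have := isCompact_iff_compactSpace.1 hGK
  let p₁ : G → closure A := fun p => ⟨p.1.1, (hGs p.2).1⟩
  let p₂ : G → closure A' := fun p => ⟨p.1.2, (hGs p.2).2⟩
  have hp₁ : Continuous p₁ := by fun_prop
  have hp₂ : Continuous p₂ := by fun_prop
  have hb₁ : Function.Bijective p₁ := by
    refine ⟨?_, fun x => ?_⟩
    · rintro ⟨⟨x, y⟩, h⟩ ⟨⟨x', y'⟩, h'⟩ he
      have he' : x = x' := congrArg Subtype.val he
      subst he'
      have := huni x y y' h h'
      subst this
      rfl
    · obtain ⟨y, hy⟩ := hGtot x x.2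
      exact ⟨⟨_, hy⟩, rfl⟩
  have hb₂ : Function.Bijective p₂ := by
    refine ⟨?_, fun y => ?_⟩
    · rintro ⟨⟨x, y⟩, h⟩ ⟨⟨x', y'⟩, h'⟩ he
      have he' : y = y' := congrArg Subtype.val he
      subst he'
      have := huni' y x x' h h'
      subst this
      rfl
    · obtain ⟨x, hx⟩ := hGtot' y y.2
      exact ⟨⟨_, hx⟩, rfl⟩
  let e₁ : G ≃ₜ closure A :=
    Continuous.homeoOfEquivCompactToT2 (f := Equiv.ofBijective p₁ hb₁) hp₁
  let e₂ : G ≃ₜ closure A' :=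
    Continuous.homeoOfEquivCompactToT2 (f := Equiv.ofBijective p₂ hb₂) hp₂
  refine ⟨e₁.symm.trans e₂, fun x hx => ?_⟩
  have hfx : ((x : X), f x) ∈ G := by
    intro n
    have h1 : (x : X) ∈ skel {q₀} := mem_skel.2 ⟨q₀, rfl, hx⟩
    obtain ⟨q, hq, hxq⟩ := mem_skel.1 ((hsP n).2.skel h1)
    refine ⟨q, hq, ?_, ?_⟩
    · rw [((hS n).cell q hq).closure_eq]; exact Or.inr hxq
    · rw [((hS n).cell' q hq).closure_eq, ← (hS n).image q hq]
      exact Or.inr ⟨x, hxq, (hsP n).2.eqOn h1⟩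
  have : e₁.symm x = ⟨_, hfx⟩ := by
    rw [Homeomorph.symm_apply_eq]
    rfl
  show (e₂ (e₁.symm x)).1 = _
  rw [this]
  rfl

end SurfDisc

/-! ### Closed cells are discs -/

namespace SurfDisc
set_option linter.unusedSectionVars false

instance : Surf ℂ where
  exists_chart x := ⟨fun z => z + x, (Homeomorph.addRight x).isOpenEmbedding, by simp⟩

lemma isCell_ball : IsCell (Metric.ball (0:ℂ) 1) (Metric.sphere (0:ℂ) 1) := by
  have h1 := IsOpenEmbedding.isJordan_circle (IsOpenEmbedding.id (X := ℂ)) 0 (r := 1) one_pos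
  have h2 := IsOpenEmbedding.isSide_ball (IsOpenEmbedding.id (X := ℂ)) 0 (r := 1) one_pos
  simp only [image_id] at h1 h2
  refine ⟨h1, h2, ?_⟩
  rw [closure_ball _ one_ne_zero]
  exact isCompact_closedBall _ _

/-- Any two Jordan curves are homeomorphic. -/
lemma IsJordan.exists_map {X X' : Type*} [TopologicalSpace X] [TopologicalSpace X'] [T2Space X]
    {J : Set X} {J' : Set X'} (h : IsJordan J) (h' : IsJordan J') :
    ∃ f : X → X', ContinuousOn f J ∧ InjOn f J ∧ f '' J = J' := by
  obtain ⟨γ, hc, hi, rfl⟩ := h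
  obtain ⟨γ', hc', hi', rfl⟩ := h'
  have hinv : ∀ t, ∃ s, γ s = γ t ∧ Function.invFun γ (γ t) = s := fun t =>
    ⟨_, Function.invFun_eq ⟨t, rfl⟩, rfl⟩
  let f : X → X' := fun x => γ' (Function.invFun γ x)
  have hf : ∀ t, f (γ t) = γ' t := by
    intro t
    obtain ⟨s, hs, hs'⟩ := hinv t
    simp only [f, hs']
    exact (hi' s t).2 ((hi s t).1 hs)
  refine ⟨f, ?_, ?_, ?_⟩
  · rw [continuousOn_iff_isClosed]
    intro t ht
    refine ⟨γ '' (γ' ⁻¹' t ∩ Icc 0 1),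
      ((isCompact_Icc.inter_left (ht.preimage hc')).image hc).isClosed, ?_⟩
    ext x
    constructor
    · rintro ⟨hx, s, rfl⟩
      refine ⟨⟨Int.fract s, ⟨?_, Int.fract_nonneg s, (Int.fract_lt_one s).le⟩, ?_⟩, s, rfl⟩
      · have : γ' (Int.fract s) = γ' s := (hi' _ _).2 ⟨⌊s⌋, (Int.fract_add_floor s).symm⟩
        rw [mem_preimage, this, ← hf]
        exact hx
      · exact (hi _ _).2 ⟨⌊s⌋, (Int.fract_add_floor s).symm⟩
    · rintro ⟨⟨s, hs, rfl⟩, -⟩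
      exact ⟨by rw [mem_preimage, hf]; exact hs.1, s, rfl⟩
  · rintro _ ⟨s, rfl⟩ _ ⟨t, rfl⟩ he
    rw [hf, hf] at he
    exact (hi s t).2 ((hi' s t).1 he)
  · ext y
    constructor
    · rintro ⟨_, ⟨s, rfl⟩, rfl⟩; exact ⟨s, (hf s).symm⟩
    · rintro ⟨s, rfl⟩; exact ⟨_, ⟨s, rfl⟩, hf s⟩

/-- A closed cell is a closed disc. -/
theorem IsCell.exists_disc {X : Type*} [TopologicalSpace X] [Surf X] [SimplyConnectedSpace X]
    {A J : Set X} (hA : IsCell A J) : ∃ h : Metric.closedBall (0:ℂ) 1 → X, IsEmbedding h ∧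
      range h = closure A ∧ h '' {z | z.1 ∈ Metric.sphere (0:ℂ) 1} = J := by
  obtain ⟨f, hf, hfi, hfJ⟩ := isCell_ball.jordan.exists_map hA.jordan
  obtain ⟨h, hh⟩ := schoenflies isCell_ball hA hf hfi hfJ
  have hcl : closure (Metric.ball (0:ℂ) 1) = Metric.closedBall 0 1 := closure_ball _ one_ne_zero
  let e : Metric.closedBall (0:ℂ) 1 ≃ₜ closure (Metric.ball (0:ℂ) 1) := Homeomorph.setCongr hcl.symm
  refine ⟨fun z => (h (e z)).1,
    IsEmbedding.subtypeVal.comp (h.isEmbedding.comp e.isEmbedding), ?_, ?_⟩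
  · ext x
    constructor
    · rintro ⟨z, rfl⟩; exact (h (e z)).2
    · intro hx
      refine ⟨e.symm (h.symm ⟨x, hx⟩), ?_⟩
      simp
  · rw [← hfJ]
    ext x
    constructor
    · rintro ⟨z, hz, rfl⟩
      exact ⟨z.1, hz, (hh (e z) hz).symm⟩
    · rintro ⟨z, hz, rfl⟩
      have hz' : z ∈ Metric.closedBall (0:ℂ) 1 := Metric.sphere_subset_closedBall hz
      exact ⟨⟨z, hz'⟩, hz, hh (e ⟨z, hz'⟩) hz⟩

end SurfDisc

/-! ### The universal cover -/

namespace SurfDisc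
set_option linter.unusedSectionVars false
universe u

section cover
variable {S : Type u} [TopologicalSpace S]

/-- The fundamental group at `x`, as a discrete space. -/
def Fib (x : S) : Type u := Path.Homotopic.Quotient x x

instance (x : S) : TopologicalSpace (Fib x) := ⊥
instance (x : S) : DiscreteTopology (Fib x) := ⟨rfl⟩

lemma symm_cancel {x y z : S} (a : Path.Homotopic.Quotient x y) (b : Path.Homotopic.Quotient y z) :
    a.symm.trans (a.trans b) = b := by
  rw [← Path.Homotopic.Quotient.trans_assoc, Path.Homotopic.Quotient.symm_trans,
    Path.Homotopic.Quotient.refl_trans]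

lemma cancel_symm {x y z : S} (a : Path.Homotopic.Quotient y x) (b : Path.Homotopic.Quotient y z) :
    a.trans (a.symm.trans b) = b := by
  rw [← Path.Homotopic.Quotient.trans_assoc, Path.Homotopic.Quotient.trans_symm,
    Path.Homotopic.Quotient.refl_trans]

lemma class_cancel_left {x y z : S} {a : Path.Homotopic.Quotient x y}
    {b c : Path.Homotopic.Quotient y z} (h : a.trans b = a.trans c) : b = c := by
  rw [← symm_cancel a b, h, symm_cancel]

lemma trans_trans_symm {x y z : S} (v : Path.Homotopic.Quotient x y)
    (a : Path.Homotopic.Quotient y z) : v.trans (a.trans a.symm) = v := by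
  rw [Path.Homotopic.Quotient.trans_symm, Path.Homotopic.Quotient.trans_refl]

lemma class_cancel_right {x y z : S} {v v' : Path.Homotopic.Quotient x y}
    {a : Path.Homotopic.Quotient y z} (h : v.trans a = v'.trans a) : v = v' := by
  rw [← trans_trans_symm v a, ← Path.Homotopic.Quotient.trans_assoc, h,
    Path.Homotopic.Quotient.trans_assoc, trans_trans_symm]

lemma class_comp {x y z : S} (v : Path.Homotopic.Quotient x y)
    (a b c : Path.Homotopic.Quotient y z) :
    (v.trans (a.trans b.symm)).trans (b.trans c.symm) = v.trans (a.trans c.symm) := by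
  simp only [Path.Homotopic.Quotient.trans_assoc, symm_cancel]

lemma class_cast {x y z z' : S} (h : z' = z) (hy : y = y) (hx : x = x)
    (a : Path.Homotopic.Quotient x y) (b : Path.Homotopic.Quotient x z) :
    a.trans ((a.symm.trans b).cast hy h) = b.cast hx h := by
  subst h
  rw [Path.Homotopic.Quotient.cast_rfl_rfl, Path.Homotopic.Quotient.cast_rfl_rfl, cancel_symm]

/-- Two paths in a simply connected subset are homotopic in the ambient space. -/
lemma mk_eq_of_subset {U : Set S} (hU : IsSimplyConnected U) {x y : S} (γ γ' : Path x y)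
    (h : ∀ t, γ t ∈ U) (h' : ∀ t, γ' t ∈ U) :
    Path.Homotopic.Quotient.mk γ = Path.Homotopic.Quotient.mk γ' := by
  have := hU.simplyConnectedSpace
  have hx : x ∈ U := by simpa using h 0
  have hy : y ∈ U := by simpa using h 1
  let δ : Path (⟨x, hx⟩ : U) ⟨y, hy⟩ :=
    { toFun := fun t => ⟨γ t, h t⟩
      continuous_toFun := by fun_prop
      source' := by simp
      target' := by simp }
  let δ' : Path (⟨x, hx⟩ : U) ⟨y, hy⟩ :=
    { toFun := fun t => ⟨γ' t, h' t⟩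
      continuous_toFun := by fun_prop
      source' := by simp
      target' := by simp }
  have := (SimplyConnectedSpace.paths_homotopic δ δ').map ⟨Subtype.val, continuous_subtype_val⟩
  exact Path.Homotopic.Quotient.eq.2 this

/-- On a simply connected set `U` one can choose classes of paths from a base point that vary
continuously. -/
lemma exists_classes [PathConnectedSpace S] (x₀ : S) {U : Set S} (hU : IsSimplyConnected U) :
    ∃ e : ∀ y : S, Path.Homotopic.Quotient x₀ y, ∀ y z (γ : Path y z), (∀ t, γ t ∈ U) →
      e z = (e y).trans (Path.Homotopic.Quotient.mk γ) := by
  classical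
  obtain ⟨i, hi⟩ := hU.nonempty
  have hpc := hU.isPathConnected
  have hj : ∀ y ∈ U, JoinedIn U i y := fun y hy => hpc.joinedIn i hi y hy
  let P : Path x₀ i := PathConnectedSpace.somePath x₀ i
  let w : ∀ y, Path i y := fun y =>
    if h : y ∈ U then (hj y h).somePath else PathConnectedSpace.somePath i y
  have hw : ∀ y ∈ U, ∀ t, w y t ∈ U := by
    intro y hy t
    simp only [w, dif_pos hy]
    exact (hj y hy).somePath_mem t
  refine ⟨fun y => (Path.Homotopic.Quotient.mk P).trans (Path.Homotopic.Quotient.mk (w y)),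
    fun y z γ hγ => ?_⟩
  have hy : y ∈ U := by simpa using hγ 0
  have hz : z ∈ U := by simpa using hγ 1
  rw [Path.Homotopic.Quotient.trans_assoc, ← Path.Homotopic.Quotient.mk_trans (w y) γ]
  refine congrArg _ (mk_eq_of_subset hU _ _ (hw z hz) fun t => ?_)
  have : range ((w y).trans γ) ⊆ U := by
    rw [Path.trans_range]
    exact union_subset (range_subset_iff.2 (hw y hy)) (range_subset_iff.2 hγ)
  exact this ⟨t, rfl⟩

/-- The universal cover. A point over `y` is recorded by the class of a path from the base point to
`y`; over the simply connected open set `U i` such classes are compared with the classes `e i`. -/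
theorem exists_universal_cover [PathConnectedSpace S] [LocallyPathConnectedSpace S]
    (hloc : ∀ x : S, ∃ U : Set S, IsOpen U ∧ x ∈ U ∧ IsSimplyConnected U) :
    ∃ (E : Type u) (_ : TopologicalSpace E) (p : E → S),
      IsCoveringMap p ∧ SimplyConnectedSpace E ∧ Function.Surjective p := by
  choose U hUo hxU hU using hloc
  obtain ⟨x₀⟩ : Nonempty S := inferInstance
  choose e he using fun i => exists_classes x₀ (hU i)
  have hloc : ∀ i j y, y ∈ U i ∩ U j → ∀ᶠ z in 𝓝 y,
      (e i z).trans (e j z).symm = (e i y).trans (e j y).symm := by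
    intro i j y hy
    filter_upwards [pathComponentIn_mem_nhds (((hUo i).inter (hUo j)).mem_nhds hy)] with z hz
    have hz' : JoinedIn (U i ∩ U j) y z := hz
    have h1 := he i y z hz'.somePath fun t => (hz'.somePath_mem t).1
    have h2 := he j y z hz'.somePath fun t => (hz'.somePath_mem t).2
    have h3 : e j y = (e j z).trans (Path.Homotopic.Quotient.mk hz'.somePath).symm := by
      rw [h2, Path.Homotopic.Quotient.trans_assoc, Path.Homotopic.Quotient.trans_symm,
        Path.Homotopic.Quotient.trans_refl]
    have h4 : (e j y).symm = (Path.Homotopic.Quotient.mk hz'.somePath).trans (e j z).symm := by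
      apply class_cancel_left (a := e j y)
      rw [Path.Homotopic.Quotient.trans_symm, ← Path.Homotopic.Quotient.trans_assoc, ← h2,
        Path.Homotopic.Quotient.trans_symm]
    rw [h1, h4, Path.Homotopic.Quotient.trans_assoc]
  let Z : FiberBundleCore S S (Fib x₀) :=
    { baseSet := U
      isOpen_baseSet := hUo
      indexAt := id
      mem_baseSet_at := hxU
      coordChange := fun i j y (v : Path.Homotopic.Quotient x₀ x₀) =>
        v.trans ((e i y).trans (e j y).symm)
      coordChange_self := by
        intro i y hy v
        exact trans_trans_symm (v : Path.Homotopic.Quotient x₀ x₀) _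
      continuousOn_coordChange := by
        intro i j
        rintro ⟨y, v⟩ hy
        apply ContinuousAt.continuousWithinAt
        refine (continuousAt_const (y := (show Fib x₀ from Path.Homotopic.Quotient.trans
          (v : Path.Homotopic.Quotient x₀ x₀) ((e i y).trans (e j y).symm)))).congr ?_
        have hv : ({v} : Set (Fib x₀)) ∈ 𝓝 v := (isOpen_discrete _).mem_nhds rfl
        filter_upwards [prod_mem_nhds (hloc i j y hy.1) hv]
        rintro ⟨z, w⟩ ⟨hz, rfl⟩
        have hz' : (e i z).trans (e j z).symm = (e i y).trans (e j y).symm := hz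
        exact congrArg (Path.Homotopic.Quotient.trans (w : Path.Homotopic.Quotient x₀ x₀)) hz'.symm
      coordChange_comp := by
        intro i j l y hy v
        exact class_comp (v : Path.Homotopic.Quotient x₀ x₀) _ _ _ }
  have hcov : IsCoveringMap Z.proj :=
    IsFiberBundle.isCoveringMap fun x => ⟨Z.localTriv x, hxU x⟩
  -- the class of paths from the base point recorded by a point of the cover
  let cls : ∀ z : Z.TotalSpace, Path.Homotopic.Quotient x₀ (Z.proj z) := fun z =>
    Path.Homotopic.Quotient.trans (z.2 : Path.Homotopic.Quotient x₀ x₀) (e z.1 z.1)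
  have hcls : ∀ z z' : Z.TotalSpace, ∀ h : Z.proj z = Z.proj z',
      cls z = (cls z').cast rfl h → z = z' := by
    rintro ⟨y, v⟩ ⟨y', v'⟩ h hz
    obtain rfl : y = y' := h
    rw [Path.Homotopic.Quotient.cast_rfl_rfl] at hz
    have hz' : Path.Homotopic.Quotient.trans (v : Path.Homotopic.Quotient x₀ x₀) (e y y) =
      Path.Homotopic.Quotient.trans (v' : Path.Homotopic.Quotient x₀ x₀) (e y y) := hz
    have h3 : v = v' := class_cancel_right hz'
    rw [h3]
  have htriv : ∀ i (z : Z.TotalSpace), (Z.localTriv i z).2 = (cls z).trans (e i (Z.proj z)).symm := by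
    intro i z
    have : (Z.localTriv i z).2 = Path.Homotopic.Quotient.trans
      (z.2 : Path.Homotopic.Quotient x₀ x₀) ((e z.1 z.1).trans (e i z.1).symm) := rfl
    exact this.trans (Path.Homotopic.Quotient.trans_assoc
      (z.2 : Path.Homotopic.Quotient x₀ x₀) (e z.1 z.1) (e i z.1).symm).symm
  have hpath : ∀ (a b : Z.TotalSpace) (Γ : Path a b),
      cls b = (cls a).trans (Path.Homotopic.Quotient.mk (Γ.map hcov.continuous)) := by
    rintro a b ⟨Γ, h0, h1⟩
    subst h0
    subst h1
    let γ : Path (Z.proj (Γ 0)) (Z.proj (Γ 1)) := ⟨⟨Z.proj ∘ Γ, hcov.continuous.comp Γ.continuous⟩,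
      rfl, rfl⟩
    have hstep : ∀ t₀, ∀ᶠ t in 𝓝 t₀, cls (Γ t) =
        (cls (Γ t₀)).trans (Path.Homotopic.Quotient.mk (γ.subpath t₀ t)) := by
      intro t₀
      have hsrc : Γ t₀ ∈ (Z.localTriv (Z.proj (Γ t₀))).source := by
        rw [Z.mem_localTriv_source]
        exact hxU (Z.proj (Γ t₀))
      have hc : ContinuousAt (fun t => (Z.localTriv (Z.proj (Γ t₀)) (Γ t)).2) t₀ :=
        continuous_snd.continuousAt.comp
          (((Z.localTriv (Z.proj (Γ t₀))).continuousOn.continuousAt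
            ((Z.localTriv (Z.proj (Γ t₀))).open_source.mem_nhds hsrc)).comp Γ.continuous.continuousAt)
      rw [ContinuousAt, nhds_discrete (Fib x₀), tendsto_pure] at hc
      have hin : ∀ᶠ t in 𝓝 t₀, ∀ s ∈ (univ : Set unitInterval),
          γ.subpath t₀ t s ∈ U (Z.proj (Γ t₀)) := by
        refine isCompact_univ.eventually_forall_of_forall_eventually fun s _ => ?_
        have hco : Continuous (fun p : unitInterval × unitInterval => γ.subpath t₀ p.1 p.2) := by
          simp only [Path.subpath]
          refine γ.continuous.comp ?_
          fun_prop
        refine hco.continuousAt.eventually_mem ((hUo _).mem_nhds ?_)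
        have : γ.subpath t₀ t₀ s = Z.proj (Γ t₀) := by rw [Path.subpath_self]; rfl
        show γ.subpath t₀ t₀ s ∈ _
        rw [this]
        exact hxU _
      filter_upwards [hc, hin] with t ht hts
      rw [htriv, htriv] at ht
      have h1 := he (Z.proj (Γ t₀)) _ _ (γ.subpath t₀ t) fun s => hts s (mem_univ s)
      have h2 := congrArg (fun a => Path.Homotopic.Quotient.trans a (e (Z.proj (Γ t₀)) (Z.proj (Γ t)))) ht
      simp only [Path.Homotopic.Quotient.trans_assoc, Path.Homotopic.Quotient.symm_trans,
        Path.Homotopic.Quotient.trans_refl] at h2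
      rw [h2]
      congr 1
      have h3 : e (Z.proj (Γ t₀)) (Z.proj (Γ t)) = (e (Z.proj (Γ t₀)) (Z.proj (Γ t₀))).trans
        (Path.Homotopic.Quotient.mk (γ.subpath t₀ t)) := h1
      rw [h3, symm_cancel]
    let T : Set unitInterval := {t | cls (Γ t) =
      (cls (Γ 0)).trans (Path.Homotopic.Quotient.mk (γ.subpath 0 t))}
    have hiff : ∀ t₀, ∀ᶠ t in 𝓝 t₀, (t ∈ T ↔ t₀ ∈ T) := by
      intro t₀
      filter_upwards [hstep t₀] with t ht
      have h4 : Path.Homotopic.Quotient.mk (γ.subpath 0 t) =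
          (Path.Homotopic.Quotient.mk (γ.subpath 0 t₀)).trans
            (Path.Homotopic.Quotient.mk (γ.subpath t₀ t)) := by
        rw [← Path.Homotopic.Quotient.mk_trans]
        exact (Path.Homotopic.Quotient.eq.2 ⟨Path.Homotopy.subpathTransSubpath γ 0 t₀ t⟩).symm
      show cls (Γ t) = _ ↔ cls (Γ t₀) = _
      rw [ht, h4, ← Path.Homotopic.Quotient.trans_assoc]
      constructor
      · intro h
        have h2 := congrArg (fun a => Path.Homotopic.Quotient.trans a
          (Path.Homotopic.Quotient.mk (γ.subpath t₀ t)).symm) h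
        simpa only [Path.Homotopic.Quotient.trans_assoc, Path.Homotopic.Quotient.trans_symm,
          Path.Homotopic.Quotient.trans_refl] using h2
      · intro h
        rw [h]
    have hT : IsClopen T := by
      refine ⟨⟨?_⟩, ?_⟩
      · rw [isOpen_iff_mem_nhds]
        intro t ht
        filter_upwards [hiff t] with s hs hs'
        exact ht (hs.1 hs')
      · rw [isOpen_iff_mem_nhds]
        intro t ht
        filter_upwards [hiff t] with s hs
        exact hs.2 ht
    have h0T : (0 : unitInterval) ∈ T := by
      show cls (Γ 0) = (cls (Γ 0)).trans (Path.Homotopic.Quotient.mk (γ.subpath 0 0))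
      rw [Path.subpath_self]
      exact (Path.Homotopic.Quotient.trans_refl _).symm
    have h1T : (1 : unitInterval) ∈ T := by
      rw [hT.eq_univ ⟨0, h0T⟩]; trivial
    have h5 : cls (Γ 1) = (cls (Γ 0)).trans (Path.Homotopic.Quotient.mk (γ.subpath 0 1)) := h1T
    rw [Path.subpath_zero_one] at h5
    exact h5
  let b₀ : Z.TotalSpace := ⟨x₀, (e x₀ x₀).symm⟩
  have hpc : ∀ z : Z.TotalSpace, Joined b₀ z := by
    intro z
    obtain ⟨γ, hγ⟩ := Path.Homotopic.Quotient.mk_surjective ((cls b₀).symm.trans (cls z))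
    have hγ0 : γ.toContinuousMap 0 = Z.proj b₀ := γ.source
    let Γ := hcov.liftPath γ.toContinuousMap b₀ hγ0
    have hΓl : Z.proj ∘ Γ = γ.toContinuousMap := hcov.liftPath_lifts _ _ hγ0
    have hΓ1 : Z.proj (Γ 1) = Z.proj z := (congrFun hΓl 1).trans γ.target
    let Γ' : Path b₀ (Γ 1) := ⟨Γ, hcov.liftPath_zero _ _ hγ0, rfl⟩
    have h1 := hpath _ _ Γ'
    have h2 : Γ'.map hcov.continuous = γ.cast rfl hΓ1 := by
      ext t
      exact congrFun hΓl t
    have h3 : Γ 1 = z := by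
      refine hcls _ _ hΓ1 ?_
      rw [h1, h2, Path.Homotopic.Quotient.mk_cast, hγ]
      exact class_cast _ _ _ _ _
    rw [← h3]
    exact ⟨Γ'⟩
  refine ⟨Z.TotalSpace, inferInstance, Z.proj, hcov, ?_, ?_⟩
  · have : PathConnectedSpace Z.TotalSpace :=
      ⟨⟨b₀⟩, fun x y => (hpc x).symm.trans (hpc y)⟩
    rw [simply_connected_iff_paths_homotopic]
    refine ⟨this, fun x y => ⟨fun a b => ?_⟩⟩
    refine hcov.injective_path_homotopic_map x y ?_
    induction a using Path.Homotopic.Quotient.ind with | mk a => ?_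
    induction b using Path.Homotopic.Quotient.ind with | mk b => ?_
    exact class_cancel_left ((hpath x y a).symm.trans (hpath x y b))
  · exact fun y => ⟨⟨y, (e x₀ x₀).symm⟩, rfl⟩

end cover

end SurfDisc

/-! ### Deck transformations -/

namespace SurfDisc
set_option linter.unusedSectionVars false

section deck

/-- A covering space of a surface is a surface. -/
lemma Surf.of_cover {E S : Type*} [TopologicalSpace E] [TopologicalSpace S] [Surf S] {p : E → S}
    (hp : IsCoveringMap p) : Surf E := by
  have hT2 : T2Space E := by
    refine ⟨fun x y hxy => ?_⟩
    by_cases h : p x = p y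
    · exact hp.isSeparatedMap x y h hxy
    · obtain ⟨u, v, hu, hv, hxu, hyv, huv⟩ := t2_separation h
      exact ⟨p ⁻¹' u, p ⁻¹' v, hu.preimage hp.continuous, hv.preimage hp.continuous, hxu, hyv,
        huv.preimage p⟩
  refine { hT2 with exists_chart := fun x => ?_ }
  obtain ⟨φ, hφ, h0⟩ := Surf.exists_chart (p x)
  obtain ⟨Φ, ⟨hΦ0, hΦ⟩, -⟩ :=
    hp.existsUnique_continuousMap_lifts (⟨φ, hφ.continuous⟩ : C(ℂ, S)) 0 x h0.symm
  have hΦ' : p ∘ Φ = φ := hΦ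
  refine ⟨Φ, ?_, hΦ0⟩
  have h1 : IsLocalHomeomorph (p ∘ Φ) := hΦ' ▸ hφ.isLocalHomeomorph
  refine (h1.of_comp hp.isLocalHomeomorph Φ.continuous).isOpenEmbedding_of_injective ?_
  exact Function.Injective.of_comp (f := p) (hΦ' ▸ hφ.injective)

variable {E S : Type*} [TopologicalSpace E] [TopologicalSpace S] [Surf E] [SimplyConnectedSpace E]
  {p : E → S}

/-- Deck transformations act transitively on the fibres of the universal cover. -/
lemma exists_deck (hp : IsCoveringMap p) {x y : E} (h : p x = p y) :
    ∃ G : E ≃ₜ E, p ∘ G = p ∧ G x = y := by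
  have hex : ∀ x y, p x = p y → ∃ F : C(E, E), F x = y ∧ p ∘ F = p := fun x y h =>
    (hp.existsUnique_continuousMap_lifts (⟨p, hp.continuous⟩ : C(E, S)) x y h.symm).exists
  obtain ⟨F, hF, hpF⟩ := hex x y h
  obtain ⟨F', hF', hpF'⟩ := hex y x h.symm
  have h1 : F' ∘ F = id := hp.eq_of_comp_eq (F'.continuous.comp F.continuous) continuous_id
    (by rw [← Function.comp_assoc, hpF', hpF]; rfl) x (by simp [hF, hF'])
  have h2 : F ∘ F' = id := hp.eq_of_comp_eq (F.continuous.comp F'.continuous) continuous_id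
    (by rw [← Function.comp_assoc, hpF, hpF']; rfl) y (by simp [hF, hF'])
  exact ⟨⟨⟨F, F', congrFun h1, congrFun h2⟩, F.continuous, F'.continuous⟩, hpF, hF⟩

/-- A deck transformation with a fixed point is the identity. -/
lemma deck_eq_id (hp : IsCoveringMap p) {f : E → E} (hf : Continuous f) (hpf : p ∘ f = p) {x : E}
    (hx : f x = x) : f = id :=
  hp.eq_of_comp_eq hf continuous_id (by rw [hpf]; rfl) x hx

/-- No deck transformation maps a closed cell into its interior: a deck transformation mapping a
compact set into itself has finite order. -/
lemma IsCell.not_nested [T2Space S] (hp : IsCoveringMap p) {A J : Set E} (hA : IsCell A J)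
    {f : E → E} (hf : Continuous f) (hpf : p ∘ f = p) (h : ∀ x ∈ closure A, f x ∈ A) : False := by
  have hit : ∀ n, ∀ x ∈ closure A, f^[n + 1] x ∈ A := by
    intro n
    induction n with
    | zero => exact h
    | succ n ih =>
      intro x hx
      rw [Function.iterate_succ_apply']
      exact h _ (subset_closure (ih x hx))
  have hpit : ∀ n x, p (f^[n] x) = p x := by
    intro n x
    induction n with
    | zero => rfl
    | succ n ih => rw [Function.iterate_succ_apply', ← ih]; exact congrFun hpf _
  obtain ⟨x, hxJ⟩ := hA.jordan.curveLike.nonempty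
  have hxD : x ∈ closure A := by rw [hA.closure_eq]; exact Or.inr hxJ
  have hid : ∀ n y, f^[n + 1] y = y → False := by
    intro n y hy
    have h1 : f^[n + 1] = id :=
      deck_eq_id hp (hf.iterate _) (funext fun z => hpit (n + 1) z) hy
    have h2 := hit n x hxD
    rw [h1] at h2
    exact hA.side.disj x h2 hxJ
  have hinj : Function.Injective fun n : ℕ => f^[n] x := by
    have key : ∀ n m : ℕ, n < m → f^[n] x ≠ f^[m] x := by
      intro n m hnm he
      obtain ⟨k, rfl⟩ := Nat.exists_eq_add_of_lt hnm
      have : f^[k + 1] (f^[n] x) = f^[n] x := by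
        rw [← Function.iterate_add_apply, he]
        congr 1
        ring_nf
      exact hid k _ this
    intro n m he
    rcases lt_trichotomy n m with h | h | h
    · exact absurd he (key n m h)
    · exact h
    · exact absurd he.symm (key m n h)
  have hsub : range (fun n : ℕ => f^[n] x) ⊆ closure A := by
    rintro _ ⟨n, rfl⟩
    cases n with
    | zero => exact hxD
    | succ n => exact subset_closure (hit n x hxD)
  obtain ⟨e, -, he⟩ :=
    (infinite_range_of_injective hinj).exists_accPt_of_subset_isCompact hA.compact hsub
  have hfib : IsClosed (p ⁻¹' {p x}) := isClosed_singleton.preimage hp.continuous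
  have hpe : p e = p x := by
    have h1 : e ∈ closure (range fun n : ℕ => f^[n] x) :=
      mem_closure_iff_clusterPt.2 (AccPt.clusterPt he)
    exact closure_minimal (by rintro _ ⟨n, rfl⟩; exact hpit n x) hfib h1
  obtain ⟨O, hO, hOi⟩ : ∃ O ∈ 𝓝 e, InjOn p O := by
    obtain ⟨φ, heφ, rfl⟩ := hp.isLocalHomeomorph e
    exact ⟨φ.source, φ.open_source.mem_nhds heφ, φ.injOn⟩
  rw [accPt_iff_nhds] at he
  obtain ⟨_, ⟨hyO, n, rfl⟩, hne⟩ := he O hO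
  exact hne (hOi hyO (mem_of_mem_nhds hO) ((hpit n x).trans hpe.symm))

lemma IsSide.image {A J : Set E} (hA : IsSide A J) (G : E ≃ₜ E) : IsSide (G '' A) (G '' J) where
  isOpen := G.isOpenMap _ hA.isOpen
  nonempty := hA.nonempty.image _
  preconn := hA.preconn.image _ G.continuous.continuousOn
  disj := by
    rintro _ ⟨x, hx, rfl⟩ ⟨y, hy, he⟩
    rw [G.injective he] at hy
    exact hA.disj x hx hy
  closure_subset := by
    rw [← G.image_closure, ← image_union]
    exact image_mono hA.closure_subset

/-- The position of a side `A` of a Jordan curve `J` relative to a translate `G '' A`, when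
`J` and `G '' J` are disjoint. In the last case the two sides cover the surface. -/
lemma IsSide.translate_cases {A J : Set E} (hJ : IsJordan J) (hA : IsSide A J) (G : E ≃ₜ E)
    (hG : Disjoint (G '' J) J) :
    Disjoint (G '' closure A) (closure A) ∨ G '' closure A ⊆ A ∨ closure A ⊆ G '' A ∨
      (A ∪ J)ᶜ ∪ J ⊆ G '' A := by
  have hc := hJ.curveLike
  have hA' := hA.image G
  have hcl := hA.closure_eq hc
  have hcl' : G '' closure A = G '' A ∪ G '' J := by rw [hcl, image_union]
  have hJ' : IsPreconnected (G '' J) := hc.preconn.image _ G.continuous.continuousOn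
  have hfr : ∀ x ∈ J, ∀ O, IsOpen O → x ∈ O → (O ∩ A).Nonempty := by
    intro x hx O hO hxO
    have : x ∈ closure A := by rw [hcl]; exact Or.inr hx
    exact mem_closure_iff.1 this O hO hxO
  have hfr' : ∀ x ∈ J, ∀ O, IsOpen O → x ∈ O → (O ∩ (A ∪ J)ᶜ).Nonempty := by
    intro x hx O hO hxO
    have : x ∈ closure (A ∪ J)ᶜ := by rw [(hA.compl hc).closure_eq hc]; exact Or.inr hx
    exact mem_closure_iff.1 this O hO hxO
  obtain ⟨j, hj⟩ := hc.nonempty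
  rw [Set.disjoint_left] at hG
  have hsplit := hA.subset_or_disjoint hJ' fun x hx => hG hx
  have hsplit' := hA'.subset_or_disjoint hc.preconn fun x hx hx' => hG hx' hx
  rcases hsplit with h1 | h1 <;> rcases hsplit' with h2 | h2
  · right; right; right
    refine union_subset ?_ h2
    rcases hA'.subset_or_disjoint (hA.compl hc).preconn
      (fun x hx hx' => hx (Or.inl (h1 hx'))) with h3 | h3
    · exact h3
    · obtain ⟨y, hy, hy'⟩ := hfr' j hj _ hA'.isOpen (h2 hj)
      exact absurd hy (Set.disjoint_left.1 h3 hy')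
  · right; left
    rw [hcl']
    refine union_subset ?_ h1
    rcases hA.subset_or_disjoint hA'.preconn
      (fun x hx hx' => Set.disjoint_left.1 h2 hx' hx) with h3 | h3
    · exact h3
    · obtain ⟨y, hy, hy'⟩ := hfr j hj (G ⁻¹' A) (hA.isOpen.preimage G.continuous)
        (h1 (mem_image_of_mem _ hj))
      exact absurd hy (Set.disjoint_left.1 h3 (mem_image_of_mem _ hy'))
  · right; right; left
    rw [hcl]
    refine union_subset ?_ h2
    rcases hA'.subset_or_disjoint hA.preconn
      (fun x hx hx' => Set.disjoint_left.1 h1 hx' hx) with h3 | h3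
    · exact h3
    · obtain ⟨y, hy, hy'⟩ := hfr j hj _ hA'.isOpen (h2 hj)
      exact absurd hy (Set.disjoint_left.1 h3 hy')
  · left
    rw [Set.disjoint_left] at h1 h2
    rcases hA'.subset_or_disjoint hA.preconn (fun x hx hx' => h1 hx' hx) with h3 | h3
    · have h4 : j ∈ closure (G '' A) := closure_mono h3 (by rw [hcl]; exact Or.inr hj)
      rcases hA'.closure_subset h4 with h5 | h5
      · exact absurd h5 (h2 hj)
      · exact absurd hj (hG h5)
    · rw [Set.disjoint_left] at h3
      rw [hcl', hcl, Set.disjoint_left]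
      rintro x (hx | hx) (hx' | hx')
      · exact h3 hx' hx
      · exact h2 hx' hx
      · exact h1 hx hx'
      · exact hG hx hx'

/-- A Jordan curve in the universal cover on which `p` is injective bounds a cell on whose closure
`p` is injective. -/
theorem exists_cell_injOn [T2Space S] (hp : IsCoveringMap p) {J : Set E} (hJ : IsJordan J)
    (hpJ : InjOn p J) : ∃ A, IsCell A J ∧ InjOn p (closure A) := by
  have hdeck : ∀ G : E ≃ₜ E, p ∘ G = p → ∀ x, G x ≠ x → Disjoint (G '' J) J := by
    intro G hG x hx
    rw [Set.disjoint_left]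
    rintro _ ⟨y, hy, rfl⟩ hy'
    exact hx (congrFun (deck_eq_id hp G.continuous hG (hpJ hy' hy (congrFun hG y))) x)
  have hsymm : ∀ G : E ≃ₜ E, p ∘ G = p → p ∘ G.symm = p := by
    intro G hG
    funext x
    have := congrFun hG (G.symm x)
    simpa using this.symm
  -- a cell is embedded unless it covers the surface together with one of its translates
  have key : ∀ A, IsCell A J → InjOn p (closure A) ∨
      ∃ G : E ≃ₜ E, p ∘ G = p ∧ (A ∪ J)ᶜ ∪ J ⊆ G '' A := by
    intro A hA
    by_contra! hcon
    obtain ⟨h1, h2⟩ := hcon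
    refine h1 fun x hx y hy hxy => ?_
    by_contra hne
    obtain ⟨G, hG, rfl⟩ := exists_deck hp hxy
    rcases hA.side.translate_cases hJ G (hdeck G hG x fun h => hne h.symm) with h | h | h | h
    · exact Set.disjoint_left.1 h (mem_image_of_mem _ hx) hy
    · exact hA.not_nested hp G.continuous hG fun z hz => h (mem_image_of_mem _ hz)
    · refine hA.not_nested hp G.symm.continuous (hsymm G hG) fun z hz => ?_
      obtain ⟨w, hw, rfl⟩ := h hz
      simpa using hw
    · exact h2 G hG h
  obtain ⟨A, hA⟩ := hJ.exists_cell
  rcases key A hA with h | ⟨G, hG, hGA⟩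
  · exact ⟨A, hA, h⟩
  have hB := hA.side.compl hJ.curveLike
  have hBcell : IsCell (A ∪ J)ᶜ J := by
    refine ⟨hJ, hB, (hA.compact.image G.continuous).of_isClosed_subset isClosed_closure ?_⟩
    exact hB.closure_subset.trans (hGA.trans (image_mono subset_closure))
  rcases key _ hBcell with h | ⟨G', hG', hGB⟩
  · exact ⟨_, hBcell, h⟩
  exfalso
  -- now `closure A` lies in the translate of `A` by `G' ∘ G`
  refine hA.not_nested hp (f := G.symm ∘ G'.symm) (G.symm.continuous.comp G'.symm.continuous)
    (by rw [← Function.comp_assoc, hsymm G hG, hsymm G' hG']) fun z hz => ?_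
  have h1 : z ∈ ((A ∪ J)ᶜ ∪ J)ᶜ ∪ J := by
    rw [hA.closure_eq] at hz
    have := hA.side.disj z
    simp only [mem_union, mem_compl_iff] at hz ⊢
    tauto
  obtain ⟨w, hw, rfl⟩ := hGB h1
  obtain ⟨v, hv, rfl⟩ := hGA (Or.inl hw)
  simpa using hv

end deck

end SurfDisc

/-! ### The surface and its curve -/

namespace SurfDisc
set_option linter.unusedSectionVars false

/-- The standard isometry between `ℂ` and the Euclidean plane. -/
def planeIso : ℂ ≃ₗᵢ[ℝ] EuclideanSpace ℝ (Fin 2) := Complex.orthonormalBasisOneI.repr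

lemma surf_of_charts {S : Type*} [TopologicalSpace S] [T2Space S]
    (hsurf : ∀ x : S, ∃ U : Set S, IsOpen U ∧ x ∈ U ∧
      Nonempty (U ≃ₜ EuclideanSpace ℝ (Fin 2))) : Surf S := by
  refine ⟨fun x => ?_⟩
  obtain ⟨U, hU, hx, ⟨ψ⟩⟩ := hsurf x
  let θ : ℂ ≃ₜ U := (planeIso.toHomeomorph.trans (Homeomorph.addRight (ψ ⟨x, hx⟩))).trans ψ.symm
  refine ⟨fun z => (θ z).1, hU.isOpenEmbedding_subtypeVal.comp θ.isOpenEmbedding, ?_⟩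
  have : θ 0 = ⟨x, hx⟩ := by simp [θ]
  simp [this]

lemma Surf.exists_isSimplyConnected {S : Type*} [TopologicalSpace S] [Surf S] (x : S) :
    ∃ U : Set S, IsOpen U ∧ x ∈ U ∧ IsSimplyConnected U := by
  obtain ⟨φ, hφ, h0⟩ := Surf.exists_chart x
  refine ⟨range φ, hφ.isOpen_range, ⟨0, h0⟩, ?_⟩
  have := hφ.isEmbedding.toHomeomorph.symm.contractibleSpace
  rw [IsSimplyConnected]
  infer_instance

/-- Null-homotopic maps lift to covering spaces. -/
lemma exists_lift_of_null {A E S : Type*} [TopologicalSpace A] [TopologicalSpace E]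
    [TopologicalSpace S] {p : E → S} (hp : IsCoveringMap p) (hps : Function.Surjective p)
    (f : C(A, S)) {s : S} (h : f.Homotopic (ContinuousMap.const A s)) :
    ∃ F : C(A, E), p ∘ F = f := by
  obtain ⟨H⟩ := h.symm
  obtain ⟨e, rfl⟩ := hps s
  have h0 : ∀ a, H.toContinuousMap (0, a) = p (ContinuousMap.const A e a) := fun a => by simp
  let L := hp.liftHomotopy H.toContinuousMap (ContinuousMap.const A e) h0
  refine ⟨⟨fun a => L (1, a), by fun_prop⟩, ?_⟩
  funext a
  have := congrFun (hp.liftHomotopy_lifts H.toContinuousMap (ContinuousMap.const A e) h0) (1, a)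
  exact this.trans (H.apply_one a)

/-- The image of an injective continuous map from the circle is a Jordan curve. -/
lemma isJordan_range {E : Type*} [TopologicalSpace E]
    (c : C(Metric.sphere (0 : EuclideanSpace ℝ (Fin 2)) 1, E)) (hc : Function.Injective c) :
    IsJordan (range c) := by
  obtain ⟨γ, hγ, hi, hr⟩ := isCell_ball.jordan
  have hmem : ∀ t, planeIso (γ t) ∈ Metric.sphere (0 : EuclideanSpace ℝ (Fin 2)) 1 := by
    intro t
    have : γ t ∈ Metric.sphere (0:ℂ) 1 := hr ▸ mem_range_self t
    simpa using this
  refine ⟨fun t => c ⟨planeIso (γ t), hmem t⟩, ?_, fun s t => ?_, ?_⟩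
  · exact c.continuous.comp ((planeIso.continuous.comp hγ).subtype_mk _)
  · rw [hc.eq_iff, Subtype.mk.injEq, planeIso.injective.eq_iff, hi]
  · refine Subset.antisymm (by rintro _ ⟨t, rfl⟩; exact ⟨_, rfl⟩) ?_
    rintro _ ⟨⟨w, hw⟩, rfl⟩
    have : planeIso.symm w ∈ Metric.sphere (0:ℂ) 1 := by simpa using hw
    rw [← hr] at this
    obtain ⟨t, ht⟩ := this
    have hw' : planeIso (γ t) = w := by rw [ht]; simp
    exact ⟨t, congrArg c (Subtype.ext hw')⟩

end SurfDisc
end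

open SurfDisc in
/-- Lemma A.1: a homotopically trivial simple closed curve in a surface bounds an
embedded disc. -/
theorem stmt_9 {S : Type*} [TopologicalSpace S] [T2Space S] [SecondCountableTopology S]
    [ConnectedSpace S]
    (hsurf : ∀ x : S, ∃ U : Set S, IsOpen U ∧ x ∈ U ∧
      Nonempty (U ≃ₜ EuclideanSpace ℝ (Fin 2)))
    (c : Metric.sphere (0 : EuclideanSpace ℝ (Fin 2)) 1 → S)
    (hccont : Continuous c) (hcinj : Function.Injective c)
    (hnull : ∃ p : S, ContinuousMap.Homotopic ⟨c, hccont⟩ (ContinuousMap.const _ p)) :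
    ∃ h : Metric.closedBall (0 : EuclideanSpace ℝ (Fin 2)) 1 → S,
      Topology.IsEmbedding h ∧
      h '' {x : Metric.closedBall (0 : EuclideanSpace ℝ (Fin 2)) 1 |
          (x : EuclideanSpace ℝ (Fin 2)) ∈ Metric.sphere (0 : EuclideanSpace ℝ (Fin 2)) 1}
        = Set.range c := by
  have hS : Surf S := surf_of_charts hsurf
  have hpc : PathConnectedSpace S := pathConnectedSpace_iff_connectedSpace.2 inferInstance
  obtain ⟨E, _, p, hp, hE, hps⟩ := exists_universal_cover (Surf.exists_isSimplyConnected (S := S))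
  have hSE : Surf E := Surf.of_cover hp
  obtain ⟨s, hs⟩ := hnull
  obtain ⟨c', hc'⟩ := exists_lift_of_null hp hps _ hs
  have hpc' : ∀ x, p (c' x) = c x := congrFun hc'
  have hc'i : Function.Injective c' := fun x y hxy =>
    hcinj (by rw [← hpc', ← hpc', hxy])
  obtain ⟨A, hA, hAp⟩ := exists_cell_injOn hp (isJordan_range c' hc'i) (by
    rintro _ ⟨x, rfl⟩ _ ⟨y, rfl⟩ hxy
    rw [hpc', hpc'] at hxy
    rw [hcinj hxy])
  obtain ⟨h, hh, hr, hJ⟩ := hA.exists_disc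
  have hmem : ∀ x : Metric.closedBall (0 : EuclideanSpace ℝ (Fin 2)) 1,
      planeIso.symm x.1 ∈ Metric.closedBall (0:ℂ) 1 := fun x => by
    simpa using mem_closedBall_zero_iff.1 x.2
  let k : Metric.closedBall (0 : EuclideanSpace ℝ (Fin 2)) 1 → Metric.closedBall (0:ℂ) 1 :=
    fun x => ⟨planeIso.symm x.1, hmem x⟩
  have hk : Continuous k :=
    (planeIso.symm.continuous.comp continuous_subtype_val).subtype_mk _
  have hki : Function.Injective k := fun x y hxy =>
    Subtype.ext (planeIso.symm.injective (Subtype.mk.inj hxy))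
  have hmem' : ∀ z : Metric.closedBall (0:ℂ) 1,
      planeIso z.1 ∈ Metric.closedBall (0 : EuclideanSpace ℝ (Fin 2)) 1 := fun z => by
    simpa using mem_closedBall_zero_iff.1 z.2
  refine ⟨fun x => p (h (k x)), ?_, ?_⟩
  · have hcont : Continuous fun x => p (h (k x)) :=
      hp.continuous.comp (hh.continuous.comp hk)
    refine (hcont.isClosedEmbedding fun x y hxy => hki (hh.injective (hAp ?_ ?_ hxy))).isEmbedding
    · rw [← hr]; exact Set.mem_range_self _
    · rw [← hr]; exact Set.mem_range_self _
  · ext y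
    constructor
    · rintro ⟨x, hx, rfl⟩
      have : h (k x) ∈ Set.range c' := by
        rw [← hJ]
        refine ⟨k x, ?_, rfl⟩
        simpa [k] using hx
      obtain ⟨w, hw⟩ := this
      exact ⟨w, by rw [← hpc', hw]⟩
    · rintro ⟨w, rfl⟩
      have : c' w ∈ h '' {z | z.1 ∈ Metric.sphere (0:ℂ) 1} := by rw [hJ]; exact ⟨w, rfl⟩
      obtain ⟨z, hz, hzw⟩ := this
      have hz' : z.1 ∈ Metric.sphere (0:ℂ) 1 := hz
      refine ⟨⟨planeIso z.1, hmem' z⟩, by simpa using hz', ?_⟩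
      have hkz : k ⟨planeIso z.1, hmem' z⟩ = z := Subtype.ext (by simp [k])
      simp only [hkz, hzw, hpc']
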